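/- arXiv:0902.0132 — 2 statements merged into one kernel-verified Lean document; each statement's English description precedes it below -/
import Mathlib

section
/- Anti-counting Lemma: let k ≥ 2 be an integer and let U and W be graphons such that |t(F,U) − t(F,W)| ≤ 2^{−k²} for every finite simple graph F on k nodes. Then δ_□(U, W) ≤ 20/√(log₂ k). -/
open MeasureTheory Set Filter

/-- The Lebesgue measure restricted to `[0,1]`. -/
noncomputable abbrev μ01 : MeasureTheory.Measure ℝ :=
  MeasureTheory.volume.restrict (Set.Icc (0:ℝ) 1)

/-- A graphon: a symmetric measurable function `[0,1]² → [0,1]`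
(defined on all of `ℝ²` for convenience). -/
def IsGraphon (W : ℝ → ℝ → ℝ) : Prop :=
  Measurable (Function.uncurry W) ∧ (∀ x y, W x y = W y x) ∧ ∀ x y, W x y ∈ Set.Icc (0:ℝ) 1

-- The homomorphism density `t(F,W)` of a finite simple graph `F` in a graphon `W`.
open scoped Classical in
noncomputable def homDensity {n : ℕ} (F : SimpleGraph (Fin n)) (W : ℝ → ℝ → ℝ) : ℝ :=
  ∫ x : Fin n → ℝ,
    (∏ p ∈ Finset.univ.filter (fun p : Fin n × Fin n => p.1 < p.2 ∧ F.Adj p.1 p.2),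
      W (x p.1) (x p.2)) ∂(MeasureTheory.Measure.pi fun _ => μ01)

/-- The cut norm `‖U‖_□` of a kernel `U`. -/
noncomputable def cutNorm (U : ℝ → ℝ → ℝ) : ℝ :=
  sSup { r : ℝ | ∃ S T : Set ℝ, MeasurableSet S ∧ MeasurableSet T ∧
    S ⊆ Set.Icc (0:ℝ) 1 ∧ T ⊆ Set.Icc (0:ℝ) 1 ∧
    r = |∫ x in S, ∫ y in T, U x y| }

/-- An invertible measure preserving map of `[0,1]` onto itself. -/
def IsInvMeasurePreserving (φ : ℝ → ℝ) : Prop :=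
  Set.MapsTo φ (Set.Icc (0:ℝ) 1) (Set.Icc (0:ℝ) 1) ∧
  MeasureTheory.MeasurePreserving φ μ01 μ01 ∧
  ∃ ψ : ℝ → ℝ, Set.MapsTo ψ (Set.Icc (0:ℝ) 1) (Set.Icc (0:ℝ) 1) ∧
    MeasureTheory.MeasurePreserving ψ μ01 μ01 ∧
    (∀ x ∈ Set.Icc (0:ℝ) 1, ψ (φ x) = x) ∧ (∀ x ∈ Set.Icc (0:ℝ) 1, φ (ψ x) = x)

/-- The cut distance `δ_□(U,W)` between two graphons. -/
noncomputable def cutDist (U W : ℝ → ℝ → ℝ) : ℝ :=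
  sInf { r : ℝ | ∃ φ : ℝ → ℝ, IsInvMeasurePreserving φ ∧
    r = cutNorm (fun x y => U x y - W (φ x) (φ y)) }

/-!
By inclusion–exclusion over edge sets, the densities of the graphs on `k` nodes determine the law of
the random graph `𝔾(k, U)` on `k` vertices sampled from `U`. If all densities agree up to `2^(-k²)`,
the laws of `𝔾(k, U)` and `𝔾(k, W)` differ by at most `4^(k choose 2) * 2^(-k²) = 2^(-k)` in total.
A sampled graph is on average at distance `O(1/√log k)` from the graphon it is sampled from: the
graphon is close in cut norm to a step function with `4^r` labels (Frieze–Kannan), sampling nearly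
preserves the cut norm of the difference (Alon–Fernandez de la Vega–Kannan–Karpinski), and the label
frequencies in the sample are almost right, so that the sample can be overlaid on the graphon.
Hence a single graph is close to both `U` and `W`. The choice `r = ⌊log₆₄ k⌋` balances the errors.

Step kernels on a grid of cells are `L¹`-dense in the graphons, and homomorphism densities and cut
distance are `L¹`-continuous, so it is enough to argue for matrices.
-/

open scoped BigOperators

section FiniteExpectation

variable {ι α M : Type*} [Fintype ι] [DecidableEq ι] [Fintype α]
  [AddCommMonoid M] [Module ℚ≥0 M]

lemma expect_piecewise (J : Finset ι) (f : (ι → α) → M) :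
    𝔼 Z : ι → α, 𝔼 X : ι → α, f (J.piecewise Z X) = 𝔼 X : ι → α, f X := by
  cases isEmpty_or_nonempty (ι → α) with
  | inl _ => simp
  | inr _ =>
    have swap : Function.Involutive fun p : (ι → α) × (ι → α) =>
        (J.piecewise p.1 p.2, J.piecewise p.2 p.1) := by
      intro p; ext u <;> by_cases hu : u ∈ J <;> simp [hu]
    calc 𝔼 Z : ι → α, 𝔼 X : ι → α, f (J.piecewise Z X)
        = 𝔼 p : (ι → α) × (ι → α), f (J.piecewise p.1 p.2) := by
          rw [← Finset.univ_product_univ, Finset.expect_product]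
      _ = 𝔼 p : (ι → α) × (ι → α), f p.1 := Fintype.expect_equiv swap.toPerm _ _ fun _ => rfl
      _ = 𝔼 X : ι → α, f X := by
          rw [← Finset.univ_product_univ, Finset.expect_product]
          simp only [Fintype.expect_const]

lemma expect_apply_coord (i : ι) (f : α → M) : 𝔼 X : ι → α, f (X i) = 𝔼 x, f x := by
  cases isEmpty_or_nonempty α with
  | inl _ => have : Nonempty ι := ⟨i⟩; simp
  | inr _ =>
    have hsum := Fintype.sum_piFinset_apply f Finset.univ i
    rw [Fintype.piFinset_univ, Finset.card_univ] at hsum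
    have hα : (Fintype.card α : ℚ≥0) ≠ 0 := mod_cast Fintype.card_ne_zero
    rw [Finset.expect_univ, Finset.expect_univ, hsum, Fintype.card_fun,
      ← Nat.cast_smul_eq_nsmul ℚ≥0, smul_smul]
    congr 1
    obtain ⟨n, hn⟩ := Nat.exists_eq_add_of_lt (Fintype.card_pos_iff.2 ⟨i⟩)
    rw [hn, zero_add, Nat.add_sub_cancel]
    push_cast
    field_simp
    exact (pow_succ _ _).symm

lemma expect_update (i : ι) (f : (ι → α) → M) :
    𝔼 X : ι → α, 𝔼 z, f (Function.update X i z) = 𝔼 X : ι → α, f X := by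
  symm
  rw [← expect_piecewise {i} f, Finset.expect_comm]
  refine Finset.expect_congr rfl fun X _ => ?_
  simp only [Finset.piecewise_singleton]
  exact expect_apply_coord i fun z => f (Function.update X i z)

lemma expect_apply_coord₂ {i j : ι} (hij : i ≠ j) (f : α → α → M) :
    𝔼 X : ι → α, f (X i) (X j) = 𝔼 x, 𝔼 y, f x y := by
  rw [← expect_update j]
  simp only [Function.update_self, Function.update_of_ne hij]
  exact expect_apply_coord i fun x => 𝔼 y, f x y

end FiniteExpectation

lemma expect_abs_le_of_expect_sq_le {α : Type*} [Fintype α] [Nonempty α] {f : α → ℝ} {c : ℝ}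
    (hc : 0 ≤ c) (h : 𝔼 x, f x ^ 2 ≤ c ^ 2) : 𝔼 x, |f x| ≤ c := by
  have cauchySchwarz := Finset.expect_mul_sq_le_sq_mul_sq Finset.univ (fun x => |f x|)
    (fun _ => (1 : ℝ))
  simp only [mul_one, sq_abs, one_pow, Fintype.expect_const] at cauchySchwarz
  exact le_of_sq_le_sq (cauchySchwarz.trans h) hc

section SampleSums

variable {ι α : Type*} [Fintype ι] [DecidableEq ι]

lemma abs_sum_piecewise_sub_sum_le {c : α → ℝ} {K : ℝ} (hc : ∀ x, |c x| ≤ K) (J : Finset ι)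
    (Z X : ι → α) : |∑ i, c (J.piecewise Z X i) - ∑ i, c (X i)| ≤ 2 * K * J.card := by
  have coord (i : ι) : |c (J.piecewise Z X i) - c (X i)| ≤ if i ∈ J then 2 * K else 0 := by
    split_ifs with hi
    · linarith [abs_sub (c (J.piecewise Z X i)) (c (X i)), hc (J.piecewise Z X i), hc (X i)]
    · simp [hi]
  calc |∑ i, c (J.piecewise Z X i) - ∑ i, c (X i)|
      ≤ ∑ i, if i ∈ J then 2 * K else 0 := by
        rw [← Finset.sum_sub_distrib]
        exact (Finset.abs_sum_le_sum_abs _ _).trans (Finset.sum_le_sum fun i _ => coord i)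
    _ = 2 * K * J.card := by simp [mul_comm]

variable [Fintype α] [Nonempty α]

lemma expect_sq_sum_sub_card_mul_expect_le (c : α → ℝ) :
    𝔼 X : ι → α, (∑ i, c (X i) - Fintype.card ι * 𝔼 x, c x) ^ 2
      ≤ Fintype.card ι * 𝔼 x, c x ^ 2 := by
  set m := 𝔼 x, c x with hm
  have centred : 𝔼 x, (c x - m) = 0 := by
    rw [Finset.expect_sub_distrib, ← hm, Fintype.expect_const, sub_self]
  have covariance (i j : ι) : 𝔼 X : ι → α, (c (X i) - m) * (c (X j) - m)
      = if i = j then 𝔼 x, (c x - m) ^ 2 else 0 := by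
    split_ifs with h
    · subst h
      simpa only [← sq] using expect_apply_coord i fun x => (c x - m) ^ 2
    · rw [expect_apply_coord₂ h fun x y => (c x - m) * (c y - m)]
      simp only [← Finset.mul_expect, centred, mul_zero, Finset.expect_const_zero]
  have variance : 𝔼 x, (c x - m) ^ 2 ≤ 𝔼 x, c x ^ 2 := by
    have expand (x : α) : (c x - m) ^ 2 = c x ^ 2 - 2 * m * (c x - m) - m ^ 2 := by ring
    simp_rw [expand]
    rw [Finset.expect_sub_distrib, Finset.expect_sub_distrib, ← Finset.mul_expect, centred,
      Fintype.expect_const]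
    linarith [sq_nonneg m]
  calc 𝔼 X : ι → α, (∑ i, c (X i) - Fintype.card ι * m) ^ 2
      = 𝔼 X : ι → α, ∑ i, ∑ j, (c (X i) - m) * (c (X j) - m) := by
        refine Finset.expect_congr rfl fun X _ => ?_
        rw [← Finset.sum_mul_sum, ← sq, Finset.sum_sub_distrib]
        simp
    _ = Fintype.card ι * 𝔼 x, (c x - m) ^ 2 := by
        simp [Finset.expect_sum_comm, covariance]
    _ ≤ _ := by gcongr

lemma expect_abs_sum_sub_card_mul_expect_le {c : α → ℝ} {K : ℝ}
    (hc : ∀ x, |c x| ≤ K) :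
    𝔼 X : ι → α, |∑ i, c (X i) - Fintype.card ι * 𝔼 x, c x| ≤ K * √(Fintype.card ι) := by
  have hK : 0 ≤ K := (abs_nonneg _).trans (hc (Classical.arbitrary α))
  refine expect_abs_le_of_expect_sq_le (by positivity)
    ((expect_sq_sum_sub_card_mul_expect_le c).trans ?_)
  rw [mul_pow, Real.sq_sqrt (by positivity), mul_comm]
  gcongr
  exact Finset.expect_le Finset.univ_nonempty fun x _ => sq_le_sq' (abs_le.1 (hc x)).1
    (abs_le.1 (hc x)).2

/- Conditioning on the coordinates in `J` makes `h X` a fixed function, and the remaining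
coordinates are still independent. -/
lemma expect_abs_sum_sub_card_mul_expect_le_of_dependsOn {J : Finset ι}
    {h : (ι → α) → α → ℝ} {K : ℝ} (hK : ∀ X x, |h X x| ≤ K) (hJ : DependsOn h J) :
    𝔼 X : ι → α, |∑ i, h X (X i) - Fintype.card ι * 𝔼 x, h X x|
      ≤ K * √(Fintype.card ι) + 2 * K * J.card := by
  rw [← expect_piecewise J]
  refine Finset.expect_le Finset.univ_nonempty fun Z _ => ?_
  have frozen (X : ι → α) : h (J.piecewise Z X) = h Z :=
    hJ fun i hi => Finset.piecewise_eq_of_mem _ _ _ hi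
  simp only [frozen]
  calc 𝔼 X : ι → α, |∑ i, h Z (J.piecewise Z X i) - Fintype.card ι * 𝔼 x, h Z x|
      ≤ 𝔼 X : ι → α, (|∑ i, h Z (X i) - Fintype.card ι * 𝔼 x, h Z x| + 2 * K * J.card) := by
        refine Finset.expect_le_expect fun X _ => ?_
        linarith [abs_sum_piecewise_sub_sum_le (hK Z) J Z X,
          abs_sub_le (∑ i, h Z (J.piecewise Z X i)) (∑ i, h Z (X i))
            (Fintype.card ι * 𝔼 x, h Z x)]
    _ ≤ K * √(Fintype.card ι) + 2 * K * J.card := by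
        rw [Finset.expect_add_distrib, Fintype.expect_const]
        gcongr
        exact expect_abs_sum_sub_card_mul_expect_le (hK Z)

end SampleSums

/-- The unnormalised cut norm of a real matrix, the discrete counterpart of `cutNorm`. -/
noncomputable def matrixCutNorm {α β : Type*} (U : Matrix α β ℝ) : ℝ :=
  ⨆ ST : Finset α × Finset β, |∑ x ∈ ST.1, ∑ y ∈ ST.2, U x y|

section MatrixCutNorm

variable {α β γ δ : Type*}

lemma matrixCutNorm_le {U : Matrix α β ℝ} {c : ℝ}
    (h : ∀ S T, |∑ x ∈ S, ∑ y ∈ T, U x y| ≤ c) : matrixCutNorm U ≤ c :=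
  ciSup_le fun ST => h ST.1 ST.2

lemma matrixCutNorm_nonneg (U : Matrix α β ℝ) : 0 ≤ matrixCutNorm U :=
  Real.iSup_nonneg fun _ => abs_nonneg _

lemma matrixCutNorm_neg (U : Matrix α β ℝ) : matrixCutNorm (-U) = matrixCutNorm U := by
  simp [matrixCutNorm]

lemma matrixCutNorm_sub_comm (U V : Matrix α β ℝ) :
    matrixCutNorm (U - V) = matrixCutNorm (V - U) := by
  rw [← neg_sub, matrixCutNorm_neg]

lemma abs_sum_le_matrixCutNorm [Finite α] [Finite β] (U : Matrix α β ℝ) (S : Finset α)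
    (T : Finset β) : |∑ x ∈ S, ∑ y ∈ T, U x y| ≤ matrixCutNorm U :=
  le_ciSup (f := fun ST : Finset α × Finset β => |∑ x ∈ ST.1, ∑ y ∈ ST.2, U x y|)
    (Set.finite_range _).bddAbove (S, T)

lemma sum_le_matrixCutNorm [Finite α] [Finite β] (U : Matrix α β ℝ) (S : Finset α)
    (T : Finset β) : ∑ x ∈ S, ∑ y ∈ T, U x y ≤ matrixCutNorm U :=
  (le_abs_self _).trans (abs_sum_le_matrixCutNorm U S T)

lemma matrixCutNorm_add_le [Finite α] [Finite β] (U V : Matrix α β ℝ) :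
    matrixCutNorm (U + V) ≤ matrixCutNorm U + matrixCutNorm V := by
  refine matrixCutNorm_le fun S T => ?_
  simp only [Matrix.add_apply, Finset.sum_add_distrib]
  exact (abs_add_le _ _).trans
    (add_le_add (abs_sum_le_matrixCutNorm U S T) (abs_sum_le_matrixCutNorm V S T))

lemma matrixCutNorm_sub_le [Finite α] [Finite β] (U V W : Matrix α β ℝ) :
    matrixCutNorm (U - W) ≤ matrixCutNorm (U - V) + matrixCutNorm (V - W) := by
  simpa only [sub_add_sub_cancel] using matrixCutNorm_add_le (U - V) (V - W)

lemma matrixCutNorm_submatrix_equiv (U : Matrix α β ℝ) (e : γ ≃ α) (f : δ ≃ β) :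
    matrixCutNorm (U.submatrix e f) = matrixCutNorm U :=
  Equiv.iSup_congr (e.finsetCongr.prodCongr f.finsetCongr) fun ST => by simp

variable [Fintype α] [Fintype β]

lemma matrixCutNorm_le_sum_abs (U : Matrix α β ℝ) : matrixCutNorm U ≤ ∑ x, ∑ y, |U x y| := by
  refine matrixCutNorm_le fun S T => ?_
  calc |∑ x ∈ S, ∑ y ∈ T, U x y| ≤ ∑ x ∈ S, ∑ y ∈ T, |U x y| :=
        (Finset.abs_sum_le_sum_abs _ _).trans
          (Finset.sum_le_sum fun x _ => Finset.abs_sum_le_sum_abs _ _)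
    _ ≤ ∑ x ∈ S, ∑ y, |U x y| := Finset.sum_le_sum fun x _ =>
        Finset.sum_le_univ_sum_of_nonneg fun y => abs_nonneg _
    _ ≤ ∑ x, ∑ y, |U x y| :=
        Finset.sum_le_univ_sum_of_nonneg fun x => Finset.sum_nonneg fun y _ => abs_nonneg _

lemma dotProduct_le_mul_sum_posPart {s : α → ℝ} {c : ℝ} (hs : ∀ x, s x ∈ Icc 0 c) (w : α → ℝ) :
    s ⬝ᵥ w ≤ c * ∑ x with 0 < w x, w x := by
  rw [Finset.mul_sum, Finset.sum_filter]
  refine Finset.sum_le_sum fun x _ => ?_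
  split_ifs with hw
  · exact mul_le_mul_of_nonneg_right (hs x).2 hw.le
  · exact mul_nonpos_of_nonneg_of_nonpos (hs x).1 (not_lt.1 hw)

lemma dotProduct_mulVec_le (U : Matrix α β ℝ) {s : α → ℝ} {t : β → ℝ} {c d : ℝ} (hc : 0 ≤ c)
    (hd : 0 ≤ d) (hs : ∀ x, s x ∈ Icc 0 c) (ht : ∀ y, t y ∈ Icc 0 d) :
    s ⬝ᵥ U.mulVec t ≤ c * d * matrixCutNorm U := by
  set S := Finset.univ.filter fun x => 0 < U.mulVec t x
  set w : β → ℝ := fun y => ∑ x ∈ S, U x y with hw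
  calc s ⬝ᵥ U.mulVec t ≤ c * ∑ x ∈ S, U.mulVec t x := dotProduct_le_mul_sum_posPart hs _
    _ = c * (t ⬝ᵥ w) := by
        simp only [Matrix.mulVec, dotProduct, hw, Finset.mul_sum]
        rw [Finset.sum_comm]
        simp only [mul_comm]
    _ ≤ c * (d * ∑ y with 0 < w y, w y) := by
        gcongr
        exact dotProduct_le_mul_sum_posPart ht w
    _ ≤ c * (d * matrixCutNorm U) := by
        gcongr
        rw [hw, Finset.sum_comm]
        exact sum_le_matrixCutNorm U _ _
    _ = c * d * matrixCutNorm U := (mul_assoc _ _ _).symm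

lemma abs_dotProduct_mulVec_le (U : Matrix α β ℝ) {s : α → ℝ} {t : β → ℝ} {c d : ℝ} (hc : 0 ≤ c)
    (hd : 0 ≤ d) (hs : ∀ x, s x ∈ Icc 0 c) (ht : ∀ y, t y ∈ Icc 0 d) :
    |s ⬝ᵥ U.mulVec t| ≤ c * d * matrixCutNorm U := by
  refine abs_le'.2 ⟨dotProduct_mulVec_le U hc hd hs ht, ?_⟩
  simpa only [Matrix.neg_mulVec, dotProduct_neg, matrixCutNorm_neg] using
    dotProduct_mulVec_le (-U) hc hd hs ht

lemma sum_comp_eq_dotProduct_card_fiber [DecidableEq α] (S : Finset γ) (f : γ → α) (w : α → ℝ) :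
    ∑ c ∈ S, w (f c) = (fun x => ((S.filter fun c => f c = x).card : ℝ)) ⬝ᵥ w := by
  rw [← Finset.sum_fiberwise' S f w]
  simp [dotProduct]

end MatrixCutNorm

lemma matrixCutNorm_submatrix_le {α β γ δ : Type*} [Finite α] [Finite β] [DecidableEq α]
    [DecidableEq β] [Fintype γ] [Fintype δ] (U : Matrix α β ℝ) {f : γ → α} {g : δ → β} {m n : ℕ}
    (hf : ∀ x, (Finset.univ.filter fun c => f c = x).card ≤ m)
    (hg : ∀ y, (Finset.univ.filter fun d => g d = y).card ≤ n) :
    matrixCutNorm (U.submatrix f g) ≤ m * n * matrixCutNorm U := by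
  cases nonempty_fintype α
  cases nonempty_fintype β
  refine matrixCutNorm_le fun S T => ?_
  have rows : ∑ c ∈ S, ∑ d ∈ T, U.submatrix f g c d
      = (fun x => ((S.filter fun c => f c = x).card : ℝ)) ⬝ᵥ
        U.mulVec fun y => ((T.filter fun d => g d = y).card : ℝ) := by
    rw [← sum_comp_eq_dotProduct_card_fiber]
    refine Finset.sum_congr rfl fun c _ => ?_
    rw [Matrix.mulVec, dotProduct_comm, ← sum_comp_eq_dotProduct_card_fiber]
    rfl
  rw [rows]
  refine abs_dotProduct_mulVec_le U m.cast_nonneg n.cast_nonneg (fun x => ⟨Nat.cast_nonneg _, ?_⟩)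
    fun y => ⟨Nat.cast_nonneg _, ?_⟩
  · exact_mod_cast (Finset.card_le_card (Finset.filter_subset_filter _ S.subset_univ)).trans (hf x)
  · exact_mod_cast (Finset.card_le_card (Finset.filter_subset_filter _ T.subset_univ)).trans (hg y)

section RowSelection

variable {ι κ α : Type*} [Fintype ι]

/-- The matrix `U` with only those rows kept whose sum over the columns `y j`, `j ∈ R`, is
positive. A few random columns already determine a nearly optimal set of rows for the cut norm. -/
noncomputable def selectRows {β : Type*} (U : Matrix α β ℝ) (R : Finset κ) (y : κ → β) :
    Matrix α β ℝ :=
  fun x z => if 0 < ∑ j ∈ R, U x (y j) then U x z else 0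

lemma abs_selectRows_le {β : Type*} {U : Matrix α β ℝ} {K : ℝ} (hU : ∀ x y, |U x y| ≤ K)
    (R : Finset κ) (y : κ → β) (x : α) (z : β) : |selectRows U R y x z| ≤ K := by
  unfold selectRows
  split_ifs
  · exact hU x z
  · simpa using (abs_nonneg _).trans (hU x z)

lemma ite_le_ite_add_abs_sub (P : Prop) [Decidable P] (b e : ℝ) :
    (if P then b else 0) ≤ (if 0 < e then b else 0) + |b - e| := by
  split_ifs with _ he he
  · linarith [abs_nonneg (b - e)]
  · linarith [le_abs_self (b - e)]
  · linarith [neg_abs_le (b - e)]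
  · linarith [abs_nonneg (b - e)]

lemma expect_abs_sum_sub_sample_sum_le [Nonempty ι] (c : ι → ℝ) {q : ℕ} (hq : 0 < q) :
    𝔼 Q : Fin q → ι, |∑ v, c v - Fintype.card ι / q * ∑ j, c (Q j)|
      ≤ (∑ v, c v ^ 2 + Fintype.card ι) / (2 * √q) := by
  classical
  set k : ℝ := (Fintype.card ι : ℝ) with hk
  have hk0 : 0 < k := by rw [hk]; exact_mod_cast Fintype.card_pos
  have hq0 : (0 : ℝ) < q := by exact_mod_cast hq
  have hsqrt : √(q : ℝ) ^ 2 = q := Real.sq_sqrt hq0.le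
  have : 0 < √(q : ℝ) := Real.sqrt_pos.2 hq0
  set d : (Fin q → ι) → ℝ := fun Q => ∑ j, c (Q j) - q * 𝔼 v, c v with hd
  have pointwise (Q : Fin q → ι) : |∑ v, c v - k / q * ∑ j, c (Q j)|
      ≤ k / (2 * q * √q) * d Q ^ 2 + k / (2 * √q) := by
    have rescale : ∑ v, c v - k / q * ∑ j, c (Q j) = -(k / q) * d Q := by
      rw [← Fintype.card_mul_expect c]
      simp only [hd, ← hk]
      field_simp
      ring
    rw [rescale, abs_mul, abs_neg, abs_of_pos (by positivity), ← sq_abs (d Q), ← sub_nonneg]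
    have square : k / (2 * q * √q) * |d Q| ^ 2 + k / (2 * √q) - k / q * |d Q|
        = k / (2 * q * √q) * (|d Q| - √q) ^ 2 := by
      field_simp
      rw [sub_sq, hsqrt]
      ring
    rw [square]
    positivity
  calc 𝔼 Q : Fin q → ι, |∑ v, c v - k / q * ∑ j, c (Q j)|
      ≤ 𝔼 Q : Fin q → ι, (k / (2 * q * √q) * d Q ^ 2 + k / (2 * √q)) :=
        Finset.expect_le_expect fun Q _ => pointwise Q
    _ = k / (2 * q * √q) * (𝔼 Q : Fin q → ι, d Q ^ 2) + k / (2 * √q) := by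
        rw [Finset.expect_add_distrib, ← Finset.mul_expect, Fintype.expect_const]
    _ ≤ k / (2 * q * √q) * (q * 𝔼 v, c v ^ 2) + k / (2 * √q) := by
        gcongr
        simpa using expect_sq_sum_sub_card_mul_expect_le (ι := Fin q) c
    _ = (∑ v, c v ^ 2 + k) / (2 * √q) := by
        rw [Fintype.expect_eq_sum_div_card, ← hk]
        field_simp

/- Alon–Fernandez de la Vega–Kannan–Karpinski: the best set of rows for `T` is where the row sums
over `T` are positive, and a sample of the columns estimates these row sums. -/
lemma sum_le_expect_sum_selectRows [Fintype κ] [Nonempty κ] [DecidableEq κ] (B : Matrix ι κ ℝ)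
    {q : ℕ} (hq : 0 < q) (S : Finset ι) (T : Finset κ) :
    ∑ u ∈ S, ∑ v ∈ T, B u v ≤
      (𝔼 Q : Fin q → κ, ∑ v ∈ T, ∑ u, selectRows B {j | Q j ∈ T} Q u v)
        + (∑ u, ∑ v, B u v ^ 2 + Fintype.card ι * Fintype.card κ) / (2 * √q) := by
  classical
  set c : ι → κ → ℝ := fun u v => if v ∈ T then B u v else 0 with hc
  let D : (Fin q → κ) → ι → ℝ :=
    fun Q u => |∑ v, c u v - Fintype.card κ / q * ∑ j, c u (Q j)|
  have hscale : (0 : ℝ) < Fintype.card κ / q := by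
    have := Fintype.card_pos (α := κ)
    positivity
  have row (Q : Fin q → κ) (u : ι) : (if u ∈ S then ∑ v ∈ T, B u v else 0)
      ≤ ∑ v ∈ T, selectRows B {j | Q j ∈ T} Q u v + D Q u := by
    have selected : ∑ v ∈ T, selectRows B {j | Q j ∈ T} Q u v
        = if 0 < Fintype.card κ / q * ∑ j, c u (Q j) then ∑ v ∈ T, B u v else 0 := by
      have sample : ∑ j, c u (Q j) = ∑ j with Q j ∈ T, B u (Q j) := by
        simp only [hc, Finset.sum_filter]
      simp only [sample, mul_pos_iff_of_pos_left hscale, selectRows]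
      split_ifs <;> simp
    have total : ∑ v, c u v = ∑ v ∈ T, B u v := Fintype.sum_ite_mem T (B u)
    rw [selected, ← total]
    exact ite_le_ite_add_abs_sub _ _ _
  have deviation (u : ι) :
      𝔼 Q, D Q u ≤ (∑ v, B u v ^ 2 + Fintype.card κ) / (2 * √q) := by
    have square (v : κ) : c u v ^ 2 ≤ B u v ^ 2 := by
      simp only [hc]
      split_ifs
      · rfl
      · simpa using sq_nonneg (B u v)
    refine (expect_abs_sum_sub_sample_sum_le (c u) hq).trans ?_
    gcongr ?_ / _
    exact add_le_add_left (Finset.sum_le_sum fun v _ => square v) _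
  calc ∑ u ∈ S, ∑ v ∈ T, B u v
      = ∑ u, if u ∈ S then ∑ v ∈ T, B u v else 0 := (Fintype.sum_ite_mem S _).symm
    _ ≤ 𝔼 Q : Fin q → κ, ∑ u, (∑ v ∈ T, selectRows B {j | Q j ∈ T} Q u v + D Q u) :=
        Finset.le_expect Finset.univ_nonempty fun Q _ => Finset.sum_le_sum fun u _ => row Q u
    _ = (𝔼 Q : Fin q → κ, ∑ v ∈ T, ∑ u, selectRows B {j | Q j ∈ T} Q u v)
          + ∑ u, 𝔼 Q, D Q u := by
        simp_rw [Finset.sum_add_distrib, Finset.expect_add_distrib, Finset.expect_sum_comm]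
        rw [Finset.sum_comm]
    _ ≤ _ := by
        gcongr
        refine (Finset.sum_le_sum fun u _ => deviation u).trans_eq ?_
        rw [← Finset.sum_div, Finset.sum_add_distrib]
        simp

end RowSelection

section Sampling

variable {ι α : Type*} [Fintype ι] [Fintype α]

/-- How far the column sums of the sampled matrix `V.submatrix X X`, and the sum of the positive
parts of the column means of `V`, are from what the averages of `V` predict. -/
noncomputable def colDeviation (V : Matrix α α ℝ) (X : ι → α) : ℝ :=
  ∑ v, |∑ u, V (X u) (X v) - Fintype.card ι * 𝔼 x, V x (X v)|
    + Fintype.card ι * |∑ v, (𝔼 x, V x (X v))⁺ - Fintype.card ι * 𝔼 z, (𝔼 x, V x z)⁺|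

lemma colDeviation_nonneg (V : Matrix α α ℝ) (X : ι → α) : 0 ≤ colDeviation V X := by
  unfold colDeviation
  positivity

lemma sum_le_expect_posPart_add_colDeviation (V : Matrix α α ℝ) (X : ι → α) (T : Finset ι) :
    ∑ v ∈ T, ∑ u, V (X u) (X v)
      ≤ Fintype.card ι ^ 2 * 𝔼 z, (𝔼 x, V x z)⁺ + colDeviation V X := by
  set k : ℝ := (Fintype.card ι : ℝ)
  have column (v : ι) : ∑ u, V (X u) (X v)
      ≤ k * (𝔼 x, V x (X v))⁺ + |∑ u, V (X u) (X v) - k * 𝔼 x, V x (X v)| := by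
    have := mul_le_mul_of_nonneg_left (le_posPart (𝔼 x, V x (X v))) (Nat.cast_nonneg _ : 0 ≤ k)
    linarith [le_abs_self (∑ u, V (X u) (X v) - k * 𝔼 x, V x (X v))]
  calc ∑ v ∈ T, ∑ u, V (X u) (X v)
      ≤ ∑ v ∈ T, (k * (𝔼 x, V x (X v))⁺ + |∑ u, V (X u) (X v) - k * 𝔼 x, V x (X v)|) :=
        Finset.sum_le_sum fun v _ => column v
    _ ≤ ∑ v, (k * (𝔼 x, V x (X v))⁺ + |∑ u, V (X u) (X v) - k * 𝔼 x, V x (X v)|) :=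
        Finset.sum_le_univ_sum_of_nonneg fun v => by positivity
    _ = k * ∑ v, (𝔼 x, V x (X v))⁺ + ∑ v, |∑ u, V (X u) (X v) - k * 𝔼 x, V x (X v)| := by
        rw [Finset.sum_add_distrib, Finset.mul_sum]
    _ ≤ k * (k * 𝔼 z, (𝔼 x, V x z)⁺ + |∑ v, (𝔼 x, V x (X v))⁺ - k * 𝔼 z, (𝔼 x, V x z)⁺|)
          + ∑ v, |∑ u, V (X u) (X v) - k * 𝔼 x, V x (X v)| := by
        gcongr
        linarith [le_abs_self (∑ v, (𝔼 x, V x (X v))⁺ - k * 𝔼 z, (𝔼 x, V x z)⁺)]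
    _ = k ^ 2 * 𝔼 z, (𝔼 x, V x z)⁺ + colDeviation V X := by
        unfold colDeviation
        ring

lemma expect_colDeviation_le [DecidableEq ι] [Nonempty α] {V : (ι → α) → Matrix α α ℝ} {K : ℝ}
    {J : Finset ι} (hK : ∀ X x z, |V X x z| ≤ K) (hJ : DependsOn V J) :
    𝔼 X, colDeviation (V X) X
      ≤ 2 * K * Fintype.card ι * (√(Fintype.card ι) + 2 * J.card + 1) := by
  set k : ℝ := (Fintype.card ι : ℝ)
  have hK0 : 0 ≤ K :=
    (abs_nonneg _).trans (hK (fun _ => Classical.arbitrary α) (Classical.arbitrary α)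
      (Classical.arbitrary α))
  have columns (v : ι) : 𝔼 X : ι → α, |∑ u, V X (X u) (X v) - k * 𝔼 x, V X x (X v)|
      ≤ K * √k + 2 * K * (J.card + 1) := by
    refine (expect_abs_sum_sub_card_mul_expect_le_of_dependsOn (J := insert v J)
      (h := fun X x => V X x (X v)) (fun X x => hK X x _) fun X Y hXY => ?_).trans ?_
    · have hV : V X = V Y := hJ fun j hj => hXY j (Finset.mem_insert_of_mem hj)
      simp only [hV, hXY v (Finset.mem_insert_self v J)]
    · gcongr
      exact_mod_cast Finset.card_insert_le v J
  have means : 𝔼 X : ι → α, |∑ v, (𝔼 x, V X x (X v))⁺ - k * 𝔼 z, (𝔼 x, V X x z)⁺|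
      ≤ K * √k + 2 * K * J.card := by
    refine expect_abs_sum_sub_card_mul_expect_le_of_dependsOn
      (h := fun X z => (𝔼 x, V X x z)⁺) (fun X z => ?_) fun X Y hXY => by simp only [hJ hXY]
    rw [abs_of_nonneg (posPart_nonneg _)]
    exact sup_le (Finset.expect_le Finset.univ_nonempty fun x _ => (abs_le.1 (hK X x z)).2) hK0
  calc 𝔼 X, colDeviation (V X) X
      = ∑ v, 𝔼 X : ι → α, |∑ u, V X (X u) (X v) - k * 𝔼 x, V X x (X v)|
        + k * 𝔼 X : ι → α, |∑ v, (𝔼 x, V X x (X v))⁺ - k * 𝔼 z, (𝔼 x, V X x z)⁺| := by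
        unfold colDeviation
        rw [Finset.expect_add_distrib, Finset.expect_sum_comm, ← Finset.mul_expect]
    _ ≤ ∑ _v : ι, (K * √k + 2 * K * (J.card + 1)) + k * (K * √k + 2 * K * J.card) := by
        gcongr with v
        exact columns v
    _ = 2 * K * k * (√k + 2 * J.card + 1) := by
        rw [Finset.sum_const, Finset.card_univ, nsmul_eq_mul]
        ring

lemma expect_posPart_expect_selectRows_le {κ : Type*} (U : Matrix α α ℝ) (R : Finset κ)
    (y : κ → α) :
    𝔼 z, (𝔼 x, selectRows U R y x z)⁺ ≤ matrixCutNorm U / Fintype.card α ^ 2 := by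
  classical
  set N : ℝ := (Fintype.card α : ℝ) with hN
  set A := Finset.univ.filter fun x => 0 < ∑ j ∈ R, U x (y j)
  have column (z : α) : 𝔼 x, selectRows U R y x z = (∑ x ∈ A, U x z) / N := by
    rw [Fintype.expect_eq_sum_div_card, Finset.sum_filter]
    rfl
  have posPart_div (z : α) : ((∑ x ∈ A, U x z) / N)⁺
      = (if 0 < ∑ x ∈ A, U x z then ∑ x ∈ A, U x z else 0) / N := by
    have hN0 : 0 ≤ N := Nat.cast_nonneg _
    split_ifs with h
    · exact posPart_of_nonneg (div_nonneg h.le hN0)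
    · rw [zero_div]
      exact posPart_of_nonpos (div_nonpos_of_nonpos_of_nonneg (not_lt.1 h) hN0)
  calc 𝔼 z, (𝔼 x, selectRows U R y x z)⁺
      = (∑ x ∈ A, ∑ z with 0 < ∑ x ∈ A, U x z, U x z) / N ^ 2 := by
        simp_rw [column, posPart_div]
        rw [Fintype.expect_eq_sum_div_card, ← Finset.sum_div, ← Finset.sum_filter,
          Finset.sum_comm, div_div, ← hN, sq]
    _ ≤ matrixCutNorm U / N ^ 2 := by
        gcongr
        exact sum_le_matrixCutNorm U _ _

/-- The error made when the cut norm of the sampled matrix is estimated through the rows selected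
by `q` further random columns. -/
noncomputable def samplingError (q : ℕ) (U : Matrix α α ℝ) (X : ι → α) : ℝ :=
  𝔼 Q : Fin q → ι, ∑ R : Finset (Fin q), colDeviation (selectRows U R (X ∘ Q)) X

lemma samplingError_nonneg (q : ℕ) (U : Matrix α α ℝ) (X : ι → α) : 0 ≤ samplingError q U X :=
  Finset.expect_nonneg fun _ _ => Finset.sum_nonneg fun _ _ => colDeviation_nonneg _ _

lemma expect_samplingError_le [DecidableEq ι] [Nonempty ι] [Nonempty α] {U : Matrix α α ℝ} {K : ℝ}
    (hU : ∀ x y, |U x y| ≤ K) (q : ℕ) :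
    𝔼 X : ι → α, samplingError q U X
      ≤ 2 ^ q * (2 * K * Fintype.card ι * (√(Fintype.card ι) + 2 * q + 1)) := by
  set b : ℝ := 2 * K * Fintype.card ι * (√(Fintype.card ι) + 2 * q + 1) with hb
  have hK0 : 0 ≤ K :=
    (abs_nonneg _).trans (hU (Classical.arbitrary α) (Classical.arbitrary α))
  have term (Q : Fin q → ι) (R : Finset (Fin q)) :
      𝔼 X, colDeviation (selectRows U R (X ∘ Q)) X ≤ b := by
    have hcard : ((Finset.univ.image Q).card : ℝ) ≤ q := by
      exact_mod_cast Finset.card_image_le.trans_eq (Finset.card_fin q)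
    refine (expect_colDeviation_le (V := fun X => selectRows U R (X ∘ Q))
      (J := Finset.univ.image Q) (fun X => abs_selectRows_le hU R _) fun X Y hXY => ?_).trans ?_
    · have : X ∘ Q = Y ∘ Q := funext fun j => hXY _ (by simp)
      simp only [this]
    · rw [hb]
      gcongr
  unfold samplingError
  rw [Finset.expect_comm]
  refine Finset.expect_le Finset.univ_nonempty fun Q _ => ?_
  rw [Finset.expect_sum_comm]
  refine (Finset.sum_le_sum fun R _ => term Q R).trans_eq ?_
  simp

lemma sum_submatrix_le_add_samplingError [Nonempty ι] (U : Matrix α α ℝ) (X : ι → α)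
    {q : ℕ} (hq : 0 < q) (S T : Finset ι) :
    ∑ u ∈ S, ∑ v ∈ T, U (X u) (X v)
      ≤ Fintype.card ι ^ 2 * (matrixCutNorm U / Fintype.card α ^ 2) + samplingError q U X
        + (∑ u, ∑ v, U (X u) (X v) ^ 2 + Fintype.card ι ^ 2) / (2 * √q) := by
  classical
  have selected (Q : Fin q → ι) (R : Finset (Fin q)) :
      ∑ v ∈ T, ∑ u, selectRows (U.submatrix X X) R Q u v
        ≤ Fintype.card ι ^ 2 * (matrixCutNorm U / Fintype.card α ^ 2)
          + ∑ R' : Finset (Fin q), colDeviation (selectRows U R' (X ∘ Q)) X :=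
    calc ∑ v ∈ T, ∑ u, selectRows U R (X ∘ Q) (X u) (X v)
        ≤ Fintype.card ι ^ 2 * 𝔼 z, (𝔼 x, selectRows U R (X ∘ Q) x z)⁺
          + colDeviation (selectRows U R (X ∘ Q)) X := sum_le_expect_posPart_add_colDeviation _ X T
      _ ≤ _ := by
        gcongr
        · exact expect_posPart_expect_selectRows_le U R _
        · exact Finset.single_le_sum
            (f := fun R' => colDeviation (selectRows U R' (X ∘ Q)) X)
            (fun _ _ => colDeviation_nonneg _ _) (Finset.mem_univ R)
  rw [sq (Fintype.card ι : ℝ)] at selected ⊢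
  refine (sum_le_expect_sum_selectRows (U.submatrix X X) hq S T).trans (add_le_add ?_ le_rfl)
  refine (Finset.expect_le_expect fun Q _ => selected Q _).trans_eq ?_
  rw [Finset.expect_add_distrib, Fintype.expect_const, samplingError]

lemma matrixCutNorm_submatrix_le_add_samplingError [Nonempty ι] (U : Matrix α α ℝ) (X : ι → α)
    {q : ℕ} (hq : 0 < q) :
    matrixCutNorm (U.submatrix X X)
      ≤ Fintype.card ι ^ 2 * (matrixCutNorm U / Fintype.card α ^ 2)
        + (samplingError q U X + samplingError q (-U) X)
        + (∑ u, ∑ v, U (X u) (X v) ^ 2 + Fintype.card ι ^ 2) / (2 * √q) := by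
  refine matrixCutNorm_le fun S T => abs_le'.2 ⟨?_, ?_⟩
  · refine (sum_submatrix_le_add_samplingError U X hq S T).trans ?_
    gcongr
    exact le_add_of_nonneg_right (samplingError_nonneg q _ X)
  · have := sum_submatrix_le_add_samplingError (-U) X hq S T
    simp only [Matrix.neg_apply, neg_sq, Finset.sum_neg_distrib, matrixCutNorm_neg] at this
    refine this.trans ?_
    gcongr
    exact le_add_of_nonneg_left (samplingError_nonneg q _ X)

lemma expect_sum_sq_submatrix_le [DecidableEq ι] [Nonempty α] {U : Matrix α α ℝ} {K : ℝ}
    (hU : ∀ x y, |U x y| ≤ K) :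
    𝔼 X : ι → α, ∑ u, ∑ v, U (X u) (X v) ^ 2
      ≤ Fintype.card ι ^ 2 * (𝔼 x, 𝔼 y, U x y ^ 2) + Fintype.card ι * K ^ 2 := by
  have entry (u v : ι) : 𝔼 X : ι → α, U (X u) (X v) ^ 2
      ≤ (𝔼 x, 𝔼 y, U x y ^ 2) + if u = v then K ^ 2 else 0 := by
    split_ifs with h
    · refine (Finset.expect_le Finset.univ_nonempty fun X _ =>
        sq_le_sq' (abs_le.1 (hU _ _)).1 (abs_le.1 (hU _ _)).2).trans (le_add_of_nonneg_left ?_)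
      exact Finset.expect_nonneg fun x _ => Finset.expect_nonneg fun y _ => sq_nonneg _
    · rw [expect_apply_coord₂ h fun x y => U x y ^ 2, add_zero]
  simp_rw [Finset.expect_sum_comm]
  refine (Finset.sum_le_sum fun u _ => Finset.sum_le_sum fun v _ => entry u v).trans_eq ?_
  simp only [Finset.sum_add_distrib, Finset.sum_const, Finset.sum_ite_eq, Finset.mem_univ, if_true,
    Finset.card_univ, nsmul_eq_mul]
  ring

lemma expect_matrixCutNorm_submatrix_le [DecidableEq ι] [Nonempty ι] [Nonempty α]
    {U : Matrix α α ℝ} {K : ℝ} (hU : ∀ x y, |U x y| ≤ K) {q : ℕ} (hq : 0 < q) :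
    𝔼 X : ι → α, matrixCutNorm (U.submatrix X X)
      ≤ Fintype.card ι ^ 2 * (matrixCutNorm U / Fintype.card α ^ 2)
        + 2 * (2 ^ q * (2 * K * Fintype.card ι * (√(Fintype.card ι) + 2 * q + 1)))
        + (Fintype.card ι ^ 2 * (𝔼 x, 𝔼 y, U x y ^ 2) + Fintype.card ι * K ^ 2
          + Fintype.card ι ^ 2) / (2 * √q) := by
  have hU' (x y : α) : |(-U) x y| ≤ K := by simpa using hU x y
  refine (Finset.expect_le_expect fun X _ =>
    matrixCutNorm_submatrix_le_add_samplingError U X hq).trans ?_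
  simp only [Finset.expect_add_distrib, ← Finset.expect_div, Fintype.expect_const]
  gcongr
  · linarith [expect_samplingError_le (ι := ι) hU q, expect_samplingError_le (ι := ι) hU' q]
  · exact expect_sum_sq_submatrix_le hU

end Sampling

section FriezeKannan

lemma exists_energy_decrement {α β : Type*} [Fintype α] [Fintype β] {B : Matrix α β ℝ} {ε : ℝ}
    (hε : 0 < ε) (hB : ε * (Fintype.card α * Fintype.card β) < matrixCutNorm B) :
    ∃ (S : α → Bool) (T : β → Bool) (c : ℝ), |c| = ε ∧
      ∑ x, ∑ y, (B x y - if S x ∧ T y then c else 0) ^ 2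
        ≤ ∑ x, ∑ y, B x y ^ 2 - ε ^ 2 * (Fintype.card α * Fintype.card β) := by
  classical
  obtain ⟨⟨S, T⟩, hST⟩ := exists_lt_of_lt_ciSup hB
  set g := ∑ x ∈ S, ∑ y ∈ T, B x y with hg
  obtain ⟨c, habs, hcg⟩ : ∃ c : ℝ, |c| = ε ∧ c * g = ε * |g| := by
    rcases abs_choice g with h | h
    · exact ⟨ε, abs_of_pos hε, by rw [h]⟩
    · exact ⟨-ε, by rw [abs_neg, abs_of_pos hε], by rw [h]; ring⟩
  have entry (x : α) (y : β) : (B x y - if x ∈ S ∧ y ∈ T then c else 0) ^ 2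
      ≤ B x y ^ 2 - 2 * c * (if x ∈ S then if y ∈ T then B x y else 0 else 0) + ε ^ 2 := by
    rw [← habs, sq_abs, ite_and]
    split_ifs <;> linarith [sq_nonneg c]
  have cut : ∑ x, ∑ y, (if x ∈ S then if y ∈ T then B x y else 0 else 0) = g := by
    rw [hg, ← Fintype.sum_ite_mem S]
    refine Finset.sum_congr rfl fun x _ => ?_
    split_ifs
    · exact Fintype.sum_ite_mem T _
    · exact Finset.sum_const_zero
  refine ⟨fun x => decide (x ∈ S), fun y => decide (y ∈ T), c, habs, ?_⟩
  simp only [decide_eq_true_eq]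
  calc ∑ x, ∑ y, (B x y - if x ∈ S ∧ y ∈ T then c else 0) ^ 2
      ≤ ∑ x, ∑ y, (B x y ^ 2
          - 2 * c * (if x ∈ S then if y ∈ T then B x y else 0 else 0) + ε ^ 2) :=
        Finset.sum_le_sum fun x _ => Finset.sum_le_sum fun y _ => entry x y
    _ = ∑ x, ∑ y, B x y ^ 2 - 2 * (ε * |g|)
          + ε ^ 2 * (Fintype.card α * Fintype.card β) := by
        simp only [Finset.sum_add_distrib, Finset.sum_sub_distrib, ← Finset.mul_sum, cut,
          Finset.sum_const, Finset.card_univ, nsmul_eq_mul, ← hcg]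
        ring
    _ ≤ ∑ x, ∑ y, B x y ^ 2 - ε ^ 2 * (Fintype.card α * Fintype.card β) := by
        linarith [mul_le_mul_of_nonneg_left hST.le hε.le]

variable {α : Type*} [Fintype α] {A : Matrix α α ℝ}

lemma exists_step_matrix_cut_le_or_energy_le (hA : ∑ x, ∑ y, A x y ^ 2 ≤ Fintype.card α ^ 2)
    {ε : ℝ} (hε : 0 < ε) (t : ℕ) :
    ∃ (p : α → Fin t → Bool × Bool) (F : Matrix (Fin t → Bool × Bool) (Fin t → Bool × Bool) ℝ),
      (∀ i j, |F i j| ≤ t * ε) ∧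
      ∑ x, ∑ y, (A x y - F (p x) (p y)) ^ 2 ≤ Fintype.card α ^ 2 ∧
      (matrixCutNorm (A - F.submatrix p p) ≤ ε * Fintype.card α ^ 2 ∨
        ∑ x, ∑ y, (A x y - F (p x) (p y)) ^ 2 ≤ Fintype.card α ^ 2 * (1 - t * ε ^ 2)) := by
  induction t with
  | zero => exact ⟨fun _ => Fin.elim0, 0, by simp, by simpa using hA, Or.inr (by simpa using hA)⟩
  | succ t ih =>
    obtain ⟨p, F, hF, energy, h⟩ := ih
    rcases le_or_gt (matrixCutNorm (A - F.submatrix p p)) (ε * Fintype.card α ^ 2) with hcut | hcut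
    · refine ⟨fun x => Fin.cons default (p x), fun i j => F (Fin.tail i) (Fin.tail j),
        fun i j => (hF _ _).trans ?_, by simpa using energy, Or.inl hcut⟩
      gcongr
      simp
    · obtain ⟨S, T, c, hc, decrement⟩ := exists_energy_decrement hε (sq (_ : ℝ) ▸ hcut)
      simp only [Matrix.sub_apply, Matrix.submatrix_apply, sub_sub, ← sq] at decrement
      refine ⟨fun x => Fin.cons (S x, T x) (p x),
        fun i j => F (Fin.tail i) (Fin.tail j) + if (i 0).1 ∧ (j 0).2 then c else 0,
        fun i j => ?_, ?_, Or.inr ?_⟩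
      · refine (abs_add_le _ _).trans ?_
        have : |if (i 0).1 ∧ (j 0).2 then c else 0| ≤ ε := by
          split_ifs
          · exact hc.le
          · simpa using hε.le
        push_cast
        linarith [hF (Fin.tail i) (Fin.tail j)]
      · simp only [Fin.tail_cons, Fin.cons_zero]
        linarith [mul_nonneg (sq_nonneg ε) (sq_nonneg (Fintype.card α : ℝ))]
      · simp only [Fin.tail_cons, Fin.cons_zero]
        push_cast
        linarith [h.resolve_left hcut.not_ge]

/- The energy cannot drop below zero, so after `r` steps of size `1 / √r` the cut norm is small. -/
lemma exists_step_matrix_matrixCutNorm_sub_le [Nonempty α]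
    (hA : ∑ x, ∑ y, A x y ^ 2 ≤ Fintype.card α ^ 2) {r : ℕ} (hr : 0 < r) :
    ∃ (p : α → Fin r → Bool × Bool) (F : Matrix (Fin r → Bool × Bool) (Fin r → Bool × Bool) ℝ),
      (∀ i j, |F i j| ≤ √r) ∧
      ∑ x, ∑ y, (A x y - F (p x) (p y)) ^ 2 ≤ Fintype.card α ^ 2 ∧
      matrixCutNorm (A - F.submatrix p p) ≤ Fintype.card α ^ 2 / √r := by
  have hr0 : (0 : ℝ) < r := by exact_mod_cast hr
  have hε : 0 < 1 / √(r : ℝ) := by positivity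
  obtain ⟨p, F, hF, energy, h⟩ := exists_step_matrix_cut_le_or_energy_le hA hε r
  refine ⟨p, F, fun i j => (hF i j).trans_eq ?_, energy, ?_⟩
  · rw [mul_one_div, Real.div_sqrt]
  · rw [div_eq_mul_one_div, mul_comm]
    by_contra! hcut
    obtain ⟨S, T, c, -, decrement⟩ := exists_energy_decrement hε (sq (_ : ℝ) ▸ hcut)
    have energy_zero := h.resolve_left hcut.not_ge
    have hrε : (r : ℝ) * (1 / √r) ^ 2 = 1 := by
      rw [div_pow, Real.sq_sqrt hr0.le, one_pow, mul_one_div_cancel hr0.ne']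
    rw [hrε, sub_self, mul_zero] at energy_zero
    have nonneg : 0 ≤ ∑ x, ∑ y,
        ((A - F.submatrix p p) x y - if S x ∧ T y then c else 0) ^ 2 := by positivity
    have : 0 < (1 / √(r : ℝ)) ^ 2 * (Fintype.card α * Fintype.card α) := by
      have := Fintype.card_pos (α := α)
      positivity
    simp only [Matrix.sub_apply, Matrix.submatrix_apply] at decrement nonneg
    linarith

end FriezeKannan

/-- The probability that a random subset of `E`, containing each `e ∈ E` independently with
probability `p e`, equals `s`. -/
def bernoulliWeight {γ : Type*} [DecidableEq γ] (E : Finset γ) (p : γ → ℝ) (s : Finset γ) : ℝ :=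
  (∏ e ∈ s, p e) * ∏ e ∈ E \ s, (1 - p e)

section BernoulliWeight

variable {γ : Type*} [DecidableEq γ] {E s : Finset γ} {p : γ → ℝ}

lemma sum_powerset_bernoulliWeight (E : Finset γ) (p : γ → ℝ) :
    ∑ s ∈ E.powerset, bernoulliWeight E p s = 1 := by
  simp only [bernoulliWeight, ← Finset.prod_add, add_sub_cancel, Finset.prod_const_one]

lemma bernoulliWeight_nonneg (hp : ∀ e ∈ E, p e ∈ Icc 0 1) (hs : s ⊆ E) :
    0 ≤ bernoulliWeight E p s :=
  mul_nonneg (Finset.prod_nonneg fun e he => (hp e (hs he)).1)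
    (Finset.prod_nonneg fun e he => sub_nonneg.2 (hp e (Finset.mem_sdiff.1 he).1).2)

lemma bernoulliWeight_insert {e : γ} (he : e ∈ E) (hes : e ∉ s) :
    (1 - p e) * bernoulliWeight E p (insert e s) = p e * bernoulliWeight E p s := by
  rw [bernoulliWeight, bernoulliWeight, Finset.prod_insert hes, Finset.sdiff_insert,
    ← Finset.mul_prod_erase (E \ s) _ (Finset.mem_sdiff.2 ⟨he, hes⟩)]
  ring

lemma sum_bernoulliWeight_mul_sub_mul_eq_zero {e : γ} (he : e ∈ E) {Y : Finset γ → ℝ}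
    (hY : ∀ s, Y (insert e s) = Y s) :
    ∑ s ∈ E.powerset, bernoulliWeight E p s * (((if e ∈ s then 1 else 0) - p e) * Y s) = 0 := by
  rw [← Finset.insert_erase he, Finset.sum_powerset_insert (Finset.notMem_erase e E),
    Finset.insert_erase he, ← Finset.sum_add_distrib]
  refine Finset.sum_eq_zero fun s hs => ?_
  have hes : e ∉ s := fun h => Finset.notMem_erase e E (Finset.mem_powerset.1 hs h)
  rw [hY, if_neg hes, if_pos (Finset.mem_insert_self e s)]
  linear_combination Y s * bernoulliWeight_insert (p := p) he hes

lemma bernoulliWeight_eq_sum (E s : Finset γ) (p : γ → ℝ) :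
    bernoulliWeight E p s = ∑ t ∈ (E \ s).powerset, (-1) ^ t.card * ∏ e ∈ s ∪ t, p e := by
  rw [bernoulliWeight, Finset.prod_congr rfl fun e _ => sub_eq_neg_add 1 (p e), Finset.prod_add,
    Finset.mul_sum]
  refine Finset.sum_congr rfl fun t ht => ?_
  have hst : Disjoint s t :=
    Finset.disjoint_of_subset_right (Finset.mem_powerset.1 ht) Finset.disjoint_sdiff
  rw [Finset.prod_const_one, mul_one, Finset.prod_neg, Finset.prod_union hst]
  ring

end BernoulliWeight

section RandomGraph

variable {ι : Type*} [LinearOrder ι]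

/-- The adjacency matrix of the graph on `ι` whose edges join the pairs in `s`. -/
def edgeMatrix (s : Finset (ι × ι)) : Matrix ι ι ℝ :=
  fun u v => if (u, v) ∈ s ∨ (v, u) ∈ s then 1 else 0

/-- The pairs `(u, v)` with `u < v`, standing for the possible edges of a graph on `ι`. -/
def orderedPairs (ι : Type*) [LinearOrder ι] [Fintype ι] : Finset (ι × ι) := {p | p.1 < p.2}

/-- The probability that the graph joining each pair `u < v` independently with probability
`a u v` has edge set `s`. -/
def graphWeight [Fintype ι] (a : Matrix ι ι ℝ) (s : Finset (ι × ι)) : ℝ :=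
  bernoulliWeight (orderedPairs ι) (fun e => a e.1 e.2) s

/-- The centred adjacency matrix: off the diagonal, the edge indicators minus their means. -/
def noiseMatrix (a : Matrix ι ι ℝ) (s : Finset (ι × ι)) : Matrix ι ι ℝ :=
  fun u v => if u = v then 0 else edgeMatrix s u v - a u v

lemma edgeMatrix_mem_Icc (s : Finset (ι × ι)) (u v : ι) : edgeMatrix s u v ∈ Icc (0 : ℝ) 1 := by
  unfold edgeMatrix
  split_ifs <;> simp

lemma noiseMatrix_self (a : Matrix ι ι ℝ) (s : Finset (ι × ι)) (u : ι) :
    noiseMatrix a s u u = 0 := if_pos rfl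

variable {a : Matrix ι ι ℝ}

lemma noiseMatrix_isSymm (ha : a.IsSymm) (s : Finset (ι × ι)) : (noiseMatrix a s).IsSymm := by
  ext u v
  simp only [Matrix.transpose_apply, noiseMatrix, edgeMatrix, eq_comm, or_comm, ha.apply u v]

lemma abs_noiseMatrix_le (ha : ∀ u v, a u v ∈ Icc 0 1) (s : Finset (ι × ι)) (u v : ι) :
    |noiseMatrix a s u v| ≤ 1 := by
  have hs := edgeMatrix_mem_Icc s u v
  unfold noiseMatrix
  split_ifs
  · simp
  · exact abs_le.2 ⟨by linarith [hs.1, (ha u v).2], by linarith [hs.2, (ha u v).1]⟩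

lemma noiseMatrix_insert {u v x y : ι} (hxy : (x, y) ≠ (u, v)) (hyx : (y, x) ≠ (u, v))
    (s : Finset (ι × ι)) : noiseMatrix a (insert (u, v) s) x y = noiseMatrix a s x y := by
  simp only [noiseMatrix, edgeMatrix, Finset.mem_insert, hxy, hyx, false_or]

variable [Fintype ι]

lemma mem_orderedPairs {p : ι × ι} : p ∈ orderedPairs ι ↔ p.1 < p.2 := by
  simp only [orderedPairs, Finset.mem_filter_univ]

lemma sum_graphWeight (a : Matrix ι ι ℝ) :
    ∑ s ∈ (orderedPairs ι).powerset, graphWeight a s = 1 := sum_powerset_bernoulliWeight _ _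

lemma graphWeight_nonneg (ha : ∀ u v, a u v ∈ Icc 0 1) {s : Finset (ι × ι)}
    (hs : s ⊆ orderedPairs ι) : 0 ≤ graphWeight a s :=
  bernoulliWeight_nonneg (fun e _ => ha e.1 e.2) hs

lemma sum_graphWeight_mul_noiseMatrix_mul_eq_zero {u v : ι} (huv : u < v)
    {Y : Finset (ι × ι) → ℝ} (hY : ∀ s, Y (insert (u, v) s) = Y s) :
    ∑ s ∈ (orderedPairs ι).powerset, graphWeight a s * (noiseMatrix a s u v * Y s) = 0 := by
  rw [← sum_bernoulliWeight_mul_sub_mul_eq_zero (p := fun e => a e.1 e.2)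
    (mem_orderedPairs.2 huv) hY]
  refine Finset.sum_congr rfl fun s hs => ?_
  have hvu : (v, u) ∉ s := fun h =>
    (mem_orderedPairs.1 (Finset.mem_powerset.1 hs h)).not_gt huv
  simp only [noiseMatrix, edgeMatrix, huv.ne, hvu, if_false, or_false]
  rfl

/- An entry of the noise matrix is independent of the other three corners of the rectangle. -/
lemma sum_graphWeight_mul_rectangle_eq_zero_of_lt {u u' v v' : ι} (huu' : u ≠ u') (hvv' : v ≠ v')
    (huv : u < v) :
    ∑ s ∈ (orderedPairs ι).powerset, graphWeight a s * (noiseMatrix a s u v *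
      (noiseMatrix a s u v' * noiseMatrix a s u' v * noiseMatrix a s u' v')) = 0 := by
  rcases eq_or_ne u v' with rfl | huv'
  · simp only [noiseMatrix_self, zero_mul, mul_zero, Finset.sum_const_zero]
  · refine sum_graphWeight_mul_noiseMatrix_mul_eq_zero huv fun s => ?_
    rw [noiseMatrix_insert, noiseMatrix_insert, noiseMatrix_insert]
    all_goals grind

lemma sum_graphWeight_mul_rectangle_le (hsymm : a.IsSymm) (ha : ∀ u v, a u v ∈ Icc 0 1)
    (u u' v v' : ι) :
    ∑ s ∈ (orderedPairs ι).powerset, graphWeight a s * (noiseMatrix a s u v *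
      (noiseMatrix a s u v' * noiseMatrix a s u' v * noiseMatrix a s u' v'))
      ≤ (if u = u' then 1 else 0) + if v = v' then 1 else 0 := by
  by_cases h : u = u' ∨ v = v'
  · calc ∑ s ∈ (orderedPairs ι).powerset, graphWeight a s * (noiseMatrix a s u v *
          (noiseMatrix a s u v' * noiseMatrix a s u' v * noiseMatrix a s u' v'))
        ≤ ∑ s ∈ (orderedPairs ι).powerset, graphWeight a s * 1 := by
          refine Finset.sum_le_sum fun s hs => mul_le_mul_of_nonneg_left ?_
            (graphWeight_nonneg ha (Finset.mem_powerset.1 hs))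
          have hZ := abs_noiseMatrix_le ha s
          refine (le_abs_self _).trans ?_
          simp only [abs_mul]
          exact mul_le_one₀ (hZ u v) (by positivity) (mul_le_one₀ (mul_le_one₀ (hZ u v')
            (abs_nonneg _) (hZ u' v)) (abs_nonneg _) (hZ u' v'))
      _ = 1 := by simp only [mul_one, sum_graphWeight]
      _ ≤ _ := by rcases h with h | h <;> rw [if_pos h] <;> split_ifs <;> norm_num
  · obtain ⟨huu', hvv'⟩ := not_or.1 h
    rw [if_neg huu', if_neg hvv', add_zero]
    apply le_of_eq
    rcases lt_trichotomy u v with huv | rfl | hvu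
    · exact sum_graphWeight_mul_rectangle_eq_zero_of_lt huu' hvv' huv
    · simp only [noiseMatrix_self, zero_mul, mul_zero, Finset.sum_const_zero]
    · rw [← sum_graphWeight_mul_rectangle_eq_zero_of_lt (a := a) hvv' huu' hvu]
      refine Finset.sum_congr rfl fun s _ => ?_
      rw [← (noiseMatrix_isSymm hsymm s).apply u v, ← (noiseMatrix_isSymm hsymm s).apply u v',
        ← (noiseMatrix_isSymm hsymm s).apply u' v, ← (noiseMatrix_isSymm hsymm s).apply u' v']
      ring

/-- The sum of `Z u v * Z u v' * Z u' v * Z u' v'` over all rows `u, u'` and columns `v, v'`: the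
weighted count of four-cycles of `Z`, which controls its cut norm. -/
def fourCycleSum {ι κ : Type*} [Fintype ι] [Fintype κ] (Z : Matrix ι κ ℝ) : ℝ :=
  ∑ v, ∑ v', (∑ u, Z u v * Z u v') ^ 2

lemma sq_sum_le_card_mul_univ_sum_sq {κ : Type*} [Fintype κ] (f : κ → ℝ) (S : Finset κ) :
    (∑ x ∈ S, f x) ^ 2 ≤ Fintype.card κ * ∑ x, f x ^ 2 := by
  refine sq_sum_le_card_mul_sum_sq.trans ?_
  gcongr
  · exact Finset.card_le_univ S
  · exact Finset.subset_univ S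

lemma matrixCutNorm_pow_four_le {ι κ : Type*} [Fintype ι] [Fintype κ] (Z : Matrix ι κ ℝ) :
    matrixCutNorm Z ^ 4 ≤ (Fintype.card ι * Fintype.card κ) ^ 2 * fourCycleSum Z := by
  obtain ⟨⟨S, T⟩, hST⟩ : ∃ ST : Finset ι × Finset κ,
      |∑ u ∈ ST.1, ∑ v ∈ ST.2, Z u v| = matrixCutNorm Z := exists_eq_ciSup_of_finite
  have gram : ∑ u, (∑ v ∈ T, Z u v) ^ 2
      = ∑ p ∈ T ×ˢ T, ∑ u, Z u p.1 * Z u p.2 := by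
    simp only [sq, Finset.sum_mul_sum, Finset.sum_product]
    rw [Finset.sum_comm]
    exact Finset.sum_congr rfl fun v _ => Finset.sum_comm
  calc matrixCutNorm Z ^ 4
      = ((∑ u ∈ S, ∑ v ∈ T, Z u v) ^ 2) ^ 2 := by rw [← hST, ← pow_mul, Even.pow_abs (by decide)]
    _ ≤ (Fintype.card ι * ∑ u, (∑ v ∈ T, Z u v) ^ 2) ^ 2 := by
        gcongr
        exact sq_sum_le_card_mul_univ_sum_sq _ S
    _ = Fintype.card ι ^ 2 * (∑ p ∈ T ×ˢ T, ∑ u, Z u p.1 * Z u p.2) ^ 2 := by rw [mul_pow, gram]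
    _ ≤ Fintype.card ι ^ 2
          * (Fintype.card (κ × κ) * ∑ p : κ × κ, (∑ u, Z u p.1 * Z u p.2) ^ 2) := by
        gcongr
        exact sq_sum_le_card_mul_univ_sum_sq _ _
    _ = (Fintype.card ι * Fintype.card κ) ^ 2 * fourCycleSum Z := by
        rw [fourCycleSum, Fintype.sum_prod_type, Fintype.card_prod]
        push_cast
        ring

lemma sum_graphWeight_mul_fourCycleSum_le (hsymm : a.IsSymm) (ha : ∀ u v, a u v ∈ Icc 0 1) :
    ∑ s ∈ (orderedPairs ι).powerset, graphWeight a s * fourCycleSum (noiseMatrix a s)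
      ≤ 2 * Fintype.card ι ^ 3 := by
  have expand (s : Finset (ι × ι)) : fourCycleSum (noiseMatrix a s)
      = ∑ v, ∑ v', ∑ u, ∑ u', noiseMatrix a s u v *
        (noiseMatrix a s u v' * noiseMatrix a s u' v * noiseMatrix a s u' v') := by
    simp only [fourCycleSum, sq, Finset.sum_mul_sum]
    simp only [mul_assoc]
  simp only [expand, Finset.mul_sum]
  calc _ = ∑ v, ∑ v', ∑ u, ∑ u', ∑ s ∈ (orderedPairs ι).powerset, graphWeight a s *
          (noiseMatrix a s u v *
            (noiseMatrix a s u v' * noiseMatrix a s u' v * noiseMatrix a s u' v')) := by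
        simp only [Finset.sum_comm (s := (orderedPairs ι).powerset)]
    _ ≤ ∑ v : ι, ∑ v', ∑ u : ι, ∑ u', ((if u = u' then 1 else 0) + if v = v' then 1 else 0) := by
        gcongr
        exact sum_graphWeight_mul_rectangle_le hsymm ha _ _ _ _
    _ = 2 * Fintype.card ι ^ 3 := by
        simp only [Finset.sum_add_distrib, Finset.sum_const, Finset.sum_ite_eq, Finset.mem_univ,
          if_true, Finset.card_univ, nsmul_eq_mul, ← Finset.mul_sum]
        ring

lemma matrixCutNorm_edgeMatrix_sub_le (ha : ∀ u v, a u v ∈ Icc 0 1) {s : Finset (ι × ι)}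
    (hs : s ⊆ orderedPairs ι) :
    matrixCutNorm (edgeMatrix s - a) ≤ matrixCutNorm (noiseMatrix a s) + Fintype.card ι := by
  have split : edgeMatrix s - a = noiseMatrix a s - Matrix.diagonal a.diag := by
    ext u v
    rcases eq_or_ne u v with rfl | huv
    · have : (u, u) ∉ s := fun h => lt_irrefl u (mem_orderedPairs.1 (hs h))
      simp [noiseMatrix, edgeMatrix, this]
    · simp [noiseMatrix, huv]
  have diagonal : matrixCutNorm (Matrix.diagonal a.diag) ≤ Fintype.card ι := by
    refine (matrixCutNorm_le_sum_abs _).trans ?_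
    simp only [Matrix.diagonal_apply, apply_ite abs, abs_zero, Finset.sum_ite_eq, Finset.mem_univ,
      if_true, Matrix.diag_apply]
    refine (Finset.sum_le_card_nsmul _ _ 1 fun u _ => ?_).trans_eq (by simp)
    exact abs_le.2 ⟨by linarith [(ha u u).1], (ha u u).2⟩
  rw [split, sub_eq_add_neg]
  refine (matrixCutNorm_add_le _ _).trans ?_
  rw [matrixCutNorm_neg]
  gcongr

lemma le_add_pow_four_div_pow_three {x a : ℝ} (hx : 0 ≤ x) (ha : 0 < a) :
    x ≤ a + x ^ 4 / a ^ 3 := by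
  rcases le_total x a with h | h
  · exact h.trans (le_add_of_nonneg_right (by positivity))
  · refine le_add_of_nonneg_of_le ha.le ?_
    rw [le_div_iff₀ (by positivity)]
    calc x * a ^ 3 ≤ x * x ^ 3 := by gcongr
      _ = x ^ 4 := by ring

lemma sum_graphWeight_mul_matrixCutNorm_le [Nonempty ι] (hsymm : a.IsSymm)
    (ha : ∀ u v, a u v ∈ Icc 0 1) {l : ℝ} (hl : 0 < l) :
    ∑ s ∈ (orderedPairs ι).powerset, graphWeight a s * matrixCutNorm (edgeMatrix s - a)
      ≤ Fintype.card ι ^ 2 * l + 2 * Fintype.card ι / l ^ 3 + Fintype.card ι := by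
  set k : ℝ := (Fintype.card ι : ℝ) with hk
  have hk0 : 0 < k := by rw [hk]; exact_mod_cast Fintype.card_pos
  have cut (s : Finset (ι × ι)) (hs : s ⊆ orderedPairs ι) : matrixCutNorm (edgeMatrix s - a)
      ≤ k ^ 2 * l + k + fourCycleSum (noiseMatrix a s) / (k ^ 2 * l ^ 3) := by
    have noise : matrixCutNorm (noiseMatrix a s)
        ≤ k ^ 2 * l + fourCycleSum (noiseMatrix a s) / (k ^ 2 * l ^ 3) :=
      calc matrixCutNorm (noiseMatrix a s)
          ≤ k ^ 2 * l + matrixCutNorm (noiseMatrix a s) ^ 4 / (k ^ 2 * l) ^ 3 :=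
            le_add_pow_four_div_pow_three (matrixCutNorm_nonneg _) (by positivity)
        _ ≤ k ^ 2 * l + (k * k) ^ 2 * fourCycleSum (noiseMatrix a s) / (k ^ 2 * l) ^ 3 := by
            gcongr
            exact matrixCutNorm_pow_four_le _
        _ = k ^ 2 * l + fourCycleSum (noiseMatrix a s) / (k ^ 2 * l ^ 3) := by
            field_simp
    linarith [matrixCutNorm_edgeMatrix_sub_le ha hs]
  calc ∑ s ∈ (orderedPairs ι).powerset, graphWeight a s * matrixCutNorm (edgeMatrix s - a)
      ≤ ∑ s ∈ (orderedPairs ι).powerset, graphWeight a s *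
          (k ^ 2 * l + k + fourCycleSum (noiseMatrix a s) / (k ^ 2 * l ^ 3)) :=
        Finset.sum_le_sum fun s hs => mul_le_mul_of_nonneg_left
          (cut s (Finset.mem_powerset.1 hs)) (graphWeight_nonneg ha (Finset.mem_powerset.1 hs))
    _ = k ^ 2 * l + k + (∑ s ∈ (orderedPairs ι).powerset,
          graphWeight a s * fourCycleSum (noiseMatrix a s)) / (k ^ 2 * l ^ 3) := by
        simp only [mul_add _ (k ^ 2 * l + k), Finset.sum_add_distrib, ← Finset.sum_mul,
          sum_graphWeight, one_mul, ← mul_div_assoc, Finset.sum_div]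
    _ ≤ k ^ 2 * l + k + 2 * k ^ 3 / (k ^ 2 * l ^ 3) := by
        gcongr
        exact sum_graphWeight_mul_fourCycleSum_le hsymm ha
    _ = k ^ 2 * l + 2 * k / l ^ 3 + k := by
        field_simp
        ring

end RandomGraph

section LabelMatching

variable {α β P : Type*}

/- An equivalence with as many label agreements as possible cannot be improved by a swap. -/
lemma exists_equiv_labels_saturated [Finite α] [Finite β] (hcard : Nat.card α = Nat.card β)
    (p : α → P) (l : β → P) :
    ∃ e : α ≃ β, ∀ i, (∀ x, p x = i → l (e x) = i) ∨ ∀ x, l (e x) = i → p x = i := by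
  classical
  have : Nonempty (α ≃ β) := Finite.card_eq.1 hcard
  obtain ⟨e, he⟩ := Finite.exists_max fun e : α ≃ β => {x | p x = l (e x)}.ncard
  refine ⟨e, fun i => ?_⟩
  by_contra! h
  obtain ⟨⟨x, hpx, hlx⟩, z, hlz, hpz⟩ := h
  refine (he ((Equiv.swap x z).trans e)).not_gt
    (Set.ncard_lt_ncard ((Set.ssubset_iff_of_subset fun w hw => ?_).2 ⟨x, ?_, ?_⟩))
  · have hw : p w = l (e w) := hw
    have hwx : w ≠ x := by grind
    have hwz : w ≠ z := by grind
    change p w = l (e (Equiv.swap x z w))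
    rw [Equiv.swap_apply_of_ne_of_ne hwx hwz, hw]
  · change p x = l (e (Equiv.swap x z x))
    rw [Equiv.swap_apply_left, hpx, hlz]
  · exact fun h : p x = l (e x) => hlx (h.symm.trans hpx)

variable [Fintype α] [DecidableEq P]

lemma exists_equiv_card_label_ne_le [Fintype β] [Fintype P]
    (hcard : Fintype.card α = Fintype.card β) (p : α → P) (l : β → P) :
    ∃ e : α ≃ β, ((Finset.univ.filter fun x => p x ≠ l (e x)).card : ℝ) ≤
      ∑ i, |((Finset.univ.filter fun y => l y = i).card : ℝ)
        - (Finset.univ.filter fun x => p x = i).card| := by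
  classical
  obtain ⟨e, he⟩ := exists_equiv_labels_saturated (by simpa using hcard) p l
  refine ⟨e, ?_⟩
  rw [Finset.card_eq_sum_card_fiberwise (f := p) (t := Finset.univ) fun _ _ => Finset.mem_univ _]
  push_cast
  refine Finset.sum_le_sum fun i _ => ?_
  set A := Finset.univ.filter fun x => p x = i
  set B := Finset.univ.filter fun x => l (e x) = i
  have labels : (Finset.univ.filter fun y => l y = i).card = B.card :=
    (Finset.card_equiv e fun x => by simp [B]).symm
  have mismatch :
      ((Finset.univ.filter fun x => p x ≠ l (e x)).filter fun x => p x = i) = A \ B := by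
    grind
  rw [labels, mismatch]
  rcases he i with h | h
  · have : A ⊆ B := fun x hx => by grind
    simp [Finset.sdiff_eq_empty_iff_subset.2 this]
  · have : B ⊆ A := fun x hx => by grind
    rw [Finset.cast_card_sdiff this, abs_sub_comm]
    exact le_abs_self _

lemma matrixCutNorm_relabel_sub_le {F : Matrix P P ℝ} {K : ℝ} (hF : ∀ i j, |F i j| ≤ K)
    (p l : α → P) :
    matrixCutNorm (F.submatrix p p - F.submatrix l l)
      ≤ 4 * K * (Finset.univ.filter fun x => p x ≠ l x).card * Fintype.card α := by
  have entry (x y : α) : |F (p x) (p y) - F (l x) (l y)|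
      ≤ 2 * K * (if p x ≠ l x then 1 else 0) + 2 * K * (if p y ≠ l y then 1 else 0) := by
    have h2K : |F (p x) (p y) - F (l x) (l y)| ≤ 2 * K :=
      (abs_sub _ _).trans (by linarith [hF (p x) (p y), hF (l x) (l y)])
    have hK : 0 ≤ K := (abs_nonneg _).trans (hF (p x) (p y))
    by_cases hx : p x = l x
    · by_cases hy : p y = l y
      · simp [hx, hy]
      · simpa [hx, hy] using h2K
    · rw [if_pos hx, mul_one]
      exact h2K.trans (le_add_of_nonneg_right (by positivity))
  calc matrixCutNorm (F.submatrix p p - F.submatrix l l)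
      ≤ ∑ x, ∑ y, |F (p x) (p y) - F (l x) (l y)| := matrixCutNorm_le_sum_abs _
    _ ≤ ∑ x, ∑ y, (2 * K * (if p x ≠ l x then 1 else 0)
          + 2 * K * (if p y ≠ l y then 1 else 0)) :=
        Finset.sum_le_sum fun x _ => Finset.sum_le_sum fun y _ => entry x y
    _ = 4 * K * (Finset.univ.filter fun x => p x ≠ l x).card * Fintype.card α := by
        simp only [Finset.sum_add_distrib, ← Finset.mul_sum, Finset.sum_const, Finset.card_univ,
          nsmul_eq_mul, Finset.sum_boole]
        ring

end LabelMatching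

/-- The smallest cut norm of the difference between `A` and a blow-up of `G` in which every vertex
is replaced by a copy of `κ`: the cut distance of `A` and `G`, scaled by the size of `A`. -/
noncomputable def overlayDist (κ : Type*) {α ι : Type*} (A : Matrix α α ℝ) (G : Matrix ι ι ℝ) : ℝ :=
  ⨅ e : α ≃ ι × κ, matrixCutNorm (A - G.submatrix (Prod.fst ∘ e) (Prod.fst ∘ e))

section Overlay

variable {α ι κ : Type*}

lemma overlayDist_le (e : α ≃ ι × κ) (A : Matrix α α ℝ) (G : Matrix ι ι ℝ) :
    overlayDist κ A G ≤ matrixCutNorm (A - G.submatrix (Prod.fst ∘ e) (Prod.fst ∘ e)) :=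
  ciInf_le ⟨0, Set.forall_mem_range.2 fun _ => matrixCutNorm_nonneg _⟩ e

lemma exists_perm_matrixCutNorm_sub_le [Finite α] [Nonempty (α ≃ ι × κ)] (A B : Matrix α α ℝ)
    (G : Matrix ι ι ℝ) :
    ∃ σ : Equiv.Perm α, matrixCutNorm (A - B.submatrix σ σ)
      ≤ overlayDist κ A G + overlayDist κ B G := by
  have : Finite (ι × κ) := Finite.of_equiv α (Classical.arbitrary (α ≃ ι × κ))
  obtain ⟨e, he⟩ := exists_eq_ciInf_of_finite
    (f := fun e : α ≃ ι × κ => matrixCutNorm (A - G.submatrix (Prod.fst ∘ e) (Prod.fst ∘ e)))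
  obtain ⟨f, hf⟩ := exists_eq_ciInf_of_finite
    (f := fun e : α ≃ ι × κ => matrixCutNorm (B - G.submatrix (Prod.fst ∘ e) (Prod.fst ∘ e)))
  set σ := e.trans f.symm with hσ
  have realign : G.submatrix (Prod.fst ∘ e) (Prod.fst ∘ e) - B.submatrix σ σ
      = (G.submatrix (Prod.fst ∘ f) (Prod.fst ∘ f) - B).submatrix σ σ := by
    ext x y
    simp [hσ]
  refine ⟨σ, (matrixCutNorm_sub_le A (G.submatrix (Prod.fst ∘ e) (Prod.fst ∘ e))
    _).trans_eq ?_⟩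
  rw [realign, matrixCutNorm_submatrix_equiv, matrixCutNorm_sub_comm _ B, he, hf]
  rfl

lemma overlayDist_le_sq_card [Fintype α] (hne : Nonempty (α ≃ ι × κ)) {A : Matrix α α ℝ}
    {G : Matrix ι ι ℝ} (hA : ∀ x y, A x y ∈ Set.Icc (0 : ℝ) 1)
    (hG : ∀ u v, G u v ∈ Set.Icc (0 : ℝ) 1) :
    overlayDist κ A G ≤ (Fintype.card α : ℝ) ^ 2 := by
  obtain ⟨e⟩ := hne
  calc overlayDist κ A G
      ≤ ∑ x, ∑ y, |A x y - G (e x).1 (e y).1| :=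
        (overlayDist_le e A G).trans (matrixCutNorm_le_sum_abs _)
    _ ≤ ∑ _x : α, ∑ _y : α, 1 := by
        refine Finset.sum_le_sum fun x _ => Finset.sum_le_sum fun y _ => ?_
        rw [abs_le]
        constructor <;> linarith [(hA x y).1, (hA x y).2, (hG (e x).1 (e y).1).1,
          (hG (e x).1 (e y).1).2]
    _ = (Fintype.card α : ℝ) ^ 2 := by simp [sq]

variable [Fintype α] [Fintype ι] [Fintype κ]

lemma overlayDist_le_add {P : Type*} [Fintype P] [DecidableEq P]
    (hcard : Fintype.card α = Fintype.card ι * Fintype.card κ) (A : Matrix α α ℝ)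
    (G : Matrix ι ι ℝ) {F : Matrix P P ℝ} {K : ℝ} (hF : ∀ i j, |F i j| ≤ K) (p : α → P)
    (X : ι → α) :
    overlayDist κ A G
      ≤ matrixCutNorm (A - F.submatrix p p)
        + Fintype.card κ ^ 2 * matrixCutNorm (F.submatrix (p ∘ X) (p ∘ X) - G)
        + 4 * K * (∑ i, |(Fintype.card κ * (Finset.univ.filter fun u => p (X u) = i).card : ℝ)
          - (Finset.univ.filter fun x => p x = i).card|) * Fintype.card α := by
  classical
  obtain ⟨e, he⟩ := exists_equiv_card_label_ne_le (β := ι × κ) (by simpa using hcard) p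
    fun y => p (X y.1)
  have fibre (i : P) : (Finset.univ.filter fun y : ι × κ => p (X y.1) = i).card
      = Fintype.card κ * (Finset.univ.filter fun u => p (X u) = i).card := by
    have : (Finset.univ.filter fun y : ι × κ => p (X y.1) = i)
        = (Finset.univ.filter fun u => p (X u) = i) ×ˢ Finset.univ := by
      ext; simp
    rw [this, Finset.card_product, Finset.card_univ, mul_comm]
  simp only [fibre, Nat.cast_mul] at he
  have blowup (u : ι) :
      (Finset.univ.filter fun x => (Prod.fst ∘ e) x = u).card ≤ Fintype.card κ :=
    Finset.card_le_card_of_injOn (fun x => (e x).2) (by simp [Set.MapsTo])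
      fun x hx y hy hxy => e.injective (by grind)
  set f := Prod.fst ∘ e
  have hrelabel := (matrixCutNorm_relabel_sub_le hF p (p ∘ X ∘ f)).trans <|
    show _ ≤ 4 * K * (∑ i, |(Fintype.card κ * (Finset.univ.filter fun u => p (X u) = i).card : ℝ)
      - (Finset.univ.filter fun x => p x = i).card|) * Fintype.card α by
    cases isEmpty_or_nonempty α with
    | inl _ => simp
    | inr h =>
      have hK : 0 ≤ K := h.elim fun x => (abs_nonneg _).trans (hF (p x) (p x))
      gcongr
      exact he
  have hsplit := matrixCutNorm_sub_le A (F.submatrix p p) (G.submatrix f f)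
  have hsplit' := matrixCutNorm_sub_le (F.submatrix p p)
    (F.submatrix (p ∘ X ∘ f) (p ∘ X ∘ f)) (G.submatrix f f)
  have hblow : matrixCutNorm (F.submatrix (p ∘ X ∘ f) (p ∘ X ∘ f) - G.submatrix f f)
      ≤ Fintype.card κ * Fintype.card κ * matrixCutNorm (F.submatrix (p ∘ X) (p ∘ X) - G) :=
    matrixCutNorm_submatrix_le (F.submatrix (p ∘ X) (p ∘ X) - G) blowup blowup
  linarith [overlayDist_le e A G, sq (Fintype.card κ : ℝ)]

end Overlay

section SampledGraph

variable {α ι : Type*} [Fintype α] [Fintype ι]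

lemma expect_sum_abs_card_label_sub_le {P : Type*} [DecidableEq ι] [Nonempty α] [Fintype P]
    [DecidableEq P] {m : ℕ} (hcard : Fintype.card α = Fintype.card ι * m) (p : α → P) :
    𝔼 X : ι → α, ∑ i, |(m * (Finset.univ.filter fun u => p (X u) = i).card : ℝ)
        - (Finset.univ.filter fun x => p x = i).card|
      ≤ Fintype.card P * (m * √(Fintype.card ι)) := by
  have hN : (Fintype.card α : ℝ) ≠ 0 := by exact_mod_cast Fintype.card_ne_zero
  have hcard' : (Fintype.card α : ℝ) = Fintype.card ι * m := by exact_mod_cast hcard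
  have label (i : P) : 𝔼 X : ι → α, |(m * (Finset.univ.filter fun u => p (X u) = i).card : ℝ)
      - (Finset.univ.filter fun x => p x = i).card| ≤ m * √(Fintype.card ι) := by
    have hdev := expect_abs_sum_sub_card_mul_expect_le (ι := ι)
      (c := fun x => if p x = i then (1 : ℝ) else 0) (K := 1) fun x => by split_ifs <;> simp
    simp only [Finset.sum_boole, Fintype.expect_eq_sum_div_card (ι := α), one_mul] at hdev
    calc 𝔼 X : ι → α, |(m * (Finset.univ.filter fun u => p (X u) = i).card : ℝ)
          - (Finset.univ.filter fun x => p x = i).card|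
        = m * 𝔼 X : ι → α, |((Finset.univ.filter fun u => p (X u) = i).card : ℝ)
          - Fintype.card ι * ((Finset.univ.filter fun x => p x = i).card / Fintype.card α)| := by
          rw [Finset.mul_expect]
          refine Finset.expect_congr rfl fun X _ => ?_
          rw [← abs_of_nonneg (Nat.cast_nonneg (α := ℝ) m), ← abs_mul, Nat.abs_cast]
          congr 1
          field_simp
          rw [hcard']
          ring
      _ ≤ m * √(Fintype.card ι) := by gcongr
  rw [Finset.expect_sum_comm]
  exact (Finset.sum_le_sum fun i _ => label i).trans_eq (by simp)

variable [LinearOrder ι]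

/-- The probability that the random graph on `ι` obtained from the weighted graph `A` has edge set
`s`: vertices are mapped to uniform random points of `α`, and the pairs are then joined
independently with the probabilities prescribed by `A`. -/
noncomputable def sampledGraphProb (A : Matrix α α ℝ) (s : Finset (ι × ι)) : ℝ :=
  𝔼 X : ι → α, graphWeight (A.submatrix X X) s

lemma sampledGraphProb_nonneg {A : Matrix α α ℝ} (hA : ∀ x y, A x y ∈ Icc 0 1)
    {s : Finset (ι × ι)} (hs : s ⊆ orderedPairs ι) : 0 ≤ sampledGraphProb A s :=
  Finset.expect_nonneg fun _ _ => graphWeight_nonneg (fun _ _ => hA _ _) hs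

lemma sum_sampledGraphProb [Nonempty α] (A : Matrix α α ℝ) :
    ∑ s ∈ (orderedPairs ι).powerset, sampledGraphProb A s = 1 := by
  simp only [sampledGraphProb, ← Finset.expect_sum_comm, sum_graphWeight, Fintype.expect_const]

variable [Nonempty α] [Nonempty ι] {κ : Type*} [Fintype κ]

lemma expect_sum_graphWeight_mul_matrixCutNorm_le {A : Matrix α α ℝ} (hsymm : A.IsSymm)
    (hA : ∀ x y, A x y ∈ Icc 0 1) (V : Matrix α α ℝ) {l : ℝ} (hl : 0 < l) :
    𝔼 X : ι → α, ∑ s ∈ (orderedPairs ι).powerset, graphWeight (A.submatrix X X) s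
        * matrixCutNorm (V.submatrix X X - edgeMatrix s)
      ≤ (𝔼 X : ι → α, matrixCutNorm ((A - V).submatrix X X))
        + (Fintype.card ι ^ 2 * l + 2 * Fintype.card ι / l ^ 3 + Fintype.card ι) := by
  have sample (X : ι → α) : ∑ s ∈ (orderedPairs ι).powerset, graphWeight (A.submatrix X X) s
        * matrixCutNorm (V.submatrix X X - edgeMatrix s)
      ≤ matrixCutNorm ((A - V).submatrix X X)
        + (Fintype.card ι ^ 2 * l + 2 * Fintype.card ι / l ^ 3 + Fintype.card ι) := by
    calc ∑ s ∈ (orderedPairs ι).powerset, graphWeight (A.submatrix X X) s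
          * matrixCutNorm (V.submatrix X X - edgeMatrix s)
        ≤ ∑ s ∈ (orderedPairs ι).powerset, graphWeight (A.submatrix X X) s
          * (matrixCutNorm ((A - V).submatrix X X)
            + matrixCutNorm (edgeMatrix s - A.submatrix X X)) := by
          refine Finset.sum_le_sum fun s hs => mul_le_mul_of_nonneg_left ?_
            (graphWeight_nonneg (fun _ _ => hA _ _) (Finset.mem_powerset.1 hs))
          have triangle := matrixCutNorm_sub_le (V.submatrix X X) (A.submatrix X X) (edgeMatrix s)
          rwa [matrixCutNorm_sub_comm (V.submatrix X X) (A.submatrix X X),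
            matrixCutNorm_sub_comm (A.submatrix X X) (edgeMatrix s)] at triangle
      _ ≤ _ := by
          simp only [mul_add, Finset.sum_add_distrib, ← Finset.sum_mul, sum_graphWeight, one_mul]
          gcongr
          exact sum_graphWeight_mul_matrixCutNorm_le (hsymm.submatrix X) (fun _ _ => hA _ _) hl
  refine (Finset.expect_le_expect fun X _ => sample X).trans_eq ?_
  rw [Finset.expect_add_distrib, Fintype.expect_const]

lemma sampling_error_le {c w z : ℝ} (hc : 1 ≤ c) (hw : c ^ 2 + 1 ≤ w) (hz : w ^ 3 ≤ z) :
    4 * w * (1 + c) * (z + 2 * c ^ 2 + 1) / z ^ 2 + (1 + c) ^ 2 / (2 * c * z ^ 2) + 1 / w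
      + 2 * w ^ 3 / z ^ 2 + 1 / z ^ 2 + 4 * c * w ^ 2 / z ≤ 18 * c ^ 2 / w := by
  have hw2 : 2 ≤ w := by nlinarith
  have hz0 : 0 < z := lt_of_lt_of_le (by positivity) hz
  have hc2 : c ≤ c ^ 2 := by nlinarith
  have hzw : 4 * w ≤ z := le_trans (by nlinarith [pow_le_pow_left₀ zero_le_two hw2 2]) hz
  have term₁ : 4 * w * (1 + c) * (z + 2 * c ^ 2 + 1) / z ^ 2 ≤ 8 * c ^ 2 / w := by
    rw [div_le_div_iff₀ (by positivity) (by positivity)]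
    calc 4 * w * (1 + c) * (z + 2 * c ^ 2 + 1) * w
        ≤ 4 * w * (2 * c ^ 2) * (2 * z) * w := by gcongr <;> linarith
      _ = 8 * c ^ 2 * z * (2 * w ^ 2) := by ring
      _ ≤ 8 * c ^ 2 * z * (w * w ^ 2) := by gcongr
      _ ≤ 8 * c ^ 2 * z ^ 2 := by nlinarith [mul_le_mul_of_nonneg_left hz (by positivity :
            0 ≤ 8 * c ^ 2 * z)]
  have term₂ : (1 + c) ^ 2 / (2 * c * z ^ 2) ≤ 2 * c ^ 2 / w := by
    rw [div_le_div_iff₀ (by positivity) (by positivity)]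
    calc (1 + c) ^ 2 * w ≤ (2 * c) ^ 2 * z ^ 2 := by gcongr <;> nlinarith
      _ ≤ 2 * c ^ 2 * (2 * c * z ^ 2) := by nlinarith [show 0 ≤ c ^ 2 * z ^ 2 by positivity]
  have term₃ : 1 / w ≤ c ^ 2 / w := by gcongr; nlinarith
  have term₄ : 2 * w ^ 3 / z ^ 2 ≤ 2 * c ^ 2 / w := by
    rw [div_le_div_iff₀ (by positivity) (by positivity)]
    calc 2 * w ^ 3 * w ≤ 2 * z * z := by gcongr; linarith
      _ ≤ 2 * c ^ 2 * z ^ 2 := by nlinarith [show 0 ≤ z ^ 2 by positivity]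
  have term₅ : 1 / z ^ 2 ≤ c ^ 2 / w := by
    gcongr <;> nlinarith
  have term₆ : 4 * c * w ^ 2 / z ≤ 4 * c ^ 2 / w := by
    rw [div_le_div_iff₀ (by positivity) (by positivity)]
    calc 4 * c * w ^ 2 * w = 4 * c * w ^ 3 := by ring
      _ ≤ 4 * c ^ 2 * z := by gcongr
  have total : 18 * c ^ 2 / w = 8 * c ^ 2 / w + 2 * c ^ 2 / w + c ^ 2 / w + 2 * c ^ 2 / w
      + c ^ 2 / w + 4 * c ^ 2 / w := by ring
  linarith

lemma sum_sampledGraphProb_mul_overlayDist_le_add {A : Matrix α α ℝ} (hsymm : A.IsSymm)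
    (hA : ∀ x y, A x y ∈ Icc 0 1) (hcard : Fintype.card α = Fintype.card ι * Fintype.card κ)
    {P : Type*} [Fintype P] {F : Matrix P P ℝ} {K : ℝ} (hF : ∀ i j, |F i j| ≤ K)
    (p : α → P) {l : ℝ} (hl : 0 < l) :
    ∑ s ∈ (orderedPairs ι).powerset, sampledGraphProb A s * overlayDist κ A (edgeMatrix s)
      ≤ matrixCutNorm (A - F.submatrix p p)
        + Fintype.card κ ^ 2 * ((𝔼 X : ι → α, matrixCutNorm ((A - F.submatrix p p).submatrix X X))
          + (Fintype.card ι ^ 2 * l + 2 * Fintype.card ι / l ^ 3 + Fintype.card ι))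
        + 4 * K * (Fintype.card P * (Fintype.card κ * √(Fintype.card ι))) * Fintype.card α := by
  classical
  have hK : 0 ≤ K := Nonempty.elim ‹Nonempty α› fun x => (abs_nonneg _).trans (hF (p x) (p x))
  set freq : (ι → α) → ℝ := fun X => ∑ i, |(Fintype.card κ * (Finset.univ.filter fun u =>
    p (X u) = i).card : ℝ) - (Finset.univ.filter fun x => p x = i).card|
  set V := F.submatrix p p
  calc ∑ s ∈ (orderedPairs ι).powerset, sampledGraphProb A s * overlayDist κ A (edgeMatrix s)
      = 𝔼 X : ι → α, ∑ s ∈ (orderedPairs ι).powerset,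
          graphWeight (A.submatrix X X) s * overlayDist κ A (edgeMatrix s) := by
        simp only [sampledGraphProb, Finset.expect_mul, Finset.expect_sum_comm]
    _ ≤ 𝔼 X : ι → α, ∑ s ∈ (orderedPairs ι).powerset, graphWeight (A.submatrix X X) s *
          (matrixCutNorm (A - V)
            + Fintype.card κ ^ 2 * matrixCutNorm (V.submatrix X X - edgeMatrix s)
            + 4 * K * freq X * Fintype.card α) :=
        Finset.expect_le_expect fun X _ => Finset.sum_le_sum fun s hs =>
          mul_le_mul_of_nonneg_left (overlayDist_le_add hcard A (edgeMatrix s) hF p X)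
            (graphWeight_nonneg (fun _ _ => hA _ _) (Finset.mem_powerset.1 hs))
    _ = matrixCutNorm (A - V)
          + Fintype.card κ ^ 2 * (𝔼 X : ι → α, ∑ s ∈ (orderedPairs ι).powerset,
            graphWeight (A.submatrix X X) s * matrixCutNorm (V.submatrix X X - edgeMatrix s))
          + 4 * K * (𝔼 X : ι → α, freq X) * Fintype.card α := by
        simp only [mul_add, Finset.sum_add_distrib, Finset.expect_add_distrib, ← Finset.sum_mul,
          sum_graphWeight, one_mul, Fintype.expect_const,
          mul_left_comm _ ((Fintype.card κ : ℝ) ^ 2), ← Finset.mul_sum, ← Finset.mul_expect,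
          ← Finset.expect_mul]
    _ ≤ _ := by
        gcongr
        · exact expect_sum_graphWeight_mul_matrixCutNorm_le hsymm hA V hl
        · exact expect_sum_abs_card_label_sub_le hcard p

lemma total_sampling_error_le {r : ℕ} (hr : 0 < r) {k : ℝ} (hk : (64 : ℝ) ^ r ≤ k) (m : ℝ) :
    (k * m) ^ 2 / √r
        + m ^ 2 * (k ^ 2 * (1 / √r) + 2 * (2 ^ r * (2 * (1 + √r) * k * (√k + 2 * r + 1)))
            + (k ^ 2 * 1 + k * (1 + √r) ^ 2 + k ^ 2) / (2 * √r)
          + (k ^ 2 * (1 / 2 ^ r) + 2 * k / (1 / 2 ^ r) ^ 3 + k))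
        + 4 * √r * (4 ^ r * (m * √k)) * (k * m)
      ≤ (k * m) ^ 2 * (3 / √r + 18 * r / 2 ^ r) := by
  have hk0 : 0 < k := lt_of_lt_of_le (by positivity) hk
  have hc : 1 ≤ √(r : ℝ) := Real.one_le_sqrt.2 (by exact_mod_cast hr)
  have hc2 : √(r : ℝ) ^ 2 = r := Real.sq_sqrt r.cast_nonneg
  have hz2 : √k ^ 2 = k := Real.sq_sqrt hk0.le
  have hk' : ((2 : ℝ) ^ r) ^ 6 ≤ k := by
    rwa [← pow_mul, mul_comm, pow_mul, show (2 : ℝ) ^ 6 = 64 by norm_num]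
  have h4 : (4 : ℝ) ^ r = (2 ^ r) ^ 2 := by
    rw [← pow_mul, mul_comm, pow_mul, show (2 : ℝ) ^ 2 = 4 by norm_num]
  have error := sampling_error_le hc (w := 2 ^ r) (z := √k)
    (by rw [hc2]; exact_mod_cast Nat.lt_two_pow_self)
    (Real.le_sqrt_of_sq_le (by rwa [← pow_mul]))
  have hz0 : 0 < √k := Real.sqrt_pos.2 hk0
  rw [h4, ← hz2, ← hc2, Real.sqrt_sq hz0.le, Real.sqrt_sq (by positivity)]
  have hw0 : (0 : ℝ) < 2 ^ r := by positivity
  generalize √(r : ℝ) = c, √k = z, (2 : ℝ) ^ r = w at *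
  refine le_of_eq_of_le ?_
    (mul_le_mul_of_nonneg_left (add_le_add_right error (3 / c)) (sq_nonneg (z ^ 2 * m)))
  have hc0 : c ≠ 0 := by positivity
  field_simp
  ring

/- Compare `A` with a step matrix `F.submatrix p p` that has `4 ^ r` labels: sampling changes its
cut distance to `A` and its label frequencies only slightly, and equal label frequencies allow the
sample to be overlaid on `A`. -/
lemma sum_sampledGraphProb_mul_overlayDist_le {A : Matrix α α ℝ} (hsymm : A.IsSymm)
    (hA : ∀ x y, A x y ∈ Icc 0 1) (hcard : Fintype.card α = Fintype.card ι * Fintype.card κ)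
    {r : ℕ} (hr : 0 < r) (hk : 64 ^ r ≤ Fintype.card ι) :
    ∑ s ∈ (orderedPairs ι).powerset, sampledGraphProb A s * overlayDist κ A (edgeMatrix s)
      ≤ Fintype.card α ^ 2 * (3 / √r + 18 * r / 2 ^ r) := by
  have hA2 : ∑ x, ∑ y, A x y ^ 2 ≤ (Fintype.card α : ℝ) ^ 2 :=
    (Finset.sum_le_sum fun x _ => Finset.sum_le_sum fun y _ =>
      pow_le_one₀ (hA x y).1 (hA x y).2).trans_eq (by simp [sq])
  obtain ⟨p, F, hF, energy, cut⟩ := exists_step_matrix_matrixCutNorm_sub_le hA2 hr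
  have hU (x y : α) : |(A - F.submatrix p p) x y| ≤ 1 + √r :=
    (abs_sub _ _).trans (add_le_add (abs_le.2 ⟨by linarith [(hA x y).1], (hA x y).2⟩) (hF _ _))
  have : (0 : ℝ) < Fintype.card α := by exact_mod_cast Fintype.card_pos
  have energy' : 𝔼 x, 𝔼 y, (A - F.submatrix p p) x y ^ 2 ≤ 1 := by
    simp only [Fintype.expect_eq_sum_div_card, ← Finset.sum_div, div_div, ← sq]
    exact (div_le_one (by positivity)).2 energy
  have cut' : matrixCutNorm (A - F.submatrix p p) / Fintype.card α ^ 2 ≤ 1 / √r := by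
    rw [div_le_iff₀ (by positivity), mul_comm, mul_one_div]
    exact cut
  have sample : 𝔼 X : ι → α, matrixCutNorm ((A - F.submatrix p p).submatrix X X)
      ≤ Fintype.card ι ^ 2 * (1 / √r)
        + 2 * (2 ^ r * (2 * (1 + √r) * Fintype.card ι * (√(Fintype.card ι) + 2 * r + 1)))
        + (Fintype.card ι ^ 2 * 1 + Fintype.card ι * (1 + √r) ^ 2 + Fintype.card ι ^ 2)
          / (2 * √r) :=
    (expect_matrixCutNorm_submatrix_le hU hr).trans (by gcongr)
  have labels : (Fintype.card (Fin r → Bool × Bool) : ℝ) = 4 ^ r := by simp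
  have hNkm : (Fintype.card α : ℝ) = Fintype.card ι * Fintype.card κ := by exact_mod_cast hcard
  refine (sum_sampledGraphProb_mul_overlayDist_le_add hsymm hA hcard hF p
    (l := 1 / 2 ^ r) (by positivity)).trans
      (le_trans ?_ ((total_sampling_error_le hr (k := Fintype.card ι) (by exact_mod_cast hk)
        (Fintype.card κ)).trans_eq (by rw [hNkm])))
  rw [labels, ← hNkm]
  gcongr

end SampledGraph

section MatrixHomDensity

variable {α ι : Type*} [Fintype α] [Fintype ι] [LinearOrder ι]

/-- The homomorphism density in the weighted graph `A` of the graph on `ι` with edge set `s`, each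
edge being listed once as an ordered pair. -/
noncomputable def matrixHomDensity (s : Finset (ι × ι)) (A : Matrix α α ℝ) : ℝ :=
  𝔼 X : ι → α, ∏ p ∈ s, A (X p.1) (X p.2)

lemma sampledGraphProb_eq_sum (A : Matrix α α ℝ) (s : Finset (ι × ι)) :
    sampledGraphProb A s
      = ∑ t ∈ (orderedPairs ι \ s).powerset, (-1) ^ t.card * matrixHomDensity (s ∪ t) A := by
  simp only [sampledGraphProb, graphWeight, bernoulliWeight_eq_sum, matrixHomDensity,
    Finset.expect_sum_comm, Finset.mul_expect, Matrix.submatrix_apply]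

lemma two_mul_card_orderedPairs_add_card :
    2 * (orderedPairs ι).card + Fintype.card ι = Fintype.card ι ^ 2 := by
  have lt : (Finset.univ.offDiag.filter fun p : ι × ι => p.1 < p.2) = orderedPairs ι := by
    ext p
    simpa [mem_orderedPairs] using ne_of_lt
  have gt : (Finset.univ.offDiag.filter fun p : ι × ι => ¬p.1 < p.2).card
      = (orderedPairs ι).card := by
    refine Finset.card_equiv (Equiv.prodComm ι ι) fun p => ?_
    simp only [Finset.mem_filter, Finset.mem_offDiag, Finset.mem_univ, true_and, not_lt,
      mem_orderedPairs, Equiv.prodComm_apply, Prod.fst_swap, Prod.snd_swap]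
    rw [lt_iff_le_and_ne, ne_comm, and_comm]
  have hsplit := Finset.card_filter_add_card_filter_not (s := Finset.univ.offDiag)
    fun p : ι × ι => p.1 < p.2
  rw [lt, gt, Finset.offDiag_card, Finset.card_univ, ← sq] at hsplit
  have := Nat.le_self_pow two_ne_zero (Fintype.card ι)
  omega

lemma sum_abs_sampledGraphProb_sub_le {β : Type*} [Fintype β] {A : Matrix α α ℝ}
    {B : Matrix β β ℝ} {δ : ℝ}
    (h : ∀ s ⊆ orderedPairs ι, |matrixHomDensity s A - matrixHomDensity s B| ≤ δ) :
    ∑ s ∈ (orderedPairs ι).powerset, |sampledGraphProb A s - sampledGraphProb B s|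
      ≤ 4 ^ (orderedPairs ι).card * δ := by
  have hδ : 0 ≤ δ := (abs_nonneg _).trans (h ∅ (Finset.empty_subset _))
  have graph (s : Finset (ι × ι)) (hs : s ⊆ orderedPairs ι) :
      |sampledGraphProb A s - sampledGraphProb B s| ≤ 2 ^ (orderedPairs ι).card * δ := by
    calc |sampledGraphProb A s - sampledGraphProb B s|
        ≤ ∑ t ∈ (orderedPairs ι \ s).powerset,
            |(-1) ^ t.card * (matrixHomDensity (s ∪ t) A - matrixHomDensity (s ∪ t) B)| := by
          simp only [sampledGraphProb_eq_sum, ← Finset.sum_sub_distrib, ← mul_sub]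
          exact Finset.abs_sum_le_sum_abs _ _
      _ ≤ ∑ _t ∈ (orderedPairs ι \ s).powerset, δ := by
          refine Finset.sum_le_sum fun t ht => ?_
          simpa [abs_mul] using h _ (Finset.union_subset hs
            ((Finset.mem_powerset.1 ht).trans Finset.sdiff_subset))
      _ = 2 ^ (orderedPairs ι \ s).card * δ := by simp
      _ ≤ 2 ^ (orderedPairs ι).card * δ := by
          gcongr
          · norm_num
          · exact Finset.sdiff_subset
  refine (Finset.sum_le_sum fun s hs => graph s (Finset.mem_powerset.1 hs)).trans_eq ?_
  rw [Finset.sum_const, Finset.card_powerset, nsmul_eq_mul, ← mul_assoc]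
  push_cast
  rw [← mul_pow]
  norm_num

lemma sum_mul_le_sum_mul_add_sum_abs_sub_mul {γ : Type*} {t : Finset γ} {p q f : γ → ℝ} {K : ℝ}
    (hf : ∀ s ∈ t, f s ∈ Icc 0 K) :
    ∑ s ∈ t, p s * f s ≤ ∑ s ∈ t, q s * f s + (∑ s ∈ t, |p s - q s|) * K := by
  rw [Finset.sum_mul, ← Finset.sum_add_distrib]
  refine Finset.sum_le_sum fun s hs => ?_
  rw [← sub_le_iff_le_add', ← sub_mul]
  exact mul_le_mul (le_abs_self _) (hf s hs).2 (hf s hs).1 (abs_nonneg _)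

/- The two sampled graphs have nearly the same distribution, so some graph `s` is close to both `A`
and `B`. -/
lemma exists_perm_matrixCutNorm_sub_le_of_matrixHomDensity [Nonempty α] [Nonempty ι]
    {A B : Matrix α α ℝ} (hA : A.IsSymm) (hA' : ∀ x y, A x y ∈ Icc 0 1) (hB : B.IsSymm)
    (hB' : ∀ x y, B x y ∈ Icc 0 1) (hdvd : Fintype.card ι ∣ Fintype.card α)
    {r : ℕ} (hr : 0 < r) (hk : 64 ^ r ≤ Fintype.card ι) {δ : ℝ}
    (h : ∀ s ⊆ orderedPairs ι, |matrixHomDensity s A - matrixHomDensity s B| ≤ δ) :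
    ∃ σ : Equiv.Perm α, matrixCutNorm (A - B.submatrix σ σ)
      ≤ Fintype.card α ^ 2 * (6 / √r + 36 * r / 2 ^ r + 4 ^ (orderedPairs ι).card * δ) := by
  obtain ⟨m, hm⟩ := hdvd
  have hcard : Fintype.card α = Fintype.card ι * Fintype.card (Fin m) := by simpa using hm
  have hne : Nonempty (α ≃ ι × Fin m) := ⟨Fintype.equivOfCardEq (by simpa using hm)⟩
  set dA := fun s => overlayDist (Fin m) A (edgeMatrix (ι := ι) s)
  set dB := fun s => overlayDist (Fin m) B (edgeMatrix (ι := ι) s)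
  set N : ℝ := (Fintype.card α : ℝ)
  have hdB (s : Finset (ι × ι)) : dB s ∈ Icc 0 (N ^ 2) :=
    ⟨Real.iInf_nonneg fun _ => matrixCutNorm_nonneg _,
      overlayDist_le_sq_card hne hB' (edgeMatrix_mem_Icc s)⟩
  have cross : ∑ s ∈ (orderedPairs ι).powerset, sampledGraphProb A s * dB s
      ≤ N ^ 2 * (3 / √r + 18 * r / 2 ^ r) + 4 ^ (orderedPairs ι).card * δ * N ^ 2 := by
    refine (sum_mul_le_sum_mul_add_sum_abs_sub_mul (q := sampledGraphProb B)
      fun s _ => hdB s).trans ?_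
    gcongr
    · exact sum_sampledGraphProb_mul_overlayDist_le hB hB' hcard hr hk
    · exact sum_abs_sampledGraphProb_sub_le h
  have average : ∑ s ∈ (orderedPairs ι).powerset, sampledGraphProb A s * (dA s + dB s)
      ≤ N ^ 2 * (6 / √r + 36 * r / 2 ^ r + 4 ^ (orderedPairs ι).card * δ) := by
    have hdA := sum_sampledGraphProb_mul_overlayDist_le (ι := ι) hA hA' hcard hr hk
    simp only [mul_add, Finset.sum_add_distrib]
    refine (add_le_add hdA cross).trans_eq ?_
    ring
  obtain ⟨s, -, hs⟩ := (concaveOn_id convex_univ).exists_le_of_centerMass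
    (t := (orderedPairs ι).powerset) (w := sampledGraphProb A) (p := fun s => dA s + dB s)
    (fun s hs => sampledGraphProb_nonneg hA' (Finset.mem_powerset.1 hs))
    (by rw [sum_sampledGraphProb]; exact one_pos) (fun _ _ => mem_univ _)
  rw [Finset.centerMass, sum_sampledGraphProb, inv_one, one_smul] at hs
  obtain ⟨σ, hσ⟩ := exists_perm_matrixCutNorm_sub_le (κ := Fin m) A B (edgeMatrix s)
  exact ⟨σ, (hσ.trans hs).trans average⟩

end MatrixHomDensity

instance : IsProbabilityMeasure μ01 := ⟨by simp⟩

lemma ae_mem_Ico_μ01 : ∀ᵐ x ∂μ01, x ∈ Ico (0 : ℝ) 1 := by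
  rw [μ01, ← restrict_Ico_eq_restrict_Icc]
  exact ae_restrict_mem measurableSet_Ico

section Grid

/-- The index `i` of the interval `[i/N, (i+1)/N)` that contains a point `x ∈ [0,1)`; it carries no
information for `x` outside `[0,1)`. -/
noncomputable def gridIndex (N : ℕ) [NeZero N] (x : ℝ) : Fin N := Fin.ofNat N ⌊(N : ℝ) * x⌋₊

/-- The `i`-th interval of the division of `[0,1)` into `N` intervals of length `1/N`. -/
def gridCell {N : ℕ} (i : Fin N) : Set ℝ := Ico ((i : ℝ) / N) ((i + 1) / N)

lemma gridCell_subset_Ico {N : ℕ} (i : Fin N) : gridCell i ⊆ Ico 0 1 := by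
  have hN : (0 : ℝ) < N := Nat.cast_pos.2 i.pos
  refine Ico_subset_Ico (by positivity) ((div_le_one hN).2 ?_)
  exact_mod_cast i.is_lt

lemma volume_gridCell {N : ℕ} (i : Fin N) : volume (gridCell i) = (N : ENNReal)⁻¹ := by
  rw [gridCell, Real.volume_Ico, ← sub_div, add_sub_cancel_left, one_div,
    ENNReal.ofReal_inv_of_pos (Nat.cast_pos.2 i.pos), ENNReal.ofReal_natCast]

lemma add_div_mem_gridCell_iff {N : ℕ} {i j : Fin N} {x : ℝ} :
    x + ((j : ℝ) - i) / N ∈ gridCell j ↔ x ∈ gridCell i := by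
  simp only [gridCell, mem_Ico, sub_div, add_div]
  constructor <;> rintro ⟨_, _⟩ <;> constructor <;> linarith

variable {N : ℕ} [NeZero N]

lemma gridIndex_eq_iff {x : ℝ} (hx : x ∈ Ico (0 : ℝ) 1) {i : Fin N} :
    gridIndex N x = i ↔ x ∈ gridCell i := by
  have hN : (0 : ℝ) < N := Nat.cast_pos.2 i.pos
  have hNx : 0 ≤ (N : ℝ) * x := mul_nonneg hN.le hx.1
  have hlt : ⌊(N : ℝ) * x⌋₊ < N := (Nat.floor_lt hNx).2 (mul_lt_of_lt_one_right hN hx.2)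
  rw [Fin.ext_iff, gridIndex, Fin.val_ofNat, Nat.mod_eq_of_lt hlt, Nat.floor_eq_iff hNx, gridCell,
    mem_Ico, div_le_iff₀ hN, lt_div_iff₀ hN, mul_comm x]

lemma mem_gridCell_gridIndex {x : ℝ} (hx : x ∈ Ico (0 : ℝ) 1) : x ∈ gridCell (gridIndex N x) :=
  (gridIndex_eq_iff hx).1 rfl

lemma gridIndex_of_mem {x : ℝ} {i : Fin N} (hx : x ∈ gridCell i) : gridIndex N x = i :=
  (gridIndex_eq_iff (gridCell_subset_Ico i hx)).2 hx

lemma dist_gridIndex_div_le {x : ℝ} (hx : x ∈ Ico (0 : ℝ) 1) :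
    dist x (gridIndex N x / N) ≤ 1 / N := by
  obtain ⟨hl, hr⟩ := mem_gridCell_gridIndex (N := N) hx
  rw [Real.dist_eq, abs_of_nonneg (sub_nonneg.2 hl)]
  rw [add_div] at hr
  linarith

lemma measurable_gridIndex : Measurable (gridIndex N) :=
  (measurable_of_countable (Fin.ofNat N)).comp (by fun_prop)

lemma μ01_inter_gridIndex_preimage (S : Set ℝ) (i : Fin N) :
    μ01 (S ∩ gridIndex N ⁻¹' {i}) = volume (S ∩ gridCell i) := by
  have ae : (S ∩ gridIndex N ⁻¹' {i} : Set ℝ) =ᵐ[μ01] (S ∩ gridCell i : Set ℝ) := by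
    filter_upwards [ae_mem_Ico_μ01] with x hx
    exact propext (and_congr_right fun _ => gridIndex_eq_iff hx)
  rw [measure_congr ae, Measure.restrict_apply' measurableSet_Icc, inter_eq_left.2]
  exact inter_subset_right.trans ((gridCell_subset_Ico i).trans Ico_subset_Icc_self)

lemma map_gridIndex_singleton (i : Fin N) : μ01.map (gridIndex N) {i} = (N : ENNReal)⁻¹ := by
  rw [Measure.map_apply measurable_gridIndex (measurableSet_singleton i),
    ← univ_inter (gridIndex N ⁻¹' {i}), μ01_inter_gridIndex_preimage, univ_inter, volume_gridCell]

lemma μ01_eq_sum_volume_gridCell (S : Set ℝ) : μ01 S = ∑ i : Fin N, volume (S ∩ gridCell i) := by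
  have hi (i : Fin N) : MeasurableSet (gridIndex N ⁻¹' {i}) :=
    measurable_gridIndex (measurableSet_singleton i)
  have total := sum_measure_preimage_singleton (μ := μ01.restrict S) (f := gridIndex N)
    Finset.univ fun i _ => hi i
  rw [Finset.coe_univ, preimage_univ, Measure.restrict_apply_univ] at total
  rw [← total]
  refine Finset.sum_congr rfl fun i _ => ?_
  rw [Measure.restrict_apply (hi i), inter_comm, μ01_inter_gridIndex_preimage]

lemma setIntegral_comp_gridIndex (S : Set ℝ) (f : Fin N → ℝ) :
    ∫ x in S, f (gridIndex N x) ∂μ01 = (fun i => volume.real (S ∩ gridCell i)) ⬝ᵥ f := by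
  rw [← integral_map measurable_gridIndex.aemeasurable
    (measurable_of_finite f).aestronglyMeasurable, integral_fintype Integrable.of_finite]
  refine Finset.sum_congr rfl fun i _ => ?_
  have hi := measurableSet_singleton i
  rw [smul_eq_mul, map_measureReal_apply measurable_gridIndex hi,
    measureReal_restrict_apply (measurable_gridIndex hi), inter_comm, measureReal_def,
    μ01_inter_gridIndex_preimage]
  rfl

lemma integral_pi_comp_gridIndex {ι : Type*} [Fintype ι] [DecidableEq ι] (f : (ι → Fin N) → ℝ) :
    ∫ x : ι → ℝ, f (fun u => gridIndex N (x u)) ∂(Measure.pi fun _ => μ01)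
      = 𝔼 X : ι → Fin N, f X := by
  have hm : Measurable fun (x : ι → ℝ) u => gridIndex N (x u) :=
    measurable_pi_lambda _ fun u => measurable_gridIndex.comp (measurable_pi_apply u)
  have : IsProbabilityMeasure (μ01.map (gridIndex N)) :=
    Measure.isProbabilityMeasure_map measurable_gridIndex.aemeasurable
  have law : (Measure.pi fun _ : ι => μ01).map (fun x u => gridIndex N (x u))
      = Measure.pi fun _ => μ01.map (gridIndex N) :=
    Measure.pi_map_pi fun _ => measurable_gridIndex.aemeasurable
  rw [← integral_map hm.aemeasurable (measurable_of_finite f).aestronglyMeasurable, law,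
    integral_fintype Integrable.of_finite, Fintype.expect_eq_sum_div_card, Finset.sum_div]
  refine Finset.sum_congr rfl fun X _ => ?_
  rw [measureReal_def, Measure.pi_singleton]
  simp [map_gridIndex_singleton, div_eq_inv_mul]

/-- The map of `[0,1]` that translates the `i`-th interval of the division of `[0,1)` into `N`
intervals of length `1/N` onto the `σ i`-th one. -/
noncomputable def gridPerm (σ : Equiv.Perm (Fin N)) : ℝ → ℝ :=
  (Ico 0 1).piecewise (fun x => x + ((σ (gridIndex N x) : ℝ) - gridIndex N x) / N) id

lemma gridPerm_of_mem_Ico (σ : Equiv.Perm (Fin N)) {x : ℝ} (hx : x ∈ Ico (0 : ℝ) 1) :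
    gridPerm σ x = x + ((σ (gridIndex N x) : ℝ) - gridIndex N x) / N :=
  piecewise_eq_of_mem _ _ _ hx

lemma gridPerm_of_notMem_Ico (σ : Equiv.Perm (Fin N)) {x : ℝ} (hx : x ∉ Ico (0 : ℝ) 1) :
    gridPerm σ x = x :=
  piecewise_eq_of_notMem _ _ _ hx

lemma gridPerm_mem_gridCell (σ : Equiv.Perm (Fin N)) {x : ℝ} (hx : x ∈ Ico (0 : ℝ) 1) :
    gridPerm σ x ∈ gridCell (σ (gridIndex N x)) := by
  rw [gridPerm_of_mem_Ico σ hx, add_div_mem_gridCell_iff]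
  exact mem_gridCell_gridIndex hx

lemma gridIndex_gridPerm (σ : Equiv.Perm (Fin N)) {x : ℝ} (hx : x ∈ Ico (0 : ℝ) 1) :
    gridIndex N (gridPerm σ x) = σ (gridIndex N x) :=
  gridIndex_of_mem (gridPerm_mem_gridCell σ hx)

lemma gridPerm_symm_leftInverse (σ : Equiv.Perm (Fin N)) :
    Function.LeftInverse (gridPerm σ.symm) (gridPerm σ) := by
  intro x
  by_cases hx : x ∈ Ico (0 : ℝ) 1
  · rw [gridPerm_of_mem_Ico _ (gridCell_subset_Ico _ (gridPerm_mem_gridCell σ hx)),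
      gridIndex_gridPerm σ hx, gridPerm_of_mem_Ico σ hx, Equiv.symm_apply_apply]
    ring
  · rw [gridPerm_of_notMem_Ico σ hx, gridPerm_of_notMem_Ico _ hx]

lemma gridPerm_mapsTo (σ : Equiv.Perm (Fin N)) : MapsTo (gridPerm σ) (Icc 0 1) (Icc 0 1) := by
  intro x hx
  by_cases h : x ∈ Ico (0 : ℝ) 1
  · exact Ico_subset_Icc_self (gridCell_subset_Ico _ (gridPerm_mem_gridCell σ h))
  · rwa [gridPerm_of_notMem_Ico σ h]

lemma measurable_gridPerm (σ : Equiv.Perm (Fin N)) : Measurable (gridPerm σ) := by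
  have shift : Measurable fun i : Fin N => ((σ i : ℝ) - i) / N := measurable_of_finite _
  exact (measurable_id.add (shift.comp measurable_gridIndex)).piecewise measurableSet_Ico
    measurable_id

lemma measurePreserving_gridPerm (σ : Equiv.Perm (Fin N)) :
    MeasurePreserving (gridPerm σ) μ01 μ01 := by
  refine ⟨measurable_gridPerm σ, Measure.ext fun S hS => ?_⟩
  rw [Measure.map_apply (measurable_gridPerm σ) hS, μ01_eq_sum_volume_gridCell (N := N),
    μ01_eq_sum_volume_gridCell (N := N) S, ← Equiv.sum_comp σ fun i => volume (S ∩ gridCell i)]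
  refine Finset.sum_congr rfl fun i _ => ?_
  have translate : gridPerm σ ⁻¹' S ∩ gridCell i
      = (fun x => x + ((σ i : ℝ) - i) / N) ⁻¹' (S ∩ gridCell (σ i)) := by
    ext x
    rw [mem_preimage, mem_inter_iff, mem_inter_iff, add_div_mem_gridCell_iff]
    refine and_congr_left fun hx => ?_
    rw [mem_preimage, gridPerm_of_mem_Ico σ (gridCell_subset_Ico i hx), gridIndex_of_mem hx]
  rw [translate, measure_preimage_add_right]

lemma isInvMeasurePreserving_gridPerm (σ : Equiv.Perm (Fin N)) :
    IsInvMeasurePreserving (gridPerm σ) :=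
  ⟨gridPerm_mapsTo σ, measurePreserving_gridPerm σ, gridPerm σ.symm, gridPerm_mapsTo _,
    measurePreserving_gridPerm _, fun x _ => gridPerm_symm_leftInverse σ x,
    fun x _ => gridPerm_symm_leftInverse σ.symm x⟩

end Grid

/-- The distance of two kernels in `L¹([0,1]²)`. -/
noncomputable def l1Dist (U W : ℝ → ℝ → ℝ) : ℝ :=
  ∫ z, |U z.1 z.2 - W z.1 z.2| ∂μ01.prod μ01

section CutNorm

variable {U W : ℝ → ℝ → ℝ}

lemma setIntegral_setIntegral_eq (hU : Integrable (Function.uncurry U) (μ01.prod μ01)) {S T : Set ℝ}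
    (hS : MeasurableSet S) (hT : MeasurableSet T) (hS₁ : S ⊆ Icc 0 1) (hT₁ : T ⊆ Icc 0 1) :
    ∫ x in S, ∫ y in T, U x y = ∫ z in S ×ˢ T, Function.uncurry U z ∂μ01.prod μ01 := by
  rw [setIntegral_prod _ hU.integrableOn, Measure.restrict_restrict hS,
    Measure.restrict_restrict hT, inter_eq_left.2 hS₁, inter_eq_left.2 hT₁]
  rfl

lemma abs_setIntegral_setIntegral_le (hU : Integrable (Function.uncurry U) (μ01.prod μ01))
    {S T : Set ℝ} (hS : MeasurableSet S) (hT : MeasurableSet T) (hS₁ : S ⊆ Icc 0 1)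
    (hT₁ : T ⊆ Icc 0 1) :
    |∫ x in S, ∫ y in T, U x y| ≤ ∫ z, |Function.uncurry U z| ∂μ01.prod μ01 := by
  rw [setIntegral_setIntegral_eq hU hS hT hS₁ hT₁]
  exact abs_integral_le_integral_abs.trans
    (setIntegral_le_integral hU.abs (Eventually.of_forall fun z => abs_nonneg _))

lemma cutNorm_nonneg (U : ℝ → ℝ → ℝ) : 0 ≤ cutNorm U := by
  refine Real.sSup_nonneg ?_
  rintro _ ⟨S, T, _, _, _, _, rfl⟩
  exact abs_nonneg _

lemma cutNorm_le {c : ℝ} (hc : 0 ≤ c)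
    (h : ∀ S T, MeasurableSet S → MeasurableSet T → S ⊆ Icc 0 1 → T ⊆ Icc 0 1 →
      |∫ x in S, ∫ y in T, U x y| ≤ c) : cutNorm U ≤ c := by
  refine Real.sSup_le ?_ hc
  rintro _ ⟨S, T, hS, hT, hS₁, hT₁, rfl⟩
  exact h S T hS hT hS₁ hT₁

lemma abs_setIntegral_setIntegral_le_cutNorm
    (hU : Integrable (Function.uncurry U) (μ01.prod μ01)) {S T : Set ℝ}
    (hS : MeasurableSet S) (hT : MeasurableSet T) (hS₁ : S ⊆ Icc 0 1) (hT₁ : T ⊆ Icc 0 1) :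
    |∫ x in S, ∫ y in T, U x y| ≤ cutNorm U := by
  refine le_csSup ⟨∫ z, |Function.uncurry U z| ∂μ01.prod μ01, ?_⟩
    ⟨S, T, hS, hT, hS₁, hT₁, rfl⟩
  rintro _ ⟨S', T', hS', hT', hS₁', hT₁', rfl⟩
  exact abs_setIntegral_setIntegral_le hU hS' hT' hS₁' hT₁'

lemma cutNorm_le_add_l1Dist (hU : Integrable (Function.uncurry U) (μ01.prod μ01))
    (hW : Integrable (Function.uncurry W) (μ01.prod μ01)) :
    cutNorm U ≤ cutNorm W + l1Dist U W := by
  refine cutNorm_le (add_nonneg (cutNorm_nonneg W) (integral_nonneg fun z => abs_nonneg _))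
    fun S T hS hT hS₁ hT₁ => ?_
  have hUW : Integrable (Function.uncurry fun x y => U x y - W x y) (μ01.prod μ01) := hU.sub hW
  have split : ∫ x in S, ∫ y in T, U x y
      = (∫ x in S, ∫ y in T, W x y) + ∫ x in S, ∫ y in T, (U x y - W x y) := by
    rw [setIntegral_setIntegral_eq hU hS hT hS₁ hT₁, setIntegral_setIntegral_eq hW hS hT hS₁ hT₁,
      setIntegral_setIntegral_eq hUW hS hT hS₁ hT₁,
      ← integral_add hW.integrableOn hUW.integrableOn]
    exact integral_congr_ae (Eventually.of_forall fun z => (add_sub_cancel _ _).symm)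
  rw [split]
  exact (abs_add_le _ _).trans (add_le_add
    (abs_setIntegral_setIntegral_le_cutNorm hW hS hT hS₁ hT₁)
    (abs_setIntegral_setIntegral_le hUW hS hT hS₁ hT₁))

lemma cutDist_le {φ : ℝ → ℝ} (hφ : IsInvMeasurePreserving φ) :
    cutDist U W ≤ cutNorm fun x y => U x y - W (φ x) (φ y) := by
  refine csInf_le ⟨0, ?_⟩ ⟨φ, hφ, rfl⟩
  rintro _ ⟨ψ, _, rfl⟩
  exact cutNorm_nonneg _

lemma isInvMeasurePreserving_id : IsInvMeasurePreserving id :=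
  ⟨mapsTo_id _, .id _, id, mapsTo_id _, .id _, fun _ _ => rfl, fun _ _ => rfl⟩

end CutNorm

section Graphon

variable {U W V : ℝ → ℝ → ℝ}

lemma IsGraphon.integrable (hU : IsGraphon U) : Integrable (Function.uncurry U) (μ01.prod μ01) :=
  .of_mem_Icc 0 1 hU.1.aemeasurable (Eventually.of_forall fun z => hU.2.2 z.1 z.2)

lemma IsGraphon.comp (hU : IsGraphon U) {φ : ℝ → ℝ} (hφ : Measurable φ) :
    IsGraphon fun x y => U (φ x) (φ y) :=
  ⟨hU.1.comp (hφ.prodMap hφ), fun _ _ => hU.2.1 _ _, fun _ _ => hU.2.2 _ _⟩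

lemma l1Dist_comm (U W : ℝ → ℝ → ℝ) : l1Dist U W = l1Dist W U := by
  simp only [l1Dist, abs_sub_comm]

lemma l1Dist_triangle (hU : IsGraphon U) (hV : IsGraphon V) (hW : IsGraphon W) :
    l1Dist U W ≤ l1Dist U V + l1Dist V W := by
  have hUV := (hU.integrable.sub hV.integrable).abs
  have hVW := (hV.integrable.sub hW.integrable).abs
  exact (integral_mono (hU.integrable.sub hW.integrable).abs (hUV.add hVW)
    fun z => abs_sub_le _ _ _).trans_eq (integral_add hUV hVW)

lemma l1Dist_le_of_ae {c : ℝ} (h : ∀ᵐ z ∂μ01.prod μ01, |U z.1 z.2 - W z.1 z.2| ≤ c) :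
    l1Dist U W ≤ c := by
  exact (integral_mono_of_nonneg (Eventually.of_forall fun z => abs_nonneg _)
    (integrable_const c) h).trans_eq (by simp)

lemma l1Dist_comp (hU : IsGraphon U) (hW : IsGraphon W) {φ : ℝ → ℝ}
    (hφ : MeasurePreserving φ μ01 μ01) :
    l1Dist (fun x y => U (φ x) (φ y)) (fun x y => W (φ x) (φ y)) = l1Dist U W := by
  have hφφ := hφ.prod hφ
  have meas : AEStronglyMeasurable (fun z : ℝ × ℝ => |U z.1 z.2 - W z.1 z.2|)
      ((μ01.prod μ01).map (Prod.map φ φ)) := (hU.1.sub hW.1).abs.aestronglyMeasurable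
  exact (integral_map hφφ.measurable.aemeasurable meas).symm.trans (by rw [hφφ.map_eq, l1Dist])

theorem cutDist_le_one (hU : IsGraphon U) (hW : IsGraphon W) : cutDist U W ≤ 1 := by
  refine (cutDist_le isInvMeasurePreserving_id).trans
    (cutNorm_le zero_le_one fun S T hS hT hS₁ hT₁ => ?_)
  have hUW : Integrable (Function.uncurry fun x y => U x y - W x y) (μ01.prod μ01) :=
    hU.integrable.sub hW.integrable
  exact (abs_setIntegral_setIntegral_le hUW hS hT hS₁ hT₁).trans (l1Dist_le_of_ae
    (Eventually.of_forall fun z => Real.dist_le_of_mem_Icc_01 (hU.2.2 _ _) (hW.2.2 _ _)))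

end Graphon

section StepKernel

variable {N : ℕ} [NeZero N]

/-- The kernel that takes the constant value `A i j` on the product of the `i`-th and the `j`-th
interval of the division of `[0,1)` into `N` intervals of equal length. -/
noncomputable def stepKernel (A : Matrix (Fin N) (Fin N) ℝ) (x y : ℝ) : ℝ :=
  A (gridIndex N x) (gridIndex N y)

lemma measurable_stepKernel (A : Matrix (Fin N) (Fin N) ℝ) :
    Measurable (Function.uncurry (stepKernel A)) :=
  (measurable_of_finite (Function.uncurry A)).comp
    (measurable_gridIndex.prodMap measurable_gridIndex)

lemma isGraphon_stepKernel {A : Matrix (Fin N) (Fin N) ℝ} (hA : A.IsSymm)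
    (hA' : ∀ i j, A i j ∈ Icc (0 : ℝ) 1) : IsGraphon (stepKernel A) :=
  ⟨measurable_stepKernel A, fun _ _ => (hA.apply _ _).symm, fun _ _ => hA' _ _⟩

lemma cutNorm_stepKernel_le (A : Matrix (Fin N) (Fin N) ℝ) :
    cutNorm (stepKernel A) ≤ matrixCutNorm A / N ^ 2 := by
  refine cutNorm_le (div_nonneg (matrixCutNorm_nonneg A) (by positivity))
    fun S T hS hT hS₁ hT₁ => ?_
  have hmem (S : Set ℝ) (i : Fin N) : volume.real (S ∩ gridCell i) ∈ Icc 0 (N : ℝ)⁻¹ := by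
    refine ⟨measureReal_nonneg, (measureReal_mono inter_subset_right ?_).trans_eq ?_⟩
    · simp [volume_gridCell, NeZero.ne N]
    · simp [measureReal_def, volume_gridCell]
  have bilinear : ∫ x in S, ∫ y in T, stepKernel A x y
      = (fun i => volume.real (S ∩ gridCell i)) ⬝ᵥ
        A.mulVec fun j => volume.real (T ∩ gridCell j) := by
    rw [← inter_eq_left.2 hS₁, ← inter_eq_left.2 hT₁, ← Measure.restrict_restrict hS,
      ← Measure.restrict_restrict hT, inter_eq_left.2 hS₁, inter_eq_left.2 hT₁,
      ← setIntegral_comp_gridIndex]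
    refine integral_congr_ae (Eventually.of_forall fun x => ?_)
    exact (setIntegral_comp_gridIndex T _).trans (dotProduct_comm _ _)
  rw [bilinear]
  refine (abs_dotProduct_mulVec_le A (by positivity) (by positivity) (hmem S) (hmem T)).trans_eq ?_
  rw [← sq, inv_pow, inv_mul_eq_div]

lemma ae_stepKernel_sub_submatrix (A B : Matrix (Fin N) (Fin N) ℝ) (σ : Equiv.Perm (Fin N)) :
    ∀ᵐ z ∂μ01.prod μ01, stepKernel (A - B.submatrix σ σ) z.1 z.2
      = stepKernel A z.1 z.2 - stepKernel B (gridPerm σ z.1) (gridPerm σ z.2) := by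
  filter_upwards [Measure.quasiMeasurePreserving_fst.ae ae_mem_Ico_μ01,
    Measure.quasiMeasurePreserving_snd.ae ae_mem_Ico_μ01] with z hx hy
  simp only [stepKernel, gridIndex_gridPerm σ hx, gridIndex_gridPerm σ hy, Matrix.sub_apply,
    Matrix.submatrix_apply]

theorem cutDist_le_matrixCutNorm_add_l1Dist {U W : ℝ → ℝ → ℝ} (hU : IsGraphon U)
    (hW : IsGraphon W) {A B : Matrix (Fin N) (Fin N) ℝ} (hA : IsGraphon (stepKernel A))
    (hB : IsGraphon (stepKernel B)) (σ : Equiv.Perm (Fin N)) :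
    cutDist U W ≤ matrixCutNorm (A - B.submatrix σ σ) / N ^ 2
      + (l1Dist U (stepKernel A) + l1Dist W (stepKernel B)) := by
  set φ := gridPerm σ
  have hφ : MeasurePreserving φ μ01 μ01 := measurePreserving_gridPerm σ
  have hWφ := hW.comp hφ.measurable
  have hBφ := hB.comp hφ.measurable
  have hUA := (hU.integrable.sub hA.integrable).abs
  have hWB := (hWφ.integrable.sub hBφ.integrable).abs
  have hAB : Integrable (Function.uncurry (stepKernel (A - B.submatrix σ σ))) (μ01.prod μ01) :=
    (hA.integrable.sub hBφ.integrable).congr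
      ((ae_stepKernel_sub_submatrix A B σ).mono fun _ hz => hz.symm)
  have close : l1Dist (fun x y => U x y - W (φ x) (φ y)) (stepKernel (A - B.submatrix σ σ))
      ≤ l1Dist U (stepKernel A) + l1Dist W (stepKernel B) := by
    rw [← l1Dist_comp hW hB hφ]
    refine (integral_mono_of_nonneg (Eventually.of_forall fun z => abs_nonneg _) (hUA.add hWB)
      ?_).trans_eq (integral_add hUA hWB)
    filter_upwards [ae_stepKernel_sub_submatrix A B σ] with z hz
    rw [hz, sub_sub_sub_comm]
    exact abs_sub _ _
  calc cutDist U W ≤ cutNorm fun x y => U x y - W (φ x) (φ y) :=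
        cutDist_le (isInvMeasurePreserving_gridPerm σ)
    _ ≤ cutNorm (stepKernel (A - B.submatrix σ σ)) + _ :=
        cutNorm_le_add_l1Dist (hU.integrable.sub hWφ.integrable) hAB
    _ ≤ _ := add_le_add (cutNorm_stepKernel_le _) close

end StepKernel

section Approximation

variable {U V : ℝ → ℝ → ℝ}

lemma abs_sub_projIcc_le {a b u : ℝ} (hab : a ≤ b) (hu : u ∈ Icc a b) (t : ℝ) :
    |u - projIcc a b hab t| ≤ |u - t| := by
  simpa only [projIcc_of_mem hab hu] using abs_projIcc_sub_projIcc hab (c := u) (d := t)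

lemma IsGraphon.exists_uniformContinuous_l1Dist_le (hU : IsGraphon U) {ε : ℝ} (hε : 0 < ε) :
    ∃ V, IsGraphon V ∧ UniformContinuous (Function.uncurry V) ∧ l1Dist U V ≤ ε := by
  obtain ⟨g, hgc, hUg, hgcont, hg⟩ :=
    hU.integrable.exists_hasCompactSupport_integral_sub_le hε
  have hgu := hgc.uniformContinuous_of_continuous hgcont
  have hd := (hU.integrable.sub hg).abs
  set V : ℝ → ℝ → ℝ := fun x y => projIcc 0 1 zero_le_one (2⁻¹ * (g (x, y) + g (y, x)))
  have hV : UniformContinuous (Function.uncurry V) :=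
    uniformContinuous_subtype_val.comp <| (LipschitzWith.projIcc _).uniformContinuous.comp <|
      (hgu.add (hgu.comp (uniformContinuous_snd.prodMk uniformContinuous_fst))).const_mul' 2⁻¹
  have symmetrize (x y : ℝ) : |U x y - V x y|
      ≤ 2⁻¹ * (|U x y - g (x, y)| + |U y x - g (y, x)|) := by
    refine (abs_sub_projIcc_le zero_le_one (hU.2.2 x y) _).trans ?_
    rw [hU.2.1 y x]
    have average : U x y - 2⁻¹ * (g (x, y) + g (y, x))
        = 2⁻¹ * ((U x y - g (x, y)) + (U x y - g (y, x))) := by ring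
    rw [average, abs_mul, abs_of_pos (inv_pos.2 zero_lt_two)]
    gcongr
    exact abs_add_le _ _
  have hVg : IsGraphon V :=
    ⟨hV.continuous.measurable, fun x y => by simp only [V, add_comm], fun _ _ => Subtype.prop _⟩
  refine ⟨V, hVg, hV, ?_⟩
  calc l1Dist U V ≤ ∫ z, 2⁻¹ * (|U z.1 z.2 - g z| + |U z.2 z.1 - g z.swap|) ∂μ01.prod μ01 :=
        integral_mono (hU.integrable.sub hVg.integrable).abs ((hd.add hd.swap).const_mul _)
          fun z => symmetrize z.1 z.2
    _ = 2⁻¹ * ((∫ z, |Function.uncurry U z - g z| ∂μ01.prod μ01)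
          + ∫ z, |Function.uncurry U z.swap - g z.swap| ∂μ01.prod μ01) := by
        rw [integral_const_mul]
        exact congr_arg _ (integral_add hd hd.swap)
    _ = ∫ z, |Function.uncurry U z - g z| ∂μ01.prod μ01 := by
        rw [integral_prod_swap fun z => |Function.uncurry U z - g z|]
        ring
    _ ≤ ε := hUg

lemma eventually_l1Dist_stepKernel_le (hV : UniformContinuous (Function.uncurry V)) {ε : ℝ}
    (hε : 0 < ε) : ∀ᶠ N : ℕ in atTop, ∀ [NeZero N],
      l1Dist V (stepKernel (Matrix.of fun i j : Fin N => V (i / N) (j / N))) ≤ ε := by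
  obtain ⟨δ, hδ, hVδ⟩ := Metric.uniformContinuous_iff.1 hV ε hε
  filter_upwards [(tendsto_one_div_atTop_nhds_zero_nat (𝕜 := ℝ)).eventually_lt_const hδ]
    with N hN _
  refine l1Dist_le_of_ae ?_
  filter_upwards [Measure.quasiMeasurePreserving_fst.ae ae_mem_Ico_μ01,
    Measure.quasiMeasurePreserving_snd.ae ae_mem_Ico_μ01] with z hx hy
  have near : dist z ((gridIndex N z.1 : ℝ) / N, (gridIndex N z.2 : ℝ) / N) < δ :=
    max_lt ((dist_gridIndex_div_le hx).trans_lt hN) ((dist_gridIndex_div_le hy).trans_lt hN)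
  exact (hVδ near).le

lemma IsGraphon.eventually_exists_l1Dist_stepKernel_le (hU : IsGraphon U) {ε : ℝ} (hε : 0 < ε) :
    ∀ᶠ N : ℕ in atTop, ∀ [NeZero N], ∃ A : Matrix (Fin N) (Fin N) ℝ, A.IsSymm ∧
      (∀ i j, A i j ∈ Icc (0 : ℝ) 1) ∧ l1Dist U (stepKernel A) ≤ ε := by
  obtain ⟨V, hV, hVu, hUV⟩ := hU.exists_uniformContinuous_l1Dist_le (half_pos hε)
  filter_upwards [eventually_l1Dist_stepKernel_le hVu (half_pos hε)] with N hN _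
  set A : Matrix (Fin N) (Fin N) ℝ := Matrix.of fun i j => V (i / N) (j / N)
  have hA : A.IsSymm := Matrix.IsSymm.ext fun i j => hV.2.1 _ _
  have hA' (i j : Fin N) : A i j ∈ Icc (0 : ℝ) 1 := hV.2.2 _ _
  refine ⟨A, hA, hA', ?_⟩
  linarith [l1Dist_triangle hU hV (isGraphon_stepKernel hA hA'), hN]

end Approximation

section Counting

lemma measurePreserving_eval_prodMk {ι : Type*} [Fintype ι] {Ω : ι → Type*}
    [∀ i, MeasurableSpace (Ω i)] (μ : ∀ i, Measure (Ω i)) [∀ i, IsProbabilityMeasure (μ i)]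
    {i j : ι} (hij : i ≠ j) :
    MeasurePreserving (fun x : ∀ i, Ω i => (x i, x j)) (Measure.pi μ) ((μ i).prod (μ j)) := by
  have indep : ProbabilityTheory.IndepFun (fun x : ∀ i, Ω i => x i) (fun x => x j)
      (Measure.pi μ) :=
    (ProbabilityTheory.iIndepFun_pi (X := fun _ => id) fun _ => aemeasurable_id).indepFun hij
  refine ⟨by fun_prop, ?_⟩
  rw [(ProbabilityTheory.indepFun_iff_map_prod_eq_prod_map_map
    (measurable_pi_apply i).aemeasurable (measurable_pi_apply j).aemeasurable).1 indep,
    (measurePreserving_eval μ i).map_eq, (measurePreserving_eval μ j).map_eq]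

lemma abs_prod_sub_prod_le_sum {ι : Type*} (s : Finset ι) {a b : ι → ℝ}
    (ha : ∀ i, a i ∈ Icc (0 : ℝ) 1) (hb : ∀ i, b i ∈ Icc (0 : ℝ) 1) :
    |∏ i ∈ s, a i - ∏ i ∈ s, b i| ≤ ∑ i ∈ s, |a i - b i| := by
  induction s using Finset.cons_induction with
  | empty => simp
  | cons i s hi ih =>
    have hprod : |∏ i ∈ s, a i| ≤ 1 := by
      rw [Finset.abs_prod]
      exact Finset.prod_le_one (fun _ _ => abs_nonneg _) fun i _ =>
        (abs_of_nonneg (ha i).1).trans_le (ha i).2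
    have hbi : |b i| ≤ 1 := (abs_of_nonneg (hb i).1).trans_le (hb i).2
    rw [Finset.prod_cons, Finset.prod_cons, Finset.sum_cons]
    calc |a i * ∏ i ∈ s, a i - b i * ∏ i ∈ s, b i|
        = |(a i - b i) * ∏ i ∈ s, a i + b i * (∏ i ∈ s, a i - ∏ i ∈ s, b i)| := by ring_nf
      _ ≤ |a i - b i| * |∏ i ∈ s, a i| + |b i| * |∏ i ∈ s, a i - ∏ i ∈ s, b i| := by
          rw [← abs_mul, ← abs_mul]
          exact abs_add_le _ _
      _ ≤ |a i - b i| + ∑ i ∈ s, |a i - b i| :=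
          add_le_add (mul_le_of_le_one_right (abs_nonneg _) hprod)
            ((mul_le_of_le_one_left (abs_nonneg _) hbi).trans ih)

variable {U W : ℝ → ℝ → ℝ} {n : ℕ}

lemma IsGraphon.measurable_eval (hU : IsGraphon U) {ι : Type*} (p : ι × ι) :
    Measurable fun x : ι → ℝ => U (x p.1) (x p.2) :=
  hU.1.comp (f := fun x : ι → ℝ => (x p.1, x p.2)) (by fun_prop)

lemma IsGraphon.integrable_prod (hU : IsGraphon U) {ι : Type*} [Fintype ι] (s : Finset (ι × ι)) :
    Integrable (fun x : ι → ℝ => ∏ p ∈ s, U (x p.1) (x p.2)) (Measure.pi fun _ => μ01) :=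
  .of_mem_Icc 0 1 (s.measurable_fun_prod fun p _ => hU.measurable_eval p).aemeasurable
    (Eventually.of_forall fun _ => ⟨Finset.prod_nonneg fun _ _ => (hU.2.2 _ _).1,
      Finset.prod_le_one (fun _ _ => (hU.2.2 _ _).1) fun _ _ => (hU.2.2 _ _).2⟩)

lemma integral_abs_sub_eval_eq_l1Dist (hU : IsGraphon U) (hW : IsGraphon W) {ι : Type*}
    [Fintype ι] {i j : ι} (hij : i ≠ j) :
    ∫ x : ι → ℝ, |U (x i) (x j) - W (x i) (x j)| ∂(Measure.pi fun _ => μ01) = l1Dist U W := by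
  have pair := measurePreserving_eval_prodMk (fun _ : ι => μ01) hij
  have meas : AEStronglyMeasurable (fun z : ℝ × ℝ => |U z.1 z.2 - W z.1 z.2|)
      ((Measure.pi fun _ => μ01).map fun x : ι → ℝ => (x i, x j)) :=
    (hU.1.sub hW.1).abs.aestronglyMeasurable
  exact (integral_map pair.measurable.aemeasurable meas).symm.trans (by rw [pair.map_eq, l1Dist])

lemma abs_integral_prod_sub_le (hU : IsGraphon U) (hW : IsGraphon W) {ι : Type*} [Fintype ι]
    {s : Finset (ι × ι)} (hs : ∀ p ∈ s, p.1 ≠ p.2) :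
    |∫ x : ι → ℝ, ∏ p ∈ s, U (x p.1) (x p.2) ∂(Measure.pi fun _ => μ01)
      - ∫ x : ι → ℝ, ∏ p ∈ s, W (x p.1) (x p.2) ∂(Measure.pi fun _ => μ01)|
      ≤ s.card * l1Dist U W := by
  have hUW (p : ι × ι) : Integrable (fun x : ι → ℝ => |U (x p.1) (x p.2) - W (x p.1) (x p.2)|)
      (Measure.pi fun _ => μ01) := by
    have hU₁ := hU.integrable_prod {p}
    have hW₁ := hW.integrable_prod {p}
    simp only [Finset.prod_singleton] at hU₁ hW₁
    exact (hU₁.sub hW₁).abs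
  rw [← integral_sub (hU.integrable_prod s) (hW.integrable_prod s)]
  calc |∫ x : ι → ℝ, (∏ p ∈ s, U (x p.1) (x p.2) - ∏ p ∈ s, W (x p.1) (x p.2))
        ∂(Measure.pi fun _ => μ01)|
      ≤ ∫ x : ι → ℝ, ∑ p ∈ s, |U (x p.1) (x p.2) - W (x p.1) (x p.2)|
        ∂(Measure.pi fun _ => μ01) :=
        abs_integral_le_integral_abs.trans <| integral_mono
          ((hU.integrable_prod s).sub (hW.integrable_prod s)).abs
          (integrable_finsetSum s fun p _ => hUW p)
          fun x => abs_prod_sub_prod_le_sum s (fun _ => hU.2.2 _ _) fun _ => hW.2.2 _ _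
    _ = ∑ _p ∈ s, l1Dist U W := by
        rw [integral_finsetSum s fun p _ => hUW p]
        exact Finset.sum_congr rfl fun p hp => integral_abs_sub_eval_eq_l1Dist hU hW (hs p hp)
    _ = s.card * l1Dist U W := by rw [Finset.sum_const, nsmul_eq_mul]

lemma abs_homDensity_sub_le (hU : IsGraphon U) (hW : IsGraphon W) (F : SimpleGraph (Fin n)) :
    |homDensity F U - homDensity F W| ≤ n ^ 2 * l1Dist U W := by
  classical
  refine (abs_integral_prod_sub_le hU hW fun p hp => ?_).trans ?_
  · exact (Finset.mem_filter.1 hp).2.1.ne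
  · refine mul_le_mul_of_nonneg_right ?_ (integral_nonneg fun z => abs_nonneg _)
    exact_mod_cast (Finset.card_le_univ _).trans_eq (by simp [sq])

lemma exists_homDensity_eq {s : Finset (Fin n × Fin n)} (hs : s ⊆ orderedPairs (Fin n)) :
    ∃ F : SimpleGraph (Fin n), ∀ W, homDensity F W
      = ∫ x : Fin n → ℝ, ∏ p ∈ s, W (x p.1) (x p.2) ∂(Measure.pi fun _ => μ01) := by
  have lt {p : Fin n × Fin n} (hp : p ∈ s) : p.1 < p.2 := mem_orderedPairs.1 (hs hp)
  refine ⟨SimpleGraph.fromRel fun u v => (u, v) ∈ s, fun W => ?_⟩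
  rw [homDensity]
  congr! 3
  ext p
  simp only [Finset.mem_filter, Finset.mem_univ, true_and, SimpleGraph.fromRel_adj]
  constructor
  · rintro ⟨h, _, hp | hp⟩
    · exact hp
    · exact absurd (lt hp) h.not_gt
  · exact fun hp => ⟨lt hp, (lt hp).ne, Or.inl hp⟩

lemma exists_homDensity_stepKernel_eq {s : Finset (Fin n × Fin n)}
    (hs : s ⊆ orderedPairs (Fin n)) :
    ∃ F : SimpleGraph (Fin n), ∀ {N : ℕ} [NeZero N] (A : Matrix (Fin N) (Fin N) ℝ),
      homDensity F (stepKernel A) = matrixHomDensity s A := by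
  obtain ⟨F, hF⟩ := exists_homDensity_eq hs
  exact ⟨F, fun A => (hF _).trans (integral_pi_comp_gridIndex fun X => ∏ p ∈ s, A (X p.1) (X p.2))⟩

end Counting

section AntiCounting

variable {U W : ℝ → ℝ → ℝ} {k r : ℕ} {δ : ℝ}

lemma cutDist_le_of_l1Dist_stepKernel_le (hU : IsGraphon U) (hW : IsGraphon W) (hr : 0 < r)
    (hk : 64 ^ r ≤ k) (h : ∀ F : SimpleGraph (Fin k), |homDensity F U - homDensity F W| ≤ δ)
    {N : ℕ} [NeZero N] (hkN : k ∣ N) {A B : Matrix (Fin N) (Fin N) ℝ} (hA : A.IsSymm)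
    (hA' : ∀ i j, A i j ∈ Icc (0 : ℝ) 1) (hB : B.IsSymm) (hB' : ∀ i j, B i j ∈ Icc (0 : ℝ) 1)
    {η : ℝ} (hUA : l1Dist U (stepKernel A) ≤ η) (hWB : l1Dist W (stepKernel B) ≤ η) :
    cutDist U W ≤ 6 / √r + 36 * r / 2 ^ r
      + 4 ^ (orderedPairs (Fin k)).card * (δ + 2 * (k ^ 2 * η)) + 2 * η := by
  have : NeZero k := ⟨((pow_pos (by norm_num) r).trans_le hk).ne'⟩
  have hsA := isGraphon_stepKernel hA hA'
  have hsB := isGraphon_stepKernel hB hB'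
  have discretize (s) (hs : s ⊆ orderedPairs (Fin k)) :
      |matrixHomDensity s A - matrixHomDensity s B| ≤ δ + 2 * (k ^ 2 * η) := by
    obtain ⟨F, hF⟩ := exists_homDensity_stepKernel_eq hs
    rw [← hF A, ← hF B]
    have homAU := (abs_homDensity_sub_le hsA hU F).trans
      (mul_le_mul_of_nonneg_left ((l1Dist_comm _ _).trans_le hUA) (by positivity))
    have homWB := (abs_homDensity_sub_le hW hsB F).trans
      (mul_le_mul_of_nonneg_left hWB (by positivity))
    linarith [h F,
      abs_sub_le (homDensity F (stepKernel A)) (homDensity F U) (homDensity F (stepKernel B)),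
      abs_sub_le (homDensity F U) (homDensity F W) (homDensity F (stepKernel B))]
  obtain ⟨σ, hσ⟩ := exists_perm_matrixCutNorm_sub_le_of_matrixHomDensity hA hA' hB hB'
    (by simpa using hkN) hr (by simpa using hk) discretize
  rw [Fintype.card_fin, ← div_le_iff₀' (pow_pos (Nat.cast_pos.2 (NeZero.pos N)) 2)] at hσ
  calc cutDist U W
      ≤ matrixCutNorm (A - B.submatrix σ σ) / N ^ 2
        + (l1Dist U (stepKernel A) + l1Dist W (stepKernel B)) :=
        cutDist_le_matrixCutNorm_add_l1Dist hU hW hsA hsB σ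
    _ ≤ _ := add_le_add hσ (by linarith)

theorem cutDist_le_of_abs_homDensity_sub_le (hU : IsGraphon U) (hW : IsGraphon W) (hr : 0 < r)
    (hk : 64 ^ r ≤ k) (h : ∀ F : SimpleGraph (Fin k), |homDensity F U - homDensity F W| ≤ δ) :
    cutDist U W ≤ 6 / √r + 36 * r / 2 ^ r + 4 ^ (orderedPairs (Fin k)).card * δ := by
  have hk0 : 0 < k := (pow_pos (by norm_num) r).trans_le hk
  set c : ℝ := 4 ^ (orderedPairs (Fin k)).card
  refine le_of_forall_pos_le_add fun ε hε => ?_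
  set η := ε / (2 * (c * k ^ 2 + 1))
  have hη : 0 < η := by positivity
  obtain ⟨M, ⟨hUM, hWM⟩, hM⟩ := (((tendsto_id.const_mul_atTop' hk0).eventually
    ((hU.eventually_exists_l1Dist_stepKernel_le hη).and
      (hW.eventually_exists_l1Dist_stepKernel_le hη))).and (eventually_gt_atTop 0)).exists
  simp only [id_eq] at hUM hWM
  have : NeZero (k * M) := ⟨(Nat.mul_pos hk0 hM).ne'⟩
  obtain ⟨A, hA, hA', hUA⟩ := hUM
  obtain ⟨B, hB, hB', hWB⟩ := hWM
  calc cutDist U W ≤ 6 / √r + 36 * r / 2 ^ r + c * (δ + 2 * (k ^ 2 * η)) + 2 * η :=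
        cutDist_le_of_l1Dist_stepKernel_le hU hW hr hk h (dvd_mul_right k M) hA hA' hB hB' hUA hWB
    _ = 6 / √r + 36 * r / 2 ^ r + c * δ + η * (2 * (c * k ^ 2 + 1)) := by ring
    _ = 6 / √r + 36 * r / 2 ^ r + c * δ + ε := by rw [div_mul_cancel₀ ε (by positivity)]

lemma four_pow_card_orderedPairs_mul (k : ℕ) :
    (4 : ℝ) ^ (orderedPairs (Fin k)).card * (1 / 2 ^ k ^ 2) = 1 / 2 ^ k := by
  have hcard := two_mul_card_orderedPairs_add_card (ι := Fin k)
  rw [Fintype.card_fin] at hcard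
  rw [← hcard, pow_add, pow_mul, show (2 : ℝ) ^ 2 = 4 by norm_num]
  field_simp

lemma one_le_div_sqrt_logb (hk : 2 ≤ k) (hk' : Real.logb 2 k ≤ 400) :
    1 ≤ 20 / √(Real.logb 2 k) := by
  have hlog : 0 < Real.logb 2 k := Real.logb_pos one_lt_two (by exact_mod_cast hk)
  rw [one_le_div (Real.sqrt_pos.2 hlog), Real.sqrt_le_left (by norm_num)]
  linarith

lemma logb_two_lt_six_mul (hk : k ≠ 0) : Real.logb 2 k < 6 * (Nat.log 64 k + 1) := by
  have lt : (k : ℝ) < 64 ^ (Nat.log 64 k + 1) := by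
    exact_mod_cast Nat.lt_pow_succ_log_self (by norm_num) k
  calc Real.logb 2 k < Real.logb 2 (64 ^ (Nat.log 64 k + 1)) :=
        Real.logb_lt_logb one_lt_two (by positivity) lt
    _ = 6 * (Nat.log 64 k + 1) := by
        rw [show (64 : ℝ) = 2 ^ 6 by norm_num, ← pow_mul, Real.logb_pow,
          Real.logb_self_eq_one one_lt_two]
        push_cast
        ring

lemma mul_sq_le_two_pow (hr : 66 ≤ r) : 37 * r ^ 2 ≤ 2 ^ r := by
  induction r, hr using Nat.le_induction with
  | base => norm_num
  | succ r hr ih =>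
    rw [pow_succ 2]
    nlinarith

lemma add_one_div_two_pow_le (hr : 66 ≤ r) (hk : r ≤ k) :
    6 / √r + 36 * r / 2 ^ r + 1 / 2 ^ k ≤ 7 / √(r : ℝ) := by
  have hr0 : (1 : ℝ) ≤ r := by exact_mod_cast (by norm_num : 1 ≤ 66).trans hr
  have pow_le : (37 : ℝ) * r ^ 2 ≤ 2 ^ r := by exact_mod_cast mul_sq_le_two_pow hr
  have error : 36 * r / 2 ^ r + 1 / 2 ^ k ≤ 1 / √(r : ℝ) :=
    calc 36 * r / 2 ^ r + 1 / 2 ^ k ≤ 36 * r / 2 ^ r + r / (2 : ℝ) ^ r := by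
          gcongr
          norm_num
      _ = 37 * r / 2 ^ r := by ring
      _ ≤ 1 / r := by
          rw [div_le_div_iff₀ (by positivity) (by positivity)]
          linarith
      _ ≤ 1 / √r := one_div_le_one_div_of_le (by positivity) (Real.sqrt_le_self_iff.2 (.inr hr0))
  calc 6 / √r + 36 * r / 2 ^ r + 1 / 2 ^ k = 6 / √r + (36 * r / 2 ^ r + 1 / 2 ^ k) := add_assoc ..
    _ ≤ 6 / √r + 1 / √r := by gcongr
    _ = 7 / √r := by ring

lemma div_sqrt_le_div_sqrt {a b x y : ℝ} (hb : 0 ≤ b) (hx : 0 < x) (hy : 0 < y)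
    (h : a ^ 2 * y ≤ b ^ 2 * x) : a / √x ≤ b / √y := by
  rw [div_le_div_iff₀ (Real.sqrt_pos.2 hx) (Real.sqrt_pos.2 hy)]
  refine le_of_abs_le (abs_le_of_sq_le_sq ?_ (by positivity))
  rwa [mul_pow, mul_pow, Real.sq_sqrt hx.le, Real.sq_sqrt hy.le]

end AntiCounting

/-- Anti-counting Lemma: if all homomorphism densities of graphs on `k` nodes in `U` and `W`
differ by at most `2^(−k²)`, then `δ_□(U,W) ≤ 20/√(log₂ k)`. -/
theorem anti_counting_lemma (k : ℕ) (hk : 2 ≤ k) (U W : ℝ → ℝ → ℝ)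
    (hU : IsGraphon U) (hW : IsGraphon W)
    (h : ∀ F : SimpleGraph (Fin k), |homDensity F U - homDensity F W| ≤ 1 / 2 ^ (k ^ 2)) :
    cutDist U W ≤ 20 / Real.sqrt (Real.logb 2 k) := by
  rcases le_or_gt (Real.logb 2 k) 400 with hlog | hlog
  · exact (cutDist_le_one hU hW).trans (one_le_div_sqrt_logb hk hlog)
  have hk0 : k ≠ 0 := by omega
  set r := Nat.log 64 k
  have hkr : Real.logb 2 k < 6 * (r + 1) := logb_two_lt_six_mul hk0
  have hr65 : (65 : ℝ) < r := by linarith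
  have hr : 66 ≤ r := by exact_mod_cast hr65
  calc cutDist U W
      ≤ 6 / √r + 36 * r / 2 ^ r + 4 ^ (orderedPairs (Fin k)).card * (1 / 2 ^ k ^ 2) :=
        cutDist_le_of_abs_homDensity_sub_le hU hW (by omega) (Nat.pow_log_le_self 64 hk0) h
    _ = 6 / √r + 36 * r / 2 ^ r + 1 / 2 ^ k := by rw [four_pow_card_orderedPairs_mul]
    _ ≤ 7 / √r := add_one_div_two_pow_le hr (Nat.log_le_self 64 k)
    _ ≤ 20 / √(Real.logb 2 k) :=
        div_sqrt_le_div_sqrt (by norm_num) (by linarith) (by linarith) (by linarith)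
end

section
/- Alon–Stav theorem: for every hereditary graph property P (containing at least one graph on n vertices for every n) there exist a number p ∈ [0,1] and a function ε : ℕ → ℝ with ε(n) → 0 as n → ∞ such that for every n and every finite simple graph G on n vertices, d_1(G, P) ≤ E[ d_1(G(n,p), P) ] + ε(n), where G(n,p) is the Erdős–Rényi random graph on n vertices in which each pair is an edge independently with probability p, and the expectation is over G(n,p). -/
open Finset
open scoped Classical

-- The subgraph of `G` induced by the vertex subset `S`, presented as a graph on `Fin S.card`
-- (via the order isomorphism between `Fin S.card` and `S`).
noncomputable def inducedCopy {n : ℕ} (G : SimpleGraph (Fin n)) (S : Finset (Fin n)) :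
    SimpleGraph (Fin S.card) :=
  SimpleGraph.comap (fun i => (S.orderIsoOfFin rfl i).1) G

-- A graph property: an isomorphism-closed class of finite simple graphs.
def IsGraphProperty (P : ∀ n : ℕ, Set (SimpleGraph (Fin n))) : Prop :=
  ∀ (n : ℕ) (G G' : SimpleGraph (Fin n)), Nonempty (G ≃g G') → (G ∈ P n → G' ∈ P n)

-- A hereditary graph property: closed under taking induced subgraphs.
def IsHereditary (P : ∀ n : ℕ, Set (SimpleGraph (Fin n))) : Prop :=
  IsGraphProperty P ∧
    ∀ (n : ℕ) (G : SimpleGraph (Fin n)), G ∈ P n →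
      ∀ S : Finset (Fin n), inducedCopy G S ∈ P S.card

-- The normalized edit distance `d_1(G,G') = |E(G) △ E(G')| / C(n,2)`, computed via
-- ordered pairs: `|{(u,v) : G.Adj u v ≠ G'.Adj u v}| / (n(n−1))`.
noncomputable def d1dist {n : ℕ} (G G' : SimpleGraph (Fin n)) : ℝ :=
  ((Finset.univ.filter
      (fun p : Fin n × Fin n => ¬ (G.Adj p.1 p.2 ↔ G'.Adj p.1 p.2))).card : ℝ) /
    ((n : ℝ) * ((n : ℝ) - 1))

-- The normalized edit distance from `G` to the property `P`.
noncomputable def d1toProperty {n : ℕ} (P : ∀ n : ℕ, Set (SimpleGraph (Fin n)))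
    (G : SimpleGraph (Fin n)) : ℝ :=
  sInf { r : ℝ | ∃ G' : SimpleGraph (Fin n), G' ∈ P n ∧ r = d1dist G G' }

/-!
Write `f_n(p) = E[d_1(G(n,p),P)]`. Restricting an optimal edit to a random induced subgraph shows
that `f_n(p)` is nondecreasing in `n`, and flipping one pair changes `d_1(·,P)` by at most
`1 / C(n,2)`, so `f_n` is 1-Lipschitz in `p`. Hence `F = sup_n f_n` is continuous on `[0,1]` and has
a maximizer `p`, and it suffices that `d_1(G,P) ≤ F(q)` whenever `G` has edge density `q`.

For this, edit `G(N,q)` optimally towards `P` and look at the random copies of `G` in it: each of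
them is edited into a member of `P`, so it sees a proportion of at least `d_1(G,P)` edits. Many
embeddings of `G` that meet only in one pair `e` are independent once the adjacency of `e` is
fixed, so by the second moment method conditioning on a random one of them being a copy changes the
probability that `e` is edited only through the adjacency of `e`, up to `O(1/√K)` for `K` of them.
As a `q`-fraction of the pairs of `G` are edges, averaging over the pairs of `G` gives
`d_1(G,P) ≤ f_N(q) + O(1/√K)`.
-/

namespace AlonStav

open scoped BigOperators

section BernoulliSubset

variable {α ι : Type*} [DecidableEq α] {p q : ℝ} {E F A T : Finset α}

/-- The probability `∏ e ∈ E, (p or 1 - p)` that a random set, which contains each element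
independently with probability `p`, agrees with `T` on `E`. -/
noncomputable def bernoulliWeight (p : ℝ) (E T : Finset α) : ℝ :=
  ∏ e ∈ E, if e ∈ T then p else 1 - p

lemma bernoulliWeight_eq_pow_mul_pow (h : T ⊆ E) :
    bernoulliWeight p E T = p ^ #T * (1 - p) ^ (#E - #T) := by
  rw [bernoulliWeight, prod_ite, prod_const, prod_const, filter_mem_eq_inter,
    inter_eq_right.mpr h, filter_notMem_eq_sdiff, card_sdiff_of_subset h]

lemma bernoulliWeight_nonneg (hp : p ∈ Set.Icc (0 : ℝ) 1) : 0 ≤ bernoulliWeight p E T :=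
  prod_nonneg fun e _ ↦ by split_ifs <;> linarith [hp.1, hp.2]

lemma bernoulliWeight_le_one (hp : p ∈ Set.Icc (0 : ℝ) 1) : bernoulliWeight p E T ≤ 1 :=
  prod_le_one (fun e _ ↦ by split_ifs <;> linarith [hp.1, hp.2])
    fun e _ ↦ by split_ifs <;> linarith [hp.1, hp.2]

lemma bernoulliWeight_union_mul_inter (E F T : Finset α) :
    bernoulliWeight p (E ∪ F) T * bernoulliWeight p (E ∩ F) T =
      bernoulliWeight p E T * bernoulliWeight p F T :=
  prod_union_inter

/-- The expectation of `X T` for the random subset `T` of `E` containing each element of `E`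
independently with probability `p`. -/
noncomputable def bernoulliExpect (p : ℝ) (E : Finset α) (X : Finset α → ℝ) : ℝ :=
  ∑ T ∈ E.powerset, bernoulliWeight p E T * X T

lemma bernoulliExpect_mono (hp : p ∈ Set.Icc (0 : ℝ) 1) {X Y : Finset α → ℝ}
    (h : ∀ T, X T ≤ Y T) : bernoulliExpect p E X ≤ bernoulliExpect p E Y :=
  sum_le_sum fun T _ ↦ mul_le_mul_of_nonneg_left (h T) (bernoulliWeight_nonneg hp)

lemma bernoulliExpect_sub (X Y : Finset α → ℝ) :
    bernoulliExpect p E (fun T ↦ X T - Y T) = bernoulliExpect p E X - bernoulliExpect p E Y := by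
  simp only [bernoulliExpect, mul_sub, sum_sub_distrib]

lemma bernoulliExpect_const_mul (c : ℝ) (X : Finset α → ℝ) :
    bernoulliExpect p E (fun T ↦ c * X T) = c * bernoulliExpect p E X := by
  simp only [bernoulliExpect, mul_sum, mul_left_comm]

lemma bernoulliExpect_sum (s : Finset ι) (X : ι → Finset α → ℝ) :
    bernoulliExpect p E (fun T ↦ ∑ i ∈ s, X i T) = ∑ i ∈ s, bernoulliExpect p E (X i) := by
  simp only [bernoulliExpect, mul_sum]
  exact sum_comm

/-- The indicator of the event that `T` agrees with `A` on `F`. -/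
noncomputable def agreeIndicator (F A T : Finset α) : ℝ :=
  if ∀ e ∈ F, (e ∈ T ↔ e ∈ A) then 1 else 0

lemma agreeIndicator_mul_agreeIndicator (E F A T : Finset α) :
    agreeIndicator E A T * agreeIndicator F A T = agreeIndicator (E ∪ F) A T := by
  simp only [agreeIndicator, forall_mem_union, ite_and, ite_mul, one_mul, zero_mul]

lemma agreeIndicator_nonneg (F A T : Finset α) : 0 ≤ agreeIndicator F A T := by
  unfold agreeIndicator; split_ifs <;> norm_num

lemma agreeIndicator_le_one (F A T : Finset α) : agreeIndicator F A T ≤ 1 := by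
  unfold agreeIndicator; split_ifs <;> norm_num

lemma bernoulliExpect_agreeIndicator (h : F ⊆ E) (A : Finset α) :
    bernoulliExpect p E (agreeIndicator F A) = bernoulliWeight p F A := by
  let f (e : α) : ℝ := if e ∈ F → e ∈ A then p else 0
  let g (e : α) : ℝ := if e ∈ F → e ∉ A then 1 - p else 0
  have expand (T) (hT : T ∈ E.powerset) : bernoulliWeight p E T * agreeIndicator F A T =
      (∏ e ∈ T, f e) * ∏ e ∈ E \ T, g e := by
    have hTE := mem_powerset.mp hT
    have split : (∏ e ∈ T, f e) * ∏ e ∈ E \ T, g e = ∏ e ∈ E, if e ∈ T then f e else g e := by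
      rw [prod_ite (s := E), filter_mem_eq_inter, inter_eq_right.mpr hTE, filter_notMem_eq_sdiff]
    have indicator : agreeIndicator F A T =
        ∏ e ∈ E, if e ∈ F → (e ∈ T ↔ e ∈ A) then (1 : ℝ) else 0 := by
      rw [prod_ite_zero, prod_const_one, agreeIndicator]
      exact if_congr ⟨fun H e _ he ↦ H e he, fun H e he ↦ H e (h he) he⟩ rfl rfl
    rw [split, indicator, bernoulliWeight, ← prod_mul_distrib]
    refine prod_congr rfl fun e _ ↦ ?_
    by_cases heT : e ∈ T <;> simp [f, g, heT]
  rw [bernoulliExpect, sum_congr rfl expand, ← prod_add, bernoulliWeight, ← prod_subset h]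
  · refine prod_congr rfl fun e he ↦ ?_
    by_cases heA : e ∈ A <;> simp [f, g, he, heA]
  · intro e _ he
    simp [f, g, he]

lemma bernoulliExpect_const (p : ℝ) (E : Finset α) (c : ℝ) :
    bernoulliExpect p E (fun _ ↦ c) = c := by
  have total : bernoulliExpect p E (fun _ ↦ 1) = 1 := by
    have indicator : agreeIndicator ∅ ∅ = fun _ : Finset α ↦ (1 : ℝ) := by
      simp [funext_iff, agreeIndicator]
    rw [← indicator, bernoulliExpect_agreeIndicator (empty_subset E), bernoulliWeight, prod_empty]
  simpa [total] using bernoulliExpect_const_mul (p := p) (E := E) c (fun _ ↦ 1)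

lemma bernoulliExpect_insert {a : α} (ha : a ∉ E) (X : Finset α → ℝ) :
    bernoulliExpect p (insert a E) X =
      (1 - p) * bernoulliExpect p E X + p * bernoulliExpect p E (fun T ↦ X (insert a T)) := by
  have weight_eq {T : Finset α} (hT : T ∈ E.powerset) :
      bernoulliWeight p (insert a E) T = (1 - p) * bernoulliWeight p E T ∧
      bernoulliWeight p (insert a E) (insert a T) = p * bernoulliWeight p E T := by
    have haT : a ∉ T := fun h ↦ ha (mem_powerset.mp hT h)
    refine ⟨by rw [bernoulliWeight, prod_insert ha, if_neg haT, bernoulliWeight], ?_⟩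
    rw [bernoulliWeight, prod_insert ha, if_pos (mem_insert_self a T), bernoulliWeight]
    congr 1
    refine prod_congr rfl fun e he ↦ ?_
    simp only [mem_insert, ne_of_mem_of_not_mem he ha, false_or]
  simp only [bernoulliExpect, mul_sum]
  rw [sum_powerset_insert ha]
  congr 1 <;> refine sum_congr rfl fun T hT ↦ ?_
  · rw [(weight_eq hT).1, mul_assoc]
  · rw [(weight_eq hT).2, mul_assoc]

lemma abs_bernoulliExpect_sub_le {c : ℝ} (hp : p ∈ Set.Icc (0 : ℝ) 1)
    (hq : q ∈ Set.Icc (0 : ℝ) 1) (X : Finset α → ℝ) (hX : ∀ a S, |X (insert a S) - X S| ≤ c) :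
    |bernoulliExpect p E X - bernoulliExpect q E X| ≤ #E * c * |p - q| := by
  induction E using Finset.induction_on generalizing X with
  | empty => simp [bernoulliExpect, bernoulliWeight]
  | insert a E ha ih =>
    let Y (T : Finset α) : ℝ := X (insert a T)
    have hXY : |bernoulliExpect q E Y - bernoulliExpect q E X| ≤ c := by
      rw [← bernoulliExpect_sub, abs_le, ← bernoulliExpect_const q E (-c),
        ← bernoulliExpect_const q E c]
      exact ⟨bernoulliExpect_mono hq fun T ↦ by
          rw [bernoulliExpect_const]; exact (abs_le.mp (hX a T)).1,
        bernoulliExpect_mono hq fun T ↦ (abs_le.mp (hX a T)).2⟩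
    have ihX := ih X hX
    have ihY := ih Y fun b S ↦ by
      simpa only [Y, Finset.insert_comm] using hX b (insert a S)
    rw [bernoulliExpect_insert ha, bernoulliExpect_insert ha, card_insert_of_notMem ha]
    push_cast
    calc _ = |(1 - p) * (bernoulliExpect p E X - bernoulliExpect q E X) +
            p * (bernoulliExpect p E Y - bernoulliExpect q E Y) +
            (bernoulliExpect q E Y - bernoulliExpect q E X) * (p - q)| := by congr 1; ring
      _ ≤ (1 - p) * (#E * c * |p - q|) + p * (#E * c * |p - q|) + c * |p - q| := by
        refine (abs_add_three _ _ _).trans ?_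
        rw [abs_mul, abs_mul, abs_mul, abs_of_nonneg hp.1, abs_of_nonneg (sub_nonneg.mpr hp.2)]
        have := hp.1
        have := sub_nonneg.mpr hp.2
        gcongr
      _ = (#E + 1) * c * |p - q| := by ring

lemma bernoulliExpect_mul_sq_le (hp : p ∈ Set.Icc (0 : ℝ) 1) (X Y : Finset α → ℝ) :
    bernoulliExpect p E (fun T ↦ X T * Y T) ^ 2 ≤
      bernoulliExpect p E (fun T ↦ X T ^ 2) * bernoulliExpect p E (fun T ↦ Y T ^ 2) :=
  sum_sq_le_sum_mul_sum_of_sq_le_mul _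
    (fun _ _ ↦ mul_nonneg (bernoulliWeight_nonneg hp) (sq_nonneg _))
    (fun _ _ ↦ mul_nonneg (bernoulliWeight_nonneg hp) (sq_nonneg _)) fun _ _ ↦ (by ring : _ = _).le

lemma bernoulliExpect_mul_sum_le_sqrt_card [Fintype ι] (hp : p ∈ Set.Icc (0 : ℝ) 1)
    {X : Finset α → ℝ} {z : ι → Finset α → ℝ} (hX : ∀ T, |X T| ≤ 1) (hz : ∀ i T, |z i T| ≤ 1)
    (hzz : Pairwise fun i j ↦ bernoulliExpect p E (fun T ↦ z i T * z j T) = 0) :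
    bernoulliExpect p E (fun T ↦ X T * ∑ i, z i T) ≤ √(Fintype.card ι) := by
  have sq_le_one {Y : Finset α → ℝ} (hY : ∀ T, |Y T| ≤ 1) :
      bernoulliExpect p E (fun T ↦ Y T ^ 2) ≤ 1 := by
    rw [← bernoulliExpect_const p E 1]
    exact bernoulliExpect_mono hp fun T ↦ (sq_le_one_iff_abs_le_one _).mpr (hY T)
  have second_moment : bernoulliExpect p E (fun T ↦ (∑ i, z i T) ^ 2) ≤ Fintype.card ι := by
    simp only [sq, sum_mul_sum, bernoulliExpect_sum]
    calc _ = ∑ i, bernoulliExpect p E (fun T ↦ z i T * z i T) :=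
          sum_congr rfl fun i _ ↦ sum_eq_single i (fun j _ hj ↦ hzz hj.symm) (by simp)
      _ ≤ ∑ _i : ι, (1 : ℝ) := sum_le_sum fun i _ ↦ by simpa only [sq] using sq_le_one (hz i)
      _ = Fintype.card ι := by simp
  refine Real.le_sqrt_of_sq_le ((bernoulliExpect_mul_sq_le hp X _).trans ?_)
  calc _ ≤ 1 * (Fintype.card ι : ℝ) :=
        mul_le_mul (sq_le_one hX) second_moment
          ((bernoulliExpect_const p E 0).symm.le.trans
            (bernoulliExpect_mono hp fun T ↦ sq_nonneg _)) zero_le_one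
    _ = Fintype.card ι := one_mul _

/-- The deviation of the event that `T` agrees with `A` on the petal `F` from its probability
conditioned on agreement on the core `C`. It is multiplied by `bernoulliWeight p C A`, which avoids
a division by a possibly vanishing weight. -/
noncomputable def petalDeviation (p : ℝ) (C A F T : Finset α) : ℝ :=
  bernoulliWeight p C A * agreeIndicator F A T - bernoulliWeight p F A * agreeIndicator C A T

lemma abs_petalDeviation_le_one (hp : p ∈ Set.Icc (0 : ℝ) 1) (C A F T : Finset α) :
    |petalDeviation p C A F T| ≤ 1 := by
  have product_mem (S S' : Finset α) : 0 ≤ bernoulliWeight p S A * agreeIndicator S' A T ∧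
      bernoulliWeight p S A * agreeIndicator S' A T ≤ 1 :=
    ⟨mul_nonneg (bernoulliWeight_nonneg hp) (agreeIndicator_nonneg S' A T),
      mul_le_one₀ (bernoulliWeight_le_one hp) (agreeIndicator_nonneg S' A T)
        (agreeIndicator_le_one S' A T)⟩
  have hF := product_mem C F
  have hC := product_mem F C
  exact abs_sub_le_iff.mpr ⟨by linarith [hF.2, hC.1], by linarith [hC.2, hF.1]⟩

lemma bernoulliExpect_petalDeviation_mul_petalDeviation {C A F G : Finset α} (hF : F ⊆ E)
    (hG : G ⊆ E) (hFG : F ∩ G = C) :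
    bernoulliExpect p E (fun T ↦ petalDeviation p C A F T * petalDeviation p C A G T) = 0 := by
  have hCF : C ⊆ F := hFG ▸ inter_subset_left
  have hCG : C ⊆ G := hFG ▸ inter_subset_right
  set b := bernoulliWeight p C A with hb
  set v := bernoulliWeight p F A with hv
  set w := bernoulliWeight p G A with hw
  have expand (T : Finset α) : petalDeviation p C A F T * petalDeviation p C A G T =
      b ^ 2 * agreeIndicator (F ∪ G) A T - b * w * agreeIndicator F A T -
        (b * v * agreeIndicator G A T - v * w * agreeIndicator C A T) := by
    have absorbF := agreeIndicator_mul_agreeIndicator F C A T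
    have absorbG := agreeIndicator_mul_agreeIndicator G C A T
    have core := agreeIndicator_mul_agreeIndicator C C A T
    rw [union_eq_left.mpr hCF] at absorbF
    rw [union_eq_left.mpr hCG] at absorbG
    rw [union_self] at core
    rw [petalDeviation, petalDeviation, ← hb, ← hv, ← hw]
    linear_combination b ^ 2 * agreeIndicator_mul_agreeIndicator F G A T -
      b * w * absorbF - b * v * absorbG + v * w * core
  have product : bernoulliWeight p (F ∪ G) A * b = v * w := by
    rw [hb, ← hFG, bernoulliWeight_union_mul_inter]
  simp only [expand, bernoulliExpect_sub, bernoulliExpect_const_mul,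
    bernoulliExpect_agreeIndicator hF, bernoulliExpect_agreeIndicator hG,
    bernoulliExpect_agreeIndicator (hCF.trans hF),
    bernoulliExpect_agreeIndicator (union_subset hF hG)]
  linear_combination b * product

lemma bernoulliWeight_mul_sum_bernoulliExpect_le [Fintype ι] (hp : p ∈ Set.Icc (0 : ℝ) 1)
    {C : Finset α} {F : ι → Finset α} (hF : ∀ i, F i ⊆ E)
    (hinter : Pairwise fun i j ↦ F i ∩ F j = C) (A : Finset α) {X : Finset α → ℝ}
    (hX : ∀ T, |X T| ≤ 1) :
    bernoulliWeight p C A *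
        ∑ i, bernoulliExpect p E (fun T ↦ X T * agreeIndicator (F i) A T) ≤
      (∑ i, bernoulliWeight p (F i) A) *
        bernoulliExpect p E (fun T ↦ X T * agreeIndicator C A T) + √(Fintype.card ι) := by
  have deviation := bernoulliExpect_mul_sum_le_sqrt_card hp hX
    (fun i ↦ abs_petalDeviation_le_one hp C A (F i))
    (fun i j hij ↦ bernoulliExpect_petalDeviation_mul_petalDeviation (hF i) (hF j) (hinter hij))
  have expand (T : Finset α) : X T * ∑ i, petalDeviation p C A (F i) T =
      bernoulliWeight p C A * (∑ i, X T * agreeIndicator (F i) A T) -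
        (∑ i, bernoulliWeight p (F i) A) * (X T * agreeIndicator C A T) := by
    simp only [petalDeviation, sum_sub_distrib, ← mul_sum, ← sum_mul]
    ring
  simp only [expand, bernoulliExpect_sub, bernoulliExpect_const_mul, bernoulliExpect_sum]
    at deviation
  linarith

end BernoulliSubset

section RandomGraph

variable {V W ι : Type*} [Fintype V] [DecidableEq V] {p q : ℝ}

/-- The probability that the Erdős–Rényi random graph `G(V, p)` equals `H`. -/
noncomputable def gnpWeight (p : ℝ) (H : SimpleGraph V) : ℝ :=
  bernoulliWeight p (⊤ : SimpleGraph V).edgeFinset H.edgeFinset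

/-- The expectation of `X R` for the Erdős–Rényi random graph `R` on `V` with edge
probability `p`. -/
noncomputable def gnpExpect (p : ℝ) (X : SimpleGraph V → ℝ) : ℝ :=
  ∑ R, gnpWeight p R * X R

lemma gnpWeight_eq_pow_mul_pow (p : ℝ) (H : SimpleGraph V) :
    gnpWeight p H =
      p ^ #H.edgeFinset * (1 - p) ^ ((Fintype.card V).choose 2 - #H.edgeFinset) := by
  rw [gnpWeight, bernoulliWeight_eq_pow_mul_pow (SimpleGraph.edgeFinset_mono le_top),
    SimpleGraph.card_edgeFinset_top_eq_card_choose_two]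

lemma gnpWeight_nonneg (hp : p ∈ Set.Icc (0 : ℝ) 1) (H : SimpleGraph V) : 0 ≤ gnpWeight p H :=
  bernoulliWeight_nonneg hp

lemma gnpWeight_pos {H : SimpleGraph V} (hadj : ∀ u v, H.Adj u v → 0 < p)
    (hnotAdj : ∀ u v, u ≠ v → ¬ H.Adj u v → 0 < 1 - p) : 0 < gnpWeight p H := by
  refine prod_pos fun e he ↦ ?_
  induction e with
  | h u v =>
    simp only [SimpleGraph.mem_edgeFinset, SimpleGraph.mem_edgeSet, SimpleGraph.top_adj] at he ⊢
    split_ifs with h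
    exacts [hadj u v h, hnotAdj u v he h]

lemma bernoulliExpect_edgeFinset_top (p : ℝ) (X : Finset (Sym2 V) → ℝ) :
    bernoulliExpect p (⊤ : SimpleGraph V).edgeFinset X = gnpExpect p fun R ↦ X R.edgeFinset := by
  refine (sum_nbij' (fun R : SimpleGraph V ↦ R.edgeFinset)
    (fun T ↦ SimpleGraph.fromEdgeSet (T : Set (Sym2 V))) ?_ ?_ ?_ ?_ fun _ _ ↦ rfl).symm
  · exact fun R _ ↦ mem_powerset.mpr (SimpleGraph.edgeFinset_mono le_top)
  · exact fun _ _ ↦ mem_univ _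
  · intro R _
    simp
  · intro T hT
    ext e
    have notDiag : e ∈ T → ¬ e.IsDiag := fun he ↦ by
      simpa using mem_powerset.mp hT he
    simpa using notDiag

lemma gnpExpect_mono (hp : p ∈ Set.Icc (0 : ℝ) 1) {X Y : SimpleGraph V → ℝ}
    (h : ∀ R, X R ≤ Y R) : gnpExpect p X ≤ gnpExpect p Y :=
  sum_le_sum fun R _ ↦ mul_le_mul_of_nonneg_left (h R) (gnpWeight_nonneg hp R)

lemma gnpExpect_const (p c : ℝ) : gnpExpect p (fun _ : SimpleGraph V ↦ c) = c := by
  rw [← bernoulliExpect_edgeFinset_top p fun _ ↦ c, bernoulliExpect_const]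

lemma gnpExpect_nonneg (hp : p ∈ Set.Icc (0 : ℝ) 1) {X : SimpleGraph V → ℝ}
    (h : ∀ R, 0 ≤ X R) : 0 ≤ gnpExpect p X :=
  sum_nonneg fun R _ ↦ mul_nonneg (gnpWeight_nonneg hp R) (h R)

lemma gnpExpect_add (X Y : SimpleGraph V → ℝ) :
    gnpExpect p (fun R ↦ X R + Y R) = gnpExpect p X + gnpExpect p Y := by
  simp only [gnpExpect, mul_add, sum_add_distrib]

lemma gnpExpect_expect (s : Finset ι) (X : ι → SimpleGraph V → ℝ) :
    gnpExpect p (fun R ↦ 𝔼 i ∈ s, X i R) = 𝔼 i ∈ s, gnpExpect p (X i) := by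
  simp only [gnpExpect, mul_expect]
  exact (expect_sum_comm _ _ _).symm

lemma abs_gnpExpect_sub_le {c : ℝ} (hp : p ∈ Set.Icc (0 : ℝ) 1) (hq : q ∈ Set.Icc (0 : ℝ) 1)
    (X : SimpleGraph V → ℝ)
    (hX : ∀ (e : Sym2 V) (S : Set (Sym2 V)),
      |X (.fromEdgeSet (insert e S)) - X (.fromEdgeSet S)| ≤ c) :
    |gnpExpect p X - gnpExpect q X| ≤ (Fintype.card V).choose 2 * c * |p - q| := by
  have lipschitz := abs_bernoulliExpect_sub_le (E := (⊤ : SimpleGraph V).edgeFinset) hp hq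
    (fun T ↦ X (.fromEdgeSet (T : Set (Sym2 V)))) fun e S ↦ by
      simpa only [coe_insert] using hX e S
  simpa only [bernoulliExpect_edgeFinset_top, SimpleGraph.coe_edgeFinset,
    SimpleGraph.fromEdgeSet_edgeSet, SimpleGraph.card_edgeFinset_top_eq_card_choose_two]
    using lipschitz

/-- The pairs of vertices of `W` that are images under `φ` of pairs of vertices of `V`. -/
noncomputable def imagePairs (φ : V ↪ W) : Finset (Sym2 W) :=
  (⊤ : SimpleGraph V).edgeFinset.map φ.sym2Map

lemma mk_mem_imagePairs (φ : V ↪ W) {x y : W} :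
    s(x, y) ∈ imagePairs φ ↔ ∃ u v, u ≠ v ∧ φ u = x ∧ φ v = y := by
  simp only [imagePairs, mem_map, Sym2.exists, SimpleGraph.mem_edgeFinset, SimpleGraph.mem_edgeSet,
    SimpleGraph.top_adj, Function.Embedding.sym2Map_apply, Sym2.map_mk, Sym2.eq_iff]
  constructor
  · rintro ⟨u, v, huv, ⟨hu, hv⟩ | ⟨hu, hv⟩⟩
    exacts [⟨u, v, huv, hu, hv⟩, ⟨v, u, huv.symm, hv, hu⟩]
  · rintro ⟨u, v, huv, hu, hv⟩
    exact ⟨u, v, huv, .inl ⟨hu, hv⟩⟩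

variable [Fintype W] [DecidableEq W]

lemma imagePairs_subset (φ : V ↪ W) : imagePairs φ ⊆ (⊤ : SimpleGraph W).edgeFinset := by
  intro e
  induction e with
  | h x y =>
    rw [mk_mem_imagePairs, SimpleGraph.mem_edgeFinset, SimpleGraph.mem_edgeSet]
    rintro ⟨u, v, huv, rfl, rfl⟩
    exact φ.injective.ne huv

lemma agreeIndicator_imagePairs (φ : V ↪ W) (H R : SimpleGraph W) :
    agreeIndicator (imagePairs φ) H.edgeFinset R.edgeFinset =
      if R.comap φ = H.comap φ then 1 else 0 := by
  have agree_iff : (∀ e ∈ imagePairs φ, (e ∈ R.edgeFinset ↔ e ∈ H.edgeFinset)) ↔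
      R.comap φ = H.comap φ := by
    refine ⟨fun h ↦ ?_, fun h e he ↦ ?_⟩
    · ext u v
      by_cases huv : u = v
      · simp [huv]
      · simpa using h s(φ u, φ v) ((mk_mem_imagePairs φ).mpr ⟨u, v, huv, rfl, rfl⟩)
    · induction e with
      | h x y =>
        obtain ⟨u, v, -, rfl, rfl⟩ := (mk_mem_imagePairs φ).mp he
        simpa using congrArg (fun G : SimpleGraph V ↦ G.Adj u v) h
  simp only [agreeIndicator, agree_iff]

lemma bernoulliWeight_imagePairs (p : ℝ) (φ : V ↪ W) (H : SimpleGraph W) :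
    bernoulliWeight p (imagePairs φ) H.edgeFinset = gnpWeight p (H.comap φ) := by
  rw [bernoulliWeight, imagePairs, prod_map]
  refine prod_congr rfl fun e _ ↦ if_congr ?_ rfl rfl
  induction e with
  | h u v => simp

lemma gnpExpect_comap_eq (p : ℝ) (φ : V ↪ W) (G : SimpleGraph V) :
    gnpExpect p (fun R ↦ if R.comap φ = G then 1 else 0) = gnpWeight p G := by
  obtain ⟨H, rfl⟩ : ∃ H : SimpleGraph W, H.comap φ = G := ⟨G.map φ, G.comap_map_eq φ⟩
  have cylinder := bernoulliExpect_agreeIndicator (p := p) (imagePairs_subset φ) H.edgeFinset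
  simpa only [bernoulliExpect_edgeFinset_top, agreeIndicator_imagePairs,
    bernoulliWeight_imagePairs] using cylinder

lemma gnpExpect_comap (p : ℝ) (φ : V ↪ W) (X : SimpleGraph V → ℝ) :
    gnpExpect p (fun R : SimpleGraph W ↦ X (R.comap φ)) = gnpExpect p X := by
  have expand (R : SimpleGraph W) :
      X (R.comap φ) = ∑ G, X G * if R.comap φ = G then 1 else 0 := by simp
  simp only [expand]
  rw [gnpExpect, gnpExpect]
  simp only [mul_sum]
  rw [sum_comm]
  refine sum_congr rfl fun G _ ↦ ?_
  rw [← gnpExpect_comap_eq p φ G, gnpExpect, sum_mul]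
  exact sum_congr rfl fun R _ ↦ by ring

end RandomGraph

section Sunflower

variable {V W ι : Type*}

/-- The embeddings `ψ i` form a sunflower rooted at a pair: they all send `(u, v)` to `(x, y)`,
their images are disjoint apart from that, and no vertex of `W` is the image of two different
vertices of `V`. -/
structure IsSunflower (ψ : ι → V ↪ W) (u v : V) (x y : W) : Prop where
  map_left (i : ι) : ψ i u = x
  map_right (i : ι) : ψ i v = y
  eq_of_eq {i j : ι} {a b : V} : ψ i a = ψ j b → a = b
  mem_root {i j : ι} {a : V} : i ≠ j → ψ i a = ψ j a → a = u ∨ a = v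

namespace IsSunflower

variable {ψ : ι → V ↪ W} {u v : V} {x y : W}

lemma smul (h : IsSunflower ψ u v x y) (σ : Equiv.Perm W) :
    IsSunflower (fun i ↦ σ • ψ i) u v (σ x) (σ y) where
  map_left i := congrArg σ (h.map_left i)
  map_right i := congrArg σ (h.map_right i)
  eq_of_eq hab := h.eq_of_eq (σ.injective hab)
  mem_root hij ha := h.mem_root hij (σ.injective ha)

lemma exists_comap_eq (h : IsSunflower ψ u v x y) (G : SimpleGraph V) :
    ∃ H : SimpleGraph W, ∀ i, H.comap (ψ i) = G := by
  refine ⟨⨆ j, G.map (ψ j), fun i ↦ ?_⟩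
  ext a b
  simp only [SimpleGraph.comap_adj, SimpleGraph.iSup_adj, SimpleGraph.map_adj]
  constructor
  · rintro ⟨j, c, d, hcd, hc, hd⟩
    rwa [← h.eq_of_eq hc, ← h.eq_of_eq hd]
  · exact fun hab ↦ ⟨i, a, b, hab, rfl, rfl⟩

variable [Fintype V] [DecidableEq V]

lemma imagePairs_inter_imagePairs [DecidableEq W] (h : IsSunflower ψ u v x y) (huv : u ≠ v)
    {i j : ι} (hij : i ≠ j) : imagePairs (ψ i) ∩ imagePairs (ψ j) = {s(x, y)} := by
  ext e
  induction e with
  | h z w =>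
    rw [mem_inter, mk_mem_imagePairs, mk_mem_imagePairs, mem_singleton, Sym2.eq_iff]
    constructor
    · rintro ⟨⟨a, b, hab, rfl, rfl⟩, c, d, -, hc, hd⟩
      obtain rfl := h.eq_of_eq hc
      obtain rfl := h.eq_of_eq hd
      rcases h.mem_root hij hc.symm with rfl | rfl <;>
        rcases h.mem_root hij hd.symm with rfl | rfl <;>
        simp_all [h.map_left, h.map_right]
    · rintro (⟨rfl, rfl⟩ | ⟨rfl, rfl⟩)
      exacts [⟨⟨u, v, huv, h.map_left i, h.map_right i⟩, u, v, huv, h.map_left j, h.map_right j⟩,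
        ⟨⟨v, u, huv.symm, h.map_right i, h.map_left i⟩,
          v, u, huv.symm, h.map_right j, h.map_left j⟩]

lemma gnpExpect_comap_eq_le [Fintype W] [DecidableEq W] [Fintype ι] [Nonempty ι] {p : ℝ}
    (h : IsSunflower ψ u v x y) (huv : u ≠ v) (hp : p ∈ Set.Icc (0 : ℝ) 1) (G : SimpleGraph V)
    {X : SimpleGraph W → ℝ} (hX : ∀ R, |X R| ≤ 1) :
    (if G.Adj u v then p else 1 - p) *
        𝔼 i, gnpExpect p (fun R ↦ X R * if R.comap (ψ i) = G then 1 else 0) ≤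
      gnpWeight p G * gnpExpect p (fun R ↦ X R * if (R.Adj x y ↔ G.Adj u v) then 1 else 0) +
        (√(Fintype.card ι))⁻¹ := by
  obtain ⟨H, hH⟩ := h.exists_comap_eq G
  have root_adj : H.Adj x y ↔ G.Adj u v := by
    rw [← hH (Classical.arbitrary ι), SimpleGraph.comap_adj, h.map_left, h.map_right]
  have root_weight : bernoulliWeight p {s(x, y)} H.edgeFinset =
      if G.Adj u v then p else 1 - p := by
    simp [bernoulliWeight, root_adj]
  have root_indicator (R : SimpleGraph W) :
      agreeIndicator {s(x, y)} H.edgeFinset R.edgeFinset =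
        if (R.Adj x y ↔ G.Adj u v) then 1 else 0 := by
    simp [agreeIndicator, root_adj]
  have sunflower := bernoulliWeight_mul_sum_bernoulliExpect_le hp
    (fun i ↦ imagePairs_subset (ψ i)) (fun i j hij ↦ h.imagePairs_inter_imagePairs huv hij)
    H.edgeFinset (X := fun T ↦ X (.fromEdgeSet (T : Set (Sym2 W)))) fun _ ↦ hX _
  simp only [bernoulliExpect_edgeFinset_top, SimpleGraph.coe_edgeFinset,
    SimpleGraph.fromEdgeSet_edgeSet, agreeIndicator_imagePairs, bernoulliWeight_imagePairs, hH,
    root_weight, root_indicator, sum_const, card_univ, nsmul_eq_mul] at sunflower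
  have card_pos : (0 : ℝ) < Fintype.card ι := Nat.cast_pos.mpr Fintype.card_pos
  rw [Fintype.expect_eq_sum_div_card, ← mul_div_assoc, div_le_iff₀ card_pos]
  refine sunflower.trans_eq ?_
  rw [← Real.sqrt_div_self]
  field_simp

end IsSunflower

end Sunflower

section UniformAverage

variable {Γ Ω V W ι : Type*}

lemma expect_smul_eq_expect [Group Γ] [Fintype Γ] [MulAction Γ Ω] {s : Finset Ω}
    (hs : ∀ (g : Γ), ∀ y ∈ s, g • y ∈ s) (htrans : ∀ y ∈ s, ∀ z ∈ s, ∃ g : Γ, g • y = z)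
    (f : Ω → ℝ) {x : Ω} (hx : x ∈ s) : 𝔼 g : Γ, f (g • x) = 𝔼 y ∈ s, f y := by
  have base_independent (y) (hy : y ∈ s) : 𝔼 g : Γ, f (g • y) = 𝔼 g : Γ, f (g • x) := by
    obtain ⟨h, rfl⟩ := htrans x hx y hy
    exact Fintype.expect_equiv (Equiv.mulRight h) _ _ fun g ↦ by
      rw [Equiv.coe_mulRight, mul_smul]
  have translate (g : Γ) : 𝔼 y ∈ s, f (g • y) = 𝔼 y ∈ s, f y :=
    expect_nbij' (g • ·) (g⁻¹ • ·) (hs g) (hs g⁻¹) (fun y _ ↦ inv_smul_smul g y)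
      (fun y _ ↦ smul_inv_smul g y) fun _ _ ↦ rfl
  calc 𝔼 g : Γ, f (g • x) = 𝔼 y ∈ s, 𝔼 g : Γ, f (g • y) := by
        rw [expect_congr rfl base_independent, expect_const ⟨x, hx⟩]
    _ = 𝔼 g : Γ, 𝔼 y ∈ s, f (g • y) := expect_comm _ _ _
    _ = 𝔼 y ∈ s, f y := by simp only [translate, Fintype.expect_const]

variable [Fintype V] [Fintype W]

lemma expect_perm_smul_embedding [DecidableEq W] (f : (V ↪ W) → ℝ) (φ : V ↪ W) :
    𝔼 σ : Equiv.Perm W, f (σ • φ) = 𝔼 ψ, f ψ :=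
  expect_smul_eq_expect (fun _ _ _ ↦ mem_univ _)
    (fun φ _ ψ _ ↦ Equiv.Perm.exists_smul_eq_embedding φ ψ) f (mem_univ φ)

lemma expect_perm_pair [DecidableEq W] (f : W × W → ℝ) {x y : W} (hxy : x ≠ y) :
    𝔼 σ : Equiv.Perm W, f (σ x, σ y) = 𝔼 e ∈ univ.offDiag, f e := by
  refine expect_smul_eq_expect (Γ := Equiv.Perm W) (x := (x, y)) ?_ ?_ f (by simpa using hxy)
  · rintro σ ⟨a, b⟩ hab
    simpa using hab
  · rintro ⟨a, b⟩ hab ⟨c, d⟩ hcd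
    obtain ⟨σ, hσ⟩ := MulAction.is_two_pretransitive_iff.mp
      (Equiv.Perm.isMultiplyPretransitive W 2) (by simpa using hab) (by simpa using hcd)
    exact ⟨σ, Prod.ext hσ.1 hσ.2⟩

lemma expect_embedding_pair (φ : V ↪ W) (f : W × W → ℝ) {u v : V} (huv : u ≠ v) :
    𝔼 ψ : V ↪ W, f (ψ u, ψ v) = 𝔼 e ∈ univ.offDiag, f e := by
  rw [← expect_perm_smul_embedding (fun ψ ↦ f (ψ u, ψ v)) φ,
    ← expect_perm_pair f (φ.injective.ne huv)]
  rfl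

lemma expect_le_of_forall_le {s : Finset ι} {f : ι → ℝ} {c : ℝ} (hc : 0 ≤ c)
    (h : ∀ i ∈ s, f i ≤ c) : 𝔼 i ∈ s, f i ≤ c := by
  rcases s.eq_empty_or_nonempty with rfl | hs
  exacts [by simpa using hc, expect_le hs h]

lemma expect_mul_ite_le {s : Finset ι} {q : ι → Prop} [DecidablePred q] {τ : ι → ℝ} {c : ℝ}
    (hc : 0 ≤ c) (h : ∀ i ∈ s, q i → (𝔼 j ∈ s, if q j then (1 : ℝ) else 0) * τ i ≤ c) :
    𝔼 i ∈ s, (τ i * if q i then 1 else 0) ≤ c := by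
  set p := 𝔼 j ∈ s, if q j then (1 : ℝ) else 0 with hp
  have indicator_nonneg (i) : (0 : ℝ) ≤ if q i then 1 else 0 := by split_ifs <;> norm_num
  have weighted : p * 𝔼 i ∈ s, (τ i * if q i then 1 else 0) ≤ p * c := by
    rw [mul_expect, mul_comm p c, hp, mul_expect, ← hp]
    refine expect_le_expect fun i hi ↦ ?_
    split_ifs with hq
    exacts [by simpa using h i hi hq, by simp]
  rcases (expect_nonneg fun i _ ↦ indicator_nonneg i : 0 ≤ p).eq_or_lt with hp0 | hp0
  · have all_zero (i) (hi : i ∈ s) : (if q i then (1 : ℝ) else 0) = 0 :=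
      (expect_eq_zero_iff_of_nonneg fun j _ ↦ indicator_nonneg j).mp hp0.symm i hi
    rw [expect_congr rfl fun i hi ↦ by rw [all_zero i hi, mul_zero], expect_const_zero]
    exact hc
  · exact le_of_mul_le_mul_left weighted hp0

end UniformAverage

section EditDistance

variable {V W : Type*} {n N : ℕ} {P : ∀ n : ℕ, Set (SimpleGraph (Fin n))}

/-- The indicator that `G` and `G'` disagree about the adjacency of the pair `e`. -/
noncomputable def editIndicator (G G' : SimpleGraph V) (e : V × V) : ℝ :=
  if (G.Adj e.1 e.2 ↔ G'.Adj e.1 e.2) then 0 else 1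

lemma editIndicator_nonneg (G G' : SimpleGraph V) (e : V × V) : 0 ≤ editIndicator G G' e := by
  unfold editIndicator; split_ifs <;> norm_num

lemma editIndicator_le_one (G G' : SimpleGraph V) (e : V × V) : editIndicator G G' e ≤ 1 := by
  unfold editIndicator; split_ifs <;> norm_num

lemma editIndicator_comm (G G' : SimpleGraph V) (e : V × V) :
    editIndicator G G' e = editIndicator G' G e := by
  simp only [editIndicator, iff_comm]

lemma editIndicator_triangle (G K G' : SimpleGraph V) (e : V × V) :
    editIndicator G G' e ≤ editIndicator G K e + editIndicator K G' e := by
  unfold editIndicator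
  split_ifs <;> norm_num
  tauto

lemma cast_card_offDiag (n : ℕ) : (#(univ : Finset (Fin n)).offDiag : ℝ) = n * (n - 1) := by
  rw [offDiag_card, card_univ, Fintype.card_fin, Nat.cast_sub (Nat.le_mul_self n)]
  push_cast
  ring

lemma d1dist_eq_expect (G G' : SimpleGraph (Fin n)) :
    d1dist G G' = 𝔼 e ∈ univ.offDiag, editIndicator G G' e := by
  have edits_offDiag : univ.filter (fun e : Fin n × Fin n ↦ ¬(G.Adj e.1 e.2 ↔ G'.Adj e.1 e.2)) =
      univ.offDiag.filter fun e ↦ ¬(G.Adj e.1 e.2 ↔ G'.Adj e.1 e.2) := by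
    ext ⟨x, y⟩
    simp only [mem_filter, mem_univ, true_and, mem_offDiag]
    refine ⟨fun h ↦ ⟨?_, h⟩, And.right⟩
    rintro rfl
    simp at h
  rw [d1dist, edits_offDiag, expect_eq_sum_div_card, cast_card_offDiag]
  simp only [editIndicator, ← ite_not (p := _ ↔ _), sum_boole]

lemma d1dist_nonneg (G G' : SimpleGraph (Fin n)) : 0 ≤ d1dist G G' := by
  rw [d1dist_eq_expect]
  exact expect_nonneg fun e _ ↦ editIndicator_nonneg G G' e

lemma d1dist_le_one (G G' : SimpleGraph (Fin n)) : d1dist G G' ≤ 1 := by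
  rw [d1dist_eq_expect]
  exact expect_le_of_forall_le zero_le_one fun e _ ↦ editIndicator_le_one G G' e

lemma d1dist_comm (G G' : SimpleGraph (Fin n)) : d1dist G G' = d1dist G' G := by
  simp only [d1dist_eq_expect, editIndicator_comm G G']

lemma d1dist_triangle (G K G' : SimpleGraph (Fin n)) :
    d1dist G G' ≤ d1dist G K + d1dist K G' := by
  simp only [d1dist_eq_expect, ← expect_add_distrib]
  exact expect_le_expect fun e _ ↦ editIndicator_triangle G K G' e

lemma d1dist_fromEdgeSet_insert_le (e : Sym2 (Fin n)) (S : Set (Sym2 (Fin n))) :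
    d1dist (.fromEdgeSet (insert e S)) (.fromEdgeSet S) ≤ 2 / (n * (n - 1)) := by
  induction e with
  | h a b =>
    rw [d1dist, ← cast_card_offDiag]
    refine div_le_div_of_nonneg_right ?_ (Nat.cast_nonneg _)
    refine Nat.cast_le_ofNat.mpr ((card_le_card (t := {(a, b), (b, a)}) ?_).trans card_le_two)
    rintro ⟨x, y⟩ h
    simp only [mem_filter, SimpleGraph.fromEdgeSet_adj, Set.mem_insert_iff] at h
    have edited_pair : s(x, y) = s(a, b) := by tauto
    simpa using edited_pair

lemma d1toProperty_le_d1dist (G : SimpleGraph (Fin n)) {G' : SimpleGraph (Fin n)}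
    (hG' : G' ∈ P n) : d1toProperty P G ≤ d1dist G G' :=
  csInf_le ⟨0, by rintro _ ⟨K, -, rfl⟩; exact d1dist_nonneg G K⟩ ⟨G', hG', rfl⟩

lemma exists_mem_d1toProperty_eq (hne : (P n).Nonempty) (G : SimpleGraph (Fin n)) :
    ∃ G' ∈ P n, d1toProperty P G = d1dist G G' := by
  have finite : {r | ∃ G' ∈ P n, r = d1dist G G'}.Finite := by
    refine (Set.finite_range fun G' ↦ d1dist G G').subset ?_
    rintro _ ⟨K, -, rfl⟩
    exact ⟨K, rfl⟩
  have nonempty : {r | ∃ G' ∈ P n, r = d1dist G G'}.Nonempty :=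
    hne.imp' (d1dist G) fun K hK ↦ ⟨K, hK, rfl⟩
  exact nonempty.csInf_mem finite

lemma d1toProperty_le_one (hne : (P n).Nonempty) (G : SimpleGraph (Fin n)) :
    d1toProperty P G ≤ 1 := by
  obtain ⟨K, hK⟩ := hne
  exact (d1toProperty_le_d1dist G hK).trans (d1dist_le_one G K)

lemma abs_d1toProperty_sub_le (hne : (P n).Nonempty) (G G' : SimpleGraph (Fin n)) :
    |d1toProperty P G - d1toProperty P G'| ≤ d1dist G G' := by
  have one_sided (H H' : SimpleGraph (Fin n)) :
      d1toProperty P H ≤ d1dist H H' + d1toProperty P H' := by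
    obtain ⟨K, hK, hd⟩ := exists_mem_d1toProperty_eq hne H'
    exact hd ▸ (d1toProperty_le_d1dist H hK).trans (d1dist_triangle H H' K)
  rw [abs_sub_le_iff, sub_le_iff_le_add, sub_le_iff_le_add]
  exact ⟨one_sided G G', d1dist_comm G G' ▸ one_sided G' G⟩

lemma mem_of_iso (hP : IsGraphProperty P) {G : SimpleGraph (Fin N)} {G' : SimpleGraph (Fin n)}
    (e : G ≃g G') (hG : G ∈ P N) : G' ∈ P n := by
  obtain rfl : N = n := by simpa using Fintype.card_congr e.toEquiv
  exact hP N G G' ⟨e⟩ hG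

lemma comap_mem_of_isHereditary (hP : IsHereditary P) (φ : Fin n ↪ Fin N)
    {G : SimpleGraph (Fin N)} (hG : G ∈ P N) : G.comap φ ∈ P n := by
  let S : Finset (Fin N) := univ.map φ
  let imageEquiv : Fin n ≃ S :=
    (Equiv.ofInjective φ φ.injective).trans (Equiv.subtypeEquivRight (by simp [S]))
  let GS : SimpleGraph S := G.comap Subtype.val
  have copyIso : inducedCopy G S ≃g GS := .comap (S.orderIsoOfFin rfl).toEquiv GS
  have comapIso : G.comap φ ≃g GS := .comap imageEquiv GS
  exact mem_of_iso hP.1 (copyIso.trans comapIso.symm) (hP.2 N G hG S)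

lemma d1toProperty_comap_le (hP : IsHereditary P) (φ : Fin n ↪ Fin N) (R : SimpleGraph (Fin N))
    {Z : SimpleGraph (Fin N)} (hZ : Z ∈ P N) :
    d1toProperty P (R.comap φ) ≤ 𝔼 e ∈ univ.offDiag, editIndicator R Z (φ e.1, φ e.2) :=
  (d1toProperty_le_d1dist _ (comap_mem_of_isHereditary hP φ hZ)).trans_eq (d1dist_eq_expect _ _)

end EditDistance

section Density

variable {V : Type*} [Fintype V]

/-- The fraction of the pairs of distinct vertices of `G` that are adjacent. -/
noncomputable def density (G : SimpleGraph V) : ℝ :=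
  𝔼 e ∈ univ.offDiag, if G.Adj e.1 e.2 then 1 else 0

lemma density_mem_Icc (G : SimpleGraph V) : density G ∈ Set.Icc (0 : ℝ) 1 :=
  ⟨expect_nonneg fun e _ ↦ by split_ifs <;> norm_num,
    expect_le_of_forall_le zero_le_one fun e _ ↦ by split_ifs <;> norm_num⟩

lemma one_sub_density (G : SimpleGraph V) {u v : V} (huv : u ≠ v) :
    1 - density G = 𝔼 e ∈ univ.offDiag, if ¬ G.Adj e.1 e.2 then (1 : ℝ) else 0 := by
  have nonempty : (univ : Finset V).offDiag.Nonempty := ⟨(u, v), by simpa using huv⟩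
  rw [sub_eq_iff_eq_add, density, ← expect_add_distrib, ← expect_const nonempty (1 : ℝ)]
  refine expect_congr rfl fun e _ ↦ ?_
  rw [expect_const nonempty]
  split_ifs <;> norm_num

lemma gnpWeight_density_pos [DecidableEq V] (G : SimpleGraph V) :
    0 < gnpWeight (density G) G := by
  refine gnpWeight_pos (fun u v h ↦ ?_) fun u v huv h ↦ ?_
  · exact expect_pos' (fun e _ ↦ by split_ifs <;> norm_num)
      ⟨(u, v), by simpa using h.ne, by simp [h]⟩
  · rw [one_sub_density G huv]
    exact expect_pos' (fun e _ ↦ by split_ifs <;> norm_num)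
      ⟨(u, v), by simpa using huv, by simp [h]⟩

end Density

section PlantedCopies

variable {V W ι : Type*} [Nonempty ι] {p : ℝ}

lemma exists_isSunflower (blowUp : V × ι ≃ W) (u v : V) :
    ∃ (ψ : ι → V ↪ W) (x y : W), IsSunflower ψ u v x y := by
  let i₀ := Classical.arbitrary ι
  let copy (i : ι) (a : V) : V × ι := (a, if a = u ∨ a = v then i₀ else i)
  have copy_eq {i j : ι} {a b : V} (h : copy i a = copy j b) : a = b := congrArg Prod.fst h
  refine ⟨fun i ↦ ⟨fun a ↦ blowUp (copy i a), fun a b h ↦ copy_eq (blowUp.injective h)⟩,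
    blowUp (u, i₀), blowUp (v, i₀), fun i ↦ ?_, fun i ↦ ?_,
    fun h ↦ copy_eq (blowUp.injective h), fun {i j a} hij h ↦ ?_⟩
  · exact congrArg blowUp (Prod.ext rfl (if_pos (.inl rfl)))
  · exact congrArg blowUp (Prod.ext rfl (if_pos (.inr rfl)))
  · by_contra ha
    have petal_eq : (copy i a).2 = (copy j a).2 := congrArg Prod.snd (blowUp.injective h)
    simp only [copy, if_neg ha] at petal_eq
    exact hij petal_eq

variable [Fintype V] [Fintype W] [DecidableEq W] {X : SimpleGraph W → W × W → ℝ}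

/-- The expectation of `X R (φ e)` over the event that the embedding `φ : V ↪ W` induces a copy of
`G` in `R`, for `R` drawn from `G(W, p)` and `φ` drawn uniformly. -/
noncomputable def copyExpect (p : ℝ) (G : SimpleGraph V) (X : SimpleGraph W → W × W → ℝ)
    (e : V × V) : ℝ :=
  𝔼 φ : V ↪ W, gnpExpect p fun R ↦ X R (φ e.1, φ e.2) * if R.comap φ = G then 1 else 0

/-- The expectation of `X R e` over the event that `e` is an edge of `R` (if `q` holds) or a
non-edge of `R` (otherwise), for `R` drawn from `G(W, p)` and `e` drawn uniformly from the pairs of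
distinct vertices. -/
noncomputable def pairExpect (p : ℝ) (X : SimpleGraph W → W × W → ℝ) (q : Prop) : ℝ :=
  𝔼 e ∈ univ.offDiag, gnpExpect p fun R ↦ X R e * if (R.Adj e.1 e.2 ↔ q) then 1 else 0

lemma pairExpect_nonneg (hp : p ∈ Set.Icc (0 : ℝ) 1) (hX : ∀ R e, 0 ≤ X R e) (q : Prop) :
    0 ≤ pairExpect p X q :=
  expect_nonneg fun e _ ↦ gnpExpect_nonneg hp fun R ↦
    mul_nonneg (hX R e) (by split_ifs <;> norm_num)

lemma pairExpect_true_add_pairExpect_false (p : ℝ) (X : SimpleGraph W → W × W → ℝ) :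
    pairExpect p X True + pairExpect p X False = 𝔼 e ∈ univ.offDiag, gnpExpect p (X · e) := by
  simp only [pairExpect, ← expect_add_distrib, ← gnpExpect_add, ← mul_add, iff_true, iff_false]
  refine expect_congr rfl fun e _ ↦ congrArg (gnpExpect p) (funext fun R ↦ ?_)
  split_ifs <;> norm_num

variable [DecidableEq V] [Fintype ι]

lemma IsSunflower.copyExpect_le {ψ : ι → V ↪ W} {u v : V} {x y : W}
    (h : IsSunflower ψ u v x y) (huv : u ≠ v) (hp : p ∈ Set.Icc (0 : ℝ) 1) (G : SimpleGraph V)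
    (hX : ∀ R e, |X R e| ≤ 1) :
    (if G.Adj u v then p else 1 - p) * copyExpect p G X (u, v) ≤
      gnpWeight p G * pairExpect p X (G.Adj u v) + (√(Fintype.card ι))⁻¹ := by
  let copies (φ : V ↪ W) : ℝ :=
    gnpExpect p fun R ↦ X R (φ u, φ v) * if R.comap φ = G then 1 else 0
  let rooted (e : W × W) : ℝ :=
    gnpExpect p fun R ↦ X R e * if (R.Adj e.1 e.2 ↔ G.Adj u v) then 1 else 0
  have hxy : x ≠ y := by
    let i := Classical.arbitrary ι
    rw [← h.map_left i, ← h.map_right i]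
    exact (ψ i).injective.ne huv
  have permuted (σ : Equiv.Perm W) : (if G.Adj u v then p else 1 - p) * 𝔼 i, copies (σ • ψ i) ≤
      gnpWeight p G * rooted (σ x, σ y) + (√(Fintype.card ι))⁻¹ := by
    have hσ := h.smul σ
    simpa only [copies, hσ.map_left, hσ.map_right] using
      hσ.gnpExpect_comap_eq_le huv hp G fun R ↦ hX R (σ x, σ y)
  have average : 𝔼 σ : Equiv.Perm W, 𝔼 i, copies (σ • ψ i) = copyExpect p G X (u, v) := by
    rw [expect_comm]
    simp only [expect_perm_smul_embedding copies, Fintype.expect_const]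
    rfl
  calc _ = 𝔼 σ : Equiv.Perm W,
        (if G.Adj u v then p else 1 - p) * 𝔼 i, copies (σ • ψ i) := by
        rw [← mul_expect, average]
    _ ≤ 𝔼 σ : Equiv.Perm W, (gnpWeight p G * rooted (σ x, σ y) + (√(Fintype.card ι))⁻¹) :=
        expect_le_expect fun σ _ ↦ permuted σ
    _ = gnpWeight p G * pairExpect p X (G.Adj u v) + (√(Fintype.card ι))⁻¹ := by
        rw [expect_add_distrib, Fintype.expect_const, ← mul_expect, expect_perm_pair rooted hxy]
        rfl

/- At `p = density G` the edges and the non-edges of `G` make up the fractions `p` and `1 - p` of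
its pairs, which cancels the factors `p` and `1 - p` in `IsSunflower.copyExpect_le`. -/
lemma expect_copyExpect_density_le (blowUp : V × ι ≃ W) (G : SimpleGraph V)
    (hX0 : ∀ R e, 0 ≤ X R e) (hX1 : ∀ R e, X R e ≤ 1) :
    𝔼 e ∈ univ.offDiag, copyExpect (density G) G X e ≤
      gnpWeight (density G) G * 𝔼 e ∈ univ.offDiag, gnpExpect (density G) (X · e) +
        2 * (√(Fintype.card ι))⁻¹ := by
  have hp := density_mem_Icc G
  set p := density G with p_def
  let bound (q : Prop) : ℝ := gnpWeight p G * pairExpect p X q + (√(Fintype.card ι))⁻¹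
  have bound_nonneg (q : Prop) : 0 ≤ bound q :=
    add_nonneg (mul_nonneg (gnpWeight_nonneg hp G) (pairExpect_nonneg hp hX0 q)) (by positivity)
  have rooted (e : V × V) (he : e.1 ≠ e.2) :
      (if G.Adj e.1 e.2 then p else 1 - p) * copyExpect p G X e ≤ bound (G.Adj e.1 e.2) := by
    obtain ⟨ψ, x, y, h⟩ := exists_isSunflower blowUp e.1 e.2
    exact h.copyExpect_le he hp G fun R e ↦ abs_le.mpr ⟨by linarith [hX0 R e], hX1 R e⟩
  have edges : 𝔼 e ∈ univ.offDiag, (copyExpect p G X e * if G.Adj e.1 e.2 then 1 else 0) ≤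
      bound True := by
    refine expect_mul_ite_le (bound_nonneg True) fun e _ hadj ↦ ?_
    have h := rooted e hadj.ne
    rwa [if_pos hadj, eq_true hadj] at h
  have nonEdges : 𝔼 e ∈ univ.offDiag, (copyExpect p G X e * if ¬ G.Adj e.1 e.2 then 1 else 0) ≤
      bound False := by
    refine expect_mul_ite_le (bound_nonneg False) fun e he hadj ↦ ?_
    have hne := (mem_offDiag.mp he).2.2
    have h := rooted e hne
    rwa [if_neg hadj, eq_false hadj, p_def, one_sub_density G hne] at h
  calc 𝔼 e ∈ univ.offDiag, copyExpect p G X e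
      = 𝔼 e ∈ univ.offDiag, (copyExpect p G X e * if G.Adj e.1 e.2 then 1 else 0) +
          𝔼 e ∈ univ.offDiag, (copyExpect p G X e * if ¬ G.Adj e.1 e.2 then 1 else 0) := by
        rw [← expect_add_distrib]
        refine expect_congr rfl fun e _ ↦ ?_
        split_ifs <;> ring
    _ ≤ bound True + bound False := add_le_add edges nonEdges
    _ = _ := by
        rw [← pairExpect_true_add_pairExpect_false]
        ring

end PlantedCopies

section ExpectedDistance

variable {P : ∀ n : ℕ, Set (SimpleGraph (Fin n))} {n N : ℕ} {p q : ℝ}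

/-- The expected distance `E[d_1(G(n,p),P)]` of the Erdős–Rényi random graph from `P`. -/
noncomputable def expectedDist (P : ∀ n : ℕ, Set (SimpleGraph (Fin n))) (n : ℕ) (p : ℝ) : ℝ :=
  gnpExpect p fun R : SimpleGraph (Fin n) ↦ d1toProperty P R

lemma expectedDist_eq_sum (P : ∀ n : ℕ, Set (SimpleGraph (Fin n))) (n : ℕ) (p : ℝ) :
    expectedDist P n p = ∑ H : SimpleGraph (Fin n),
      p ^ #H.edgeFinset * (1 - p) ^ (n.choose 2 - #H.edgeFinset) * d1toProperty P H := by
  simp only [expectedDist, gnpExpect, gnpWeight_eq_pow_mul_pow, Fintype.card_fin]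

lemma expectedDist_le_one (hne : (P n).Nonempty) (hp : p ∈ Set.Icc (0 : ℝ) 1) :
    expectedDist P n p ≤ 1 :=
  (gnpExpect_mono hp fun R ↦ d1toProperty_le_one hne R).trans_eq (gnpExpect_const p 1)

lemma bddAbove_range_expectedDist (hne : ∀ n, (P n).Nonempty) (hp : p ∈ Set.Icc (0 : ℝ) 1) :
    BddAbove (Set.range fun n ↦ expectedDist P n p) :=
  ⟨1, by rintro _ ⟨n, rfl⟩; exact expectedDist_le_one (hne n) hp⟩

lemma expect_d1toProperty_comap_le (hP : IsHereditary P) (hne : (P N).Nonempty)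
    (R : SimpleGraph (Fin N)) :
    𝔼 φ : Fin n ↪ Fin N, d1toProperty P (R.comap φ) ≤ d1toProperty P R := by
  obtain ⟨Z, hZ, hd⟩ := exists_mem_d1toProperty_eq hne R
  calc 𝔼 φ : Fin n ↪ Fin N, d1toProperty P (R.comap φ)
      ≤ 𝔼 φ : Fin n ↪ Fin N, 𝔼 e ∈ univ.offDiag, editIndicator R Z (φ e.1, φ e.2) :=
        expect_le_expect fun φ _ ↦ d1toProperty_comap_le hP φ R hZ
    _ = 𝔼 e ∈ univ.offDiag, 𝔼 φ : Fin n ↪ Fin N, editIndicator R Z (φ e.1, φ e.2) :=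
        expect_comm _ _ _
    _ ≤ d1dist R Z := by
        refine expect_le_of_forall_le (d1dist_nonneg R Z) fun e he ↦ ?_
        cases isEmpty_or_nonempty (Fin n ↪ Fin N) with
        | inl h => simpa using d1dist_nonneg R Z
        | inr h =>
          rw [expect_embedding_pair h.some _ (mem_offDiag.mp he).2.2, d1dist_eq_expect]
    _ = d1toProperty P R := hd.symm

lemma expectedDist_monotone (hP : IsHereditary P) (hne : ∀ n, (P n).Nonempty)
    (hp : p ∈ Set.Icc (0 : ℝ) 1) : Monotone fun n ↦ expectedDist P n p := by
  intro n N hnN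
  have : Nonempty (Fin n ↪ Fin N) := ⟨Fin.castLEEmb hnN⟩
  calc expectedDist P n p
      = 𝔼 φ : Fin n ↪ Fin N, gnpExpect p fun R ↦ d1toProperty P (R.comap φ) := by
        simp only [gnpExpect_comap p _ (fun R ↦ d1toProperty P R), Fintype.expect_const]
        rfl
    _ = gnpExpect p fun R ↦ 𝔼 φ : Fin n ↪ Fin N, d1toProperty P (R.comap φ) :=
        (gnpExpect_expect _ _).symm
    _ ≤ expectedDist P N p :=
        gnpExpect_mono hp fun R ↦ expect_d1toProperty_comap_le hP (hne N) R

lemma abs_expectedDist_sub_le (hne : (P n).Nonempty) (hp : p ∈ Set.Icc (0 : ℝ) 1)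
    (hq : q ∈ Set.Icc (0 : ℝ) 1) : |expectedDist P n p - expectedDist P n q| ≤ |p - q| := by
  refine (abs_gnpExpect_sub_le hp hq _ fun e S ↦
    (abs_d1toProperty_sub_le hne _ _).trans (d1dist_fromEdgeSet_insert_le e S)).trans ?_
  refine mul_le_of_le_one_left (abs_nonneg _) ?_
  rw [Fintype.card_fin, Nat.cast_choose_two, ← mul_div_assoc, div_mul_cancel₀ _ two_ne_zero]
  exact div_self_le_one _

lemma continuousOn_iSup_expectedDist (hne : ∀ n, (P n).Nonempty) :
    ContinuousOn (fun p ↦ ⨆ n, expectedDist P n p) (Set.Icc 0 1) := by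
  refine (LipschitzOnWith.of_le_add fun p hp q hq ↦ ciSup_le fun n ↦ ?_).continuousOn
  have lipschitz := (abs_le.mp (abs_expectedDist_sub_le (hne n) hp hq)).2
  have le_sup := le_ciSup (bddAbove_range_expectedDist hne hq) n
  rw [Real.dist_eq]
  linarith

lemma gnpWeight_mul_d1toProperty_le (hP : IsHereditary P) (hp : p ∈ Set.Icc (0 : ℝ) 1)
    {Z : SimpleGraph (Fin N) → SimpleGraph (Fin N)} (hZ : ∀ R, Z R ∈ P N)
    [Nonempty (Fin n ↪ Fin N)] (G : SimpleGraph (Fin n)) :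
    gnpWeight p G * d1toProperty P G ≤
      𝔼 e ∈ univ.offDiag, copyExpect p G (fun R ↦ editIndicator R (Z R)) e := by
  have copy_bound (φ : Fin n ↪ Fin N) : gnpWeight p G * d1toProperty P G ≤
      𝔼 e ∈ univ.offDiag, gnpExpect p fun R ↦
        editIndicator R (Z R) (φ e.1, φ e.2) * if R.comap φ = G then 1 else 0 := by
    rw [← gnpExpect_expect, ← gnpExpect_comap_eq p φ G, gnpExpect, sum_mul]
    simp only [mul_assoc]
    refine gnpExpect_mono hp fun R ↦ ?_
    split_ifs with h
    · simpa only [one_mul, mul_one, h] using d1toProperty_comap_le hP φ R (hZ R)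
    · simp
  calc gnpWeight p G * d1toProperty P G
      = 𝔼 _φ : Fin n ↪ Fin N, gnpWeight p G * d1toProperty P G := (Fintype.expect_const _).symm
    _ ≤ 𝔼 φ : Fin n ↪ Fin N, 𝔼 e ∈ univ.offDiag, gnpExpect p fun R ↦
          editIndicator R (Z R) (φ e.1, φ e.2) * if R.comap φ = G then 1 else 0 :=
        expect_le_expect fun φ _ ↦ copy_bound φ
    _ = _ := expect_comm _ _ _

lemma d1toProperty_le_expectedDist_add (hP : IsHereditary P) (hne : ∀ n, (P n).Nonempty)
    (G : SimpleGraph (Fin n)) (K : ℕ) [NeZero K] :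
    d1toProperty P G ≤
      expectedDist P (n * K) (density G) + 2 / gnpWeight (density G) G * (√K)⁻¹ := by
  have weight_pos := gnpWeight_density_pos G
  have : Nonempty (Fin n ↪ Fin (n * K)) :=
    ⟨Fin.castLEEmb (Nat.le_mul_of_pos_right n (NeZero.pos K))⟩
  choose Z hZ hd using exists_mem_d1toProperty_eq (hne (n * K))
  have edits : 𝔼 e ∈ univ.offDiag, gnpExpect (density G) (fun R ↦ editIndicator R (Z R) e) =
      expectedDist P (n * K) (density G) := by
    simp only [← gnpExpect_expect, ← d1dist_eq_expect, ← hd, expectedDist]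
  have planted := (gnpWeight_mul_d1toProperty_le hP (density_mem_Icc G) hZ G).trans
    (expect_copyExpect_density_le finProdFinEquiv G (fun R ↦ editIndicator_nonneg R (Z R))
      fun R ↦ editIndicator_le_one R (Z R))
  rw [edits, Fintype.card_fin] at planted
  refine le_of_mul_le_mul_left (planted.trans_eq ?_) weight_pos
  field_simp

lemma d1toProperty_le_iSup_expectedDist (hP : IsHereditary P) (hne : ∀ n, (P n).Nonempty)
    (G : SimpleGraph (Fin n)) : d1toProperty P G ≤ ⨆ N, expectedDist P N (density G) := by
  have error_tendsto : Filter.Tendsto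
      (fun K : ℕ ↦ 2 / gnpWeight (density G) G * (√K)⁻¹) Filter.atTop (nhds 0) := by
    simpa using (tendsto_inv_atTop_zero.comp
      (Real.tendsto_sqrt_atTop.comp tendsto_natCast_atTop_atTop)).const_mul
        (2 / gnpWeight (density G) G)
  have limit := error_tendsto.const_add (⨆ N, expectedDist P N (density G))
  rw [add_zero] at limit
  refine ge_of_tendsto limit ?_
  filter_upwards [Filter.eventually_ne_atTop 0] with K hK
  have : NeZero K := ⟨hK⟩
  exact (d1toProperty_le_expectedDist_add hP hne G K).trans (add_le_add_left
    (le_ciSup (bddAbove_range_expectedDist hne (density_mem_Icc G)) (n * K)) _)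

end ExpectedDistance

end AlonStav

/-- Alon–Stav theorem: for every hereditary graph property `P` there is a `p ∈ [0,1]` such
that the Erdős–Rényi random graph `G(n,p)` is asymptotically the graph on `n` nodes farthest
from `P` in edit distance. The expectation `E[d_1(G(n,p),P)]` is written out as a sum over
all graphs `H` on `n` vertices weighted by `p^{e(H)}(1−p)^{C(n,2)−e(H)}`. -/
theorem alon_stav (P : ∀ n : ℕ, Set (SimpleGraph (Fin n))) (hP : IsHereditary P)
    (hne : ∀ n : ℕ, (P n).Nonempty) :
    ∃ p : ℝ, p ∈ Set.Icc (0:ℝ) 1 ∧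
      ∃ ε : ℕ → ℝ, Filter.Tendsto ε Filter.atTop (nhds 0) ∧
        ∀ (n : ℕ) (G : SimpleGraph (Fin n)),
          d1toProperty P G ≤
            (∑ H : SimpleGraph (Fin n),
              p ^ H.edgeFinset.card * (1 - p) ^ (Nat.choose n 2 - H.edgeFinset.card) *
                d1toProperty P H) + ε n := by
  obtain ⟨p, hp, p_max⟩ := isCompact_Icc.exists_isMaxOn (Set.nonempty_Icc.mpr zero_le_one)
    (AlonStav.continuousOn_iSup_expectedDist hne)
  refine ⟨p, hp, fun n ↦ (⨆ N, AlonStav.expectedDist P N p) - AlonStav.expectedDist P n p,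
    ?_, fun n G ↦ ?_⟩
  · have converges := tendsto_atTop_ciSup (AlonStav.expectedDist_monotone hP hne hp)
      (AlonStav.bddAbove_range_expectedDist hne hp)
    simpa using converges.const_sub (⨆ N, AlonStav.expectedDist P N p)
  · rw [← AlonStav.expectedDist_eq_sum, add_sub_cancel]
    calc d1toProperty P G
        ≤ ⨆ N, AlonStav.expectedDist P N (AlonStav.density G) :=
          AlonStav.d1toProperty_le_iSup_expectedDist hP hne G
      _ ≤ ⨆ N, AlonStav.expectedDist P N p := p_max (AlonStav.density_mem_Icc G)
end
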